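/- arXiv:1706.03306 — 3 statements merged into one kernel-verified Lean document; each statement's English description precedes it below -/
import Mathlib

section
/- Let r ≥ 3 and let H be an r-uniform r-partite linear hypergraph containing no rainbow cycles of length three or four. Then H is G_r(3r−3, 3)-free, G_r(4r−5, 4)-free, G_r(5r−7, 5)-free, G_r(7r−11, 7)-free and G_r(8r−13, 8)-free. -/
open Finset

/-- A hypergraph `H` is `G_r(v,e)`-free if any `e` distinct edges span at least `v+1` vertices. -/
def GFree {V : Type*} [DecidableEq V] (H : Finset (Finset V)) (v e : ℕ) : Prop :=
  ∀ S ⊆ H, S.card = e → v + 1 ≤ (S.biUnion id).card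

/-- `extremalF r n v e` is the maximum number of edges of a `G_r(v,e)`-free `r`-uniform
hypergraph on `n` vertices. -/
noncomputable def extremalF (r n v e : ℕ) : ℕ :=
  sSup {m : ℕ | ∃ H : Finset (Finset (Fin n)),
    (∀ A ∈ H, A.card = r) ∧ GFree H v e ∧ H.card = m}
/-- `H` (an `r`-uniform `r`-partite hypergraph with parts given by `part`) contains a rainbow
cycle of length `k`: `k` distinct vertices and `k` distinct edges, with `vᵢ, vᵢ₊₁ ∈ Aᵢ`
(cyclically), and the `k` vertices lying in `k` distinct vertex parts. -/
def HasRainbowCycle {V : Type*} {r : ℕ} (H : Finset (Finset V)) (part : V → Fin r)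
    (k : ℕ) : Prop :=
  ∃ (v : Fin k → V) (A : Fin k → Finset V),
    Function.Injective v ∧ Function.Injective A ∧
    (∀ i, A i ∈ H) ∧
    (∀ i : Fin k, v i ∈ A i ∧ v (finRotate k i) ∈ A i) ∧
    Function.Injective (fun i => part (v i))

/-!
Let `S` be a set of `n` edges. At every vertex `p` replace the clique formed by the edges through
`p` with a star. By linearity the resulting graph `G` on `S` is simple and has
`∑ A ∈ S, #A - #(⋃ S)` edges, so it suffices that `G` has at most `2, 4, 6, 10, 12` edges for
`n = 3, 4, 5, 7, 8`. Without rainbow 3-cycles `G` is triangle-free, and Mantel's theorem settles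
`n ≤ 5`. Colour each edge `AB` of `G` by the part of the vertex in `A ∩ B`. Consecutive edges of a
four-cycle have different colours, and without rainbow 4-cycles some two opposite edges have equal
colours. Hence two vertices have at most three common neighbours. Take a vertex `u` of degree at
least four and count the edges of `G` by looking at the few vertices not adjacent to `u`; only for
`n = 8`, when `u` has degree four and its three non-neighbours are independent, are the colours
needed once more.
-/

section TriangleFree

variable {X : Type*} [Fintype X] {G : SimpleGraph X} [DecidableRel G.Adj]

theorem four_mul_card_edgeFinset_le_sq (hG : G.CliqueFree 3) :
    4 * #G.edgeFinset ≤ Fintype.card X ^ 2 := by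
  have hchoose : (Fintype.card X % 2).choose 2 = 0 :=
    Nat.choose_eq_zero_of_lt (Nat.mod_lt _ two_pos)
  have hturan := hG.card_edgeFinset_le (r := 2)
  simp only [hchoose] at hturan
  omega

theorem disjoint_neighborFinset_of_adj (hG : G.CliqueFree 3) {v w : X} (hvw : G.Adj v w) :
    Disjoint (G.neighborFinset v) (G.neighborFinset w) := by
  classical
  simp only [disjoint_left, SimpleGraph.mem_neighborFinset]
  exact fun x hvx hwx ↦ hG {v, w, x} (SimpleGraph.is3Clique_triple_iff.2 ⟨hvw, hvx, hwx⟩)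

theorem exists_lt_degree_of_mul_card_lt {k : ℕ} (hk : k * Fintype.card X < 2 * #G.edgeFinset) :
    ∃ u, k < G.degree u := by
  rw [← G.sum_degrees_eq_twice_card_edges] at hk
  obtain ⟨u, -, hu⟩ := exists_lt_of_sum_lt (s := univ) (f := fun _ : X ↦ k)
    (g := fun v ↦ G.degree v) (by simpa [mul_comm] using hk)
  exact ⟨u, hu⟩

variable [DecidableEq X]

theorem card_inter_add_card_inter_le_degree (hG : G.CliqueFree 3) (u : X) {v w : X}
    (hvw : G.Adj v w) :
    #(G.neighborFinset u ∩ G.neighborFinset v) + #(G.neighborFinset u ∩ G.neighborFinset w) ≤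
      G.degree u := by
  have hdisj := disjoint_neighborFinset_of_adj hG hvw
  rw [← card_union_of_disjoint (hdisj.mono inter_subset_right inter_subset_right),
    ← inter_union_distrib_left]
  exact card_le_card inter_subset_left

-- Besides `z`, the common neighbours of `w` and `t` include those shared with `u`, and the parts
-- of `N(u)` seen from `w` and `t` both avoid the part seen from `z`.
theorem card_inter_add_card_inter_add_card_inter_lt (hG : G.CliqueFree 3) {u w z t : X}
    (huz : ¬G.Adj u z) (hwz : G.Adj w z) (htz : G.Adj t z) :
    #(G.neighborFinset u ∩ G.neighborFinset w) + #(G.neighborFinset u ∩ G.neighborFinset t) +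
        #(G.neighborFinset u ∩ G.neighborFinset z) <
      G.degree u + #(G.neighborFinset w ∩ G.neighborFinset t) := by
  set N := G.neighborFinset
  have hunion : #((N u ∩ N w) ∪ (N u ∩ N t)) + #(N u ∩ N z) ≤ G.degree u := by
    rw [← card_union_of_disjoint]
    · exact card_le_card (by grind)
    · refine disjoint_union_left.2 ⟨?_, ?_⟩
      · exact (disjoint_neighborFinset_of_adj hG hwz).mono inter_subset_right inter_subset_right
      · exact (disjoint_neighborFinset_of_adj hG htz).mono inter_subset_right inter_subset_right
  have hinter : #((N u ∩ N w) ∩ (N u ∩ N t)) < #(N w ∩ N t) := by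
    refine card_lt_card ((ssubset_iff_of_subset (by grind)).2 ⟨z, ?_, ?_⟩) <;> simp [N, *]
  have := card_union_add_card_inter (N u ∩ N w) (N u ∩ N t)
  omega

theorem degree_eq_card_inter_add_card_filter_compl {u w : X} (huw : ¬G.Adj u w) :
    G.degree w = #(G.neighborFinset u ∩ G.neighborFinset w) +
      #{z ∈ Gᶜ.neighborFinset u | G.Adj w z} := by
  rw [← G.card_neighborFinset_eq_degree w,
    ← card_filter_add_card_filter_not (s := G.neighborFinset w) (G.Adj u)]
  congr 2 <;> ext x <;> simp only [mem_filter, mem_inter, SimpleGraph.mem_neighborFinset,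
    SimpleGraph.compl_adj]
  · exact and_comm
  · grind [G.adj_comm]

theorem sum_degree_neighborFinset (hG : G.CliqueFree 3) (u : X) :
    ∑ x ∈ G.neighborFinset u, G.degree x = G.degree u +
      ∑ w ∈ Gᶜ.neighborFinset u, #(G.neighborFinset u ∩ G.neighborFinset w) := by
  have hdegree : ∀ x ∈ G.neighborFinset u,
      G.degree x = 1 + #{w ∈ Gᶜ.neighborFinset u | G.Adj x w} := by
    intro x hx
    have hdisj := disjoint_neighborFinset_of_adj hG ((G.mem_neighborFinset u x).1 hx)
    have hsplit : G.neighborFinset x = insert u {w ∈ Gᶜ.neighborFinset u | G.Adj x w} := by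
      ext y
      have hnot : y ∈ G.neighborFinset u → y ∉ G.neighborFinset x := (disjoint_left.1 hdisj ·)
      simp only [SimpleGraph.mem_neighborFinset, mem_insert, mem_filter,
        SimpleGraph.compl_adj] at hx hnot ⊢
      grind [G.adj_comm]
    rw [← G.card_neighborFinset_eq_degree, hsplit, card_insert_of_notMem (by simp), add_comm]
  rw [sum_congr rfl hdegree, sum_add_distrib, sum_const, smul_eq_mul, mul_one,
    G.card_neighborFinset_eq_degree]
  congr 1
  refine (sum_card_bipartiteAbove_eq_sum_card_bipartiteBelow G.Adj).trans ?_
  refine sum_congr rfl fun w _ ↦ congrArg card ?_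
  ext x
  simp [G.adj_comm]

theorem two_mul_card_edgeFinset_eq (hG : G.CliqueFree 3) (u : X) :
    2 * #G.edgeFinset = 2 * G.degree u + ∑ w ∈ Gᶜ.neighborFinset u,
      (2 * #(G.neighborFinset u ∩ G.neighborFinset w) +
        #{z ∈ Gᶜ.neighborFinset u | G.Adj w z}) := by
  have hcompl : (G.neighborFinset u)ᶜ = insert u (Gᶜ.neighborFinset u) := by
    ext x
    simp only [mem_compl, SimpleGraph.mem_neighborFinset, mem_insert, SimpleGraph.compl_adj]
    grind [G.irrefl]
  rw [← G.sum_degrees_eq_twice_card_edges, ← sum_add_sum_compl (G.neighborFinset u), hcompl,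
    sum_insert (by simp), sum_degree_neighborFinset hG]
  have hdegree : ∀ w ∈ Gᶜ.neighborFinset u, G.degree w = _ := fun w hw ↦
    degree_eq_card_inter_add_card_filter_compl (by simp_all : ¬G.Adj u w)
  rw [sum_congr rfl hdegree]
  simp only [sum_add_distrib, two_mul]
  ring

theorem card_edgeFinset_eq_of_isIndepSet (hG : G.CliqueFree 3) {u : X}
    (hind : ∀ w ∈ Gᶜ.neighborFinset u, ∀ z ∈ Gᶜ.neighborFinset u, ¬G.Adj w z) :
    #G.edgeFinset = G.degree u +
      ∑ w ∈ Gᶜ.neighborFinset u, #(G.neighborFinset u ∩ G.neighborFinset w) := by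
  have hcount := two_mul_card_edgeFinset_eq hG u
  have hzero : ∀ w ∈ Gᶜ.neighborFinset u, #{z ∈ Gᶜ.neighborFinset u | G.Adj w z} = 0 :=
    fun w hw ↦ by simpa [filter_eq_empty_iff] using hind w hw
  rw [sum_add_distrib, sum_congr rfl hzero, ← mul_sum] at hcount
  simp only [sum_const_zero] at hcount
  omega

theorem two_mul_card_edgeFinset_le (hG : G.CliqueFree 3) {k : ℕ}
    (hK : Pairwise fun a b ↦ #(G.neighborFinset a ∩ G.neighborFinset b) ≤ k) (u : X) :
    2 * #G.edgeFinset ≤ 2 * G.degree u + Gᶜ.degree u * (2 * k + (Gᶜ.degree u - 1)) := by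
  rw [two_mul_card_edgeFinset_eq hG u, ← Gᶜ.card_neighborFinset_eq_degree, ← smul_eq_mul]
  refine Nat.add_le_add_left (sum_le_card_nsmul _ _ _ fun w hw ↦ ?_) _
  have hcodeg := hK (show u ≠ w by rintro rfl; simp at hw)
  have hlt : #{z ∈ Gᶜ.neighborFinset u | G.Adj w z} < #(Gᶜ.neighborFinset u) :=
    card_lt_card (filter_ssubset.2 ⟨w, hw, G.irrefl⟩)
  omega

theorem card_edgeFinset_le_ten_of_card_eq_seven (hcard : Fintype.card X = 7)
    (hG : G.CliqueFree 3)
    (hK : Pairwise fun a b ↦ #(G.neighborFinset a ∩ G.neighborFinset b) ≤ 3) :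
    #G.edgeFinset ≤ 10 := by
  by_contra! hlt
  obtain ⟨u, hu : 4 ≤ G.degree u⟩ := exists_lt_degree_of_mul_card_lt (G := G) (k := 3) (by omega)
  have hcompl : Gᶜ.degree u = 6 - G.degree u := by rw [G.degree_compl, hcard]
  rcases hu.eq_or_lt with hu | hu
  · rw [← hu, ← Gᶜ.card_neighborFinset_eq_degree] at hcompl
    obtain ⟨w, z, hne, hW⟩ := card_eq_two.1 hcompl
    have hcount := two_mul_card_edgeFinset_eq hG u
    have hw : u ≠ w := by rintro rfl; simpa [hW] using Gᶜ.notMem_neighborFinset_self u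
    have hz : u ≠ z := by rintro rfl; simpa [hW] using Gᶜ.notMem_neighborFinset_self u
    have hcw := hK hw
    have hcz := hK hz
    rw [hW, sum_pair hne] at hcount
    by_cases hwz : G.Adj w z
    · have hle := card_inter_add_card_inter_le_degree hG u hwz
      simp only [filter_insert, filter_singleton, SimpleGraph.irrefl, ↓reduceIte, hwz, hwz.symm,
        insert_empty_eq, card_singleton] at hcount
      omega
    · simp [filter_insert, filter_singleton, hwz, G.adj_comm z w] at hcount
      omega
  · have hle := two_mul_card_edgeFinset_le hG hK u
    have hlt7 : G.degree u < 7 := hcard ▸ G.degree_lt_card_verts u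
    rw [hcompl] at hle
    interval_cases G.degree u <;> omega

theorem card_edgeFinset_le_twelve_of_adj (hG : G.CliqueFree 3)
    (hK : Pairwise fun a b ↦ #(G.neighborFinset a ∩ G.neighborFinset b) ≤ 3)
    {u w z : X} (hu : G.degree u = 4) (hcompl : #(Gᶜ.neighborFinset u) = 3)
    (hw : w ∈ Gᶜ.neighborFinset u) (hz : z ∈ Gᶜ.neighborFinset u) (hwz : G.Adj w z) :
    #G.edgeFinset ≤ 12 := by
  obtain ⟨t, ht⟩ : ∃ t, ((Gᶜ.neighborFinset u).erase w).erase z = {t} := by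
    rw [← card_eq_one, card_erase_of_mem, card_erase_of_mem hw, hcompl]
    exact mem_erase.2 ⟨hwz.ne', hz⟩
  obtain ⟨htz, htw, htW⟩ : t ≠ z ∧ t ≠ w ∧ t ∈ Gᶜ.neighborFinset u := by
    simpa only [ht, mem_singleton, mem_erase, true_iff] using
      mem_erase (a := t) (b := z) (s := (Gᶜ.neighborFinset u).erase w)
  have hW : Gᶜ.neighborFinset u = {w, z, t} := by
    rw [← ht, insert_erase (mem_erase.2 ⟨hwz.ne', hz⟩), insert_erase hw]
  have hcount := two_mul_card_edgeFinset_eq hG u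
  simp only [SimpleGraph.mem_neighborFinset, SimpleGraph.compl_adj] at hw hz htW
  have hct := hK htW.1
  have hadjwz := card_inter_add_card_inter_le_degree hG u hwz
  have hadjwt (hwt : G.Adj w t) :=
    card_inter_add_card_inter_add_card_inter_lt hG hw.2 hwz.symm hwt.symm
  have hadjzt (hzt : G.Adj z t) :=
    card_inter_add_card_inter_add_card_inter_lt hG hz.2 hwz hzt.symm
  have hczt := hK htz.symm
  have hcwt := hK htw.symm
  have hnot : ¬(G.Adj w t ∧ G.Adj z t) := fun h ↦
    hG {w, z, t} (SimpleGraph.is3Clique_triple_iff.2 ⟨hwz, h⟩)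
  rw [hW, sum_insert (by simp [hwz.ne, htw.symm]), sum_pair htz.symm] at hcount
  by_cases hwt : G.Adj w t <;> by_cases hzt : G.Adj z t <;>
    simp only [filter_insert, filter_singleton, SimpleGraph.irrefl, ↓reduceIte, hwz, hwz.symm, hwt,
      hzt, G.adj_comm t, insert_empty_eq, card_singleton, card_empty] at hcount <;>
    grind

theorem card_le_one_of_forall_subset_neighborFinset {k : ℕ}
    (hK : Pairwise fun a b ↦ #(G.neighborFinset a ∩ G.neighborFinset b) ≤ k) {U T : Finset X}
    (hU : k < #U) (hT : ∀ u ∈ U, T ⊆ G.neighborFinset u) : #T ≤ 1 := by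
  refine card_le_one.2 fun x hx y hy ↦ ?_
  by_contra hne
  have hsub : U ⊆ G.neighborFinset x ∩ G.neighborFinset y := fun u hu ↦ by
    simpa [G.adj_comm] using And.intro (hT u hu hx) (hT u hu hy)
  have := (card_le_card hsub).trans (hK hne)
  omega

end TriangleFree

section Coloring

theorem card_le_three_of_pairwise_eq_or_eq {X C : Type*} {T : Finset X} {f g : X → C}
    (hg : Set.InjOn g T) (hfg : (T : Set X).Pairwise fun x y ↦ f x = g y ∨ f y = g x) :
    #T ≤ 3 := by
  classical
  set R := {p ∈ T.offDiag | f p.1 = g p.2}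
  have hR : #R ≤ #T := card_le_card_of_injOn Prod.fst (by simp +contextual [R, Set.MapsTo]) <| by
    rintro ⟨x, y⟩ hxy ⟨x', z⟩ hxz rfl
    simp only [R, coe_filter, mem_offDiag, Set.mem_ofPred_eq] at hxy hxz
    rw [hg hxy.1.2.1 hxz.1.2.1 (hxy.2.symm.trans hxz.2)]
  have hcover : T.offDiag ⊆ R ∪ R.image Prod.swap := by
    rintro ⟨x, y⟩ hxy
    have := hfg (mem_offDiag.1 hxy).1 (mem_offDiag.1 hxy).2.1 (mem_offDiag.1 hxy).2.2
    simp only [R, mem_union, mem_filter, mem_image, Prod.exists, mem_offDiag, Prod.swap_prod_mk,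
      Prod.mk.injEq] at hxy ⊢
    grind
  have hoff : #T * #T - #T ≤ 2 * #T := calc
    #T * #T - #T = #T.offDiag := (offDiag_card T).symm
    _ ≤ #R + #(R.image Prod.swap) := (card_le_card hcover).trans (card_union_le _ _)
    _ ≤ 2 * #T := by linarith [card_image_le (s := R) (f := Prod.swap)]
  by_contra! hT
  nlinarith [Nat.sub_add_cancel (Nat.le_mul_self #T)]

theorem exists_ne_and_eq_of_pairwise_eq_or_eq {X C : Type*} {T : Finset X} {f g : X → C}
    (hT : #T = 3) (hg : Set.InjOn g T)
    (hfg : (T : Set X).Pairwise fun x y ↦ f x = g y ∨ f y = g x) {x : X} (hx : x ∈ T) :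
    ∃ y ∈ T, y ≠ x ∧ f x = g y := by
  classical
  obtain ⟨y, z, hyz, hxT⟩ := card_eq_two.1 (show #(T.erase x) = 2 by rw [card_erase_of_mem hx, hT])
  have hy : y ∈ T.erase x := by simp [hxT]
  have hz : z ∈ T.erase x := by simp [hxT]
  rw [mem_erase] at hy hz
  by_contra! hne
  have hyx := (hfg hx hy.2 hy.1.symm).resolve_left (hne y hy.2 hy.1)
  have hzx := (hfg hx hz.2 hz.1.symm).resolve_left (hne z hz.2 hz.1)
  rcases hfg hy.2 hz.2 hyz with h | h
  · exact hz.1 (hg hz.2 hx (h.symm.trans hyx))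
  · exact hy.1 (hg hy.2 hx (h.symm.trans hzx))

/-- Colour patterns that survive on the four-cycles of a graph: the two edges `ax`, `ay` at a vertex
`a` of a four-cycle `a x b y` have different colours, and some two opposite edges have equal ones.
The colour of an edge `ax` is always read from the end `a` at which it is used, so that `col` need
not be symmetric. -/
def IsFourCycleColoring {X C : Type*} (G : SimpleGraph X) (col : X → X → C) : Prop :=
  ∀ ⦃a b⦄, a ≠ b → (G.commonNeighbors a b).Pairwise fun x y ↦
    col a x ≠ col a y ∧ (col a x = col b y ∨ col a y = col b x)

namespace IsFourCycleColoring

variable {X C : Type*} [Fintype X] [DecidableEq X] {G : SimpleGraph X} [DecidableRel G.Adj]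
  {col : X → X → C}

theorem injOn_inter (hcol : IsFourCycleColoring G col) {a b : X} (hab : a ≠ b) :
    Set.InjOn (col a) (G.neighborFinset a ∩ G.neighborFinset b : Finset X) := by
  intro x hx y hy hxy
  by_contra hne
  simp only [mem_coe, mem_inter, SimpleGraph.mem_neighborFinset] at hx hy
  exact (hcol hab hx hy hne).1 hxy

theorem pairwise_inter (hcol : IsFourCycleColoring G col) {a b : X} (hab : a ≠ b) :
    ((G.neighborFinset a ∩ G.neighborFinset b : Finset X) : Set X).Pairwise fun x y ↦
      col b x = col a y ∨ col b y = col a x := by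
  intro x hx y hy hne
  simp only [mem_coe, mem_inter, SimpleGraph.mem_neighborFinset] at hx hy
  exact (hcol hab hx hy hne).2.symm.imp Eq.symm Eq.symm

theorem card_inter_le_three (hcol : IsFourCycleColoring G col) :
    Pairwise fun a b ↦ #(G.neighborFinset a ∩ G.neighborFinset b) ≤ 3 := fun _ _ hab ↦
  card_le_three_of_pairwise_eq_or_eq (hcol.injOn_inter hab) (hcol.pairwise_inter hab)

-- If the two triples met in exactly `{c, d}`, then the equality `col w c = col z d` (say) would be
-- the colour at `u` of a vertex of both triples other than `c` and `d`.
theorem inter_eq_inter (hcol : IsFourCycleColoring G col) {u w z : X} (hu : G.degree u = 4)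
    (hinj : Set.InjOn (col u) (G.neighborFinset u)) (huw : u ≠ w) (huz : u ≠ z)
    (hw : #(G.neighborFinset u ∩ G.neighborFinset w) = 3)
    (hz : #(G.neighborFinset u ∩ G.neighborFinset z) = 3) :
    G.neighborFinset u ∩ G.neighborFinset w = G.neighborFinset u ∩ G.neighborFinset z := by
  by_contra hne
  have hwz : w ≠ z := by rintro rfl; exact hne rfl
  have hcolor (v : X) (huv : u ≠ v) (hv : #(G.neighborFinset u ∩ G.neighborFinset v) = 3) :=
    fun x hx ↦ exists_ne_and_eq_of_pairwise_eq_or_eq (x := x) hv (hcol.injOn_inter huv)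
      (hcol.pairwise_inter huv) hx
  have hw' := hcolor w huw hw
  have hz' := hcolor z huz hz
  set A := G.neighborFinset u ∩ G.neighborFinset w with hA
  set B := G.neighborFinset u ∩ G.neighborFinset z with hB
  have hinter : #(A ∩ B) = 2 := by
    have hunion : #(A ∪ B) ≤ 4 := by
      rw [← hu, ← G.card_neighborFinset_eq_degree, hA, hB, ← inter_union_distrib_left]
      exact card_le_card inter_subset_left
    have hlt : #(A ∩ B) < 3 := hw ▸ card_lt_card (inter_subset_left.ssubset_of_ne fun hAB ↦
      hne (eq_of_subset_of_card_le (inter_eq_left.1 hAB) (hz.trans hw.symm).le))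
    have := card_union_add_card_inter A B
    omega
  obtain ⟨c, d, hcd, hAB⟩ := card_eq_two.1 hinter
  have hcross {x y : X} (hx : x ∈ A) (hy : y ∈ B) (hxy : A ∩ B = {x, y}) : col w x ≠ col z y := by
    intro heq
    obtain ⟨p, hp, hpx, hwp⟩ := hw' x hx
    obtain ⟨q, hq, hqy, hzq⟩ := hz' y hy
    obtain rfl : p = q := hinj (by grind) (by grind) (hwp.symm.trans (heq.trans hzq))
    have : p ∈ A ∩ B := mem_inter.2 ⟨hp, hq⟩
    grind
  have hc : c ∈ A ∩ B := by simp [hAB]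
  have hd : d ∈ A ∩ B := by simp [hAB]
  simp only [mem_inter] at hc hd
  have hadj : c ∈ G.commonNeighbors w z ∧ d ∈ G.commonNeighbors w z := by
    simp_all [SimpleGraph.mem_commonNeighbors]
  rcases (hcol hwz hadj.1 hadj.2 hcd).2 with h | h
  · exact hcross hc.1 hd.2 hAB h
  · exact hcross hd.1 hc.2 (hAB.trans (pair_comm c d)) h

theorem injOn_neighborFinset (hcol : IsFourCycleColoring G col) {u : X} {W : Finset X}
    (hu : G.degree u = 4) (huW : u ∉ W) (hW : #W = 3)
    (hcard : ∀ w ∈ W, #(G.neighborFinset u ∩ G.neighborFinset w) = 3) :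
    Set.InjOn (col u) (G.neighborFinset u) := by
  intro x hx y hy hxy
  by_contra hne
  have hpair : #(G.neighborFinset u \ {x, y}) = 2 := by
    rw [card_sdiff_of_subset (by simp_all [insert_subset_iff]), card_pair hne,
      G.card_neighborFinset_eq_degree, hu]
  obtain ⟨w, hw, v, hv, hvw⟩ : ∃ w ∈ W, ∃ v ∈ G.neighborFinset u \ {x, y},
      v ∉ G.neighborFinset w := by
    by_contra! hall
    have := card_le_one_of_forall_subset_neighborFinset hcol.card_inter_le_three
      (U := insert u W) (by rw [card_insert_of_notMem huW, hW]; decide)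
      (forall_mem_insert _ _ _ |>.2 ⟨sdiff_subset, hall⟩)
    omega
  have hmiss : G.neighborFinset u ∩ G.neighborFinset w = (G.neighborFinset u).erase v := by
    refine eq_of_subset_of_card_le (by grind) ?_
    rw [hcard w hw, card_erase_of_mem (mem_sdiff.1 hv).1, G.card_neighborFinset_eq_degree, hu]
  have huw : u ≠ w := (ne_of_mem_of_not_mem hw huW).symm
  exact hne (hcol.injOn_inter huw (by rw [hmiss]; grind) (by rw [hmiss]; grind) hxy)

theorem exists_card_inter_ne_three (hcol : IsFourCycleColoring G col) {u : X} {W : Finset X}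
    (hu : G.degree u = 4) (huW : u ∉ W) (hW : #W = 3) :
    ∃ w ∈ W, #(G.neighborFinset u ∩ G.neighborFinset w) ≠ 3 := by
  by_contra! hcard
  obtain ⟨w, hw⟩ : W.Nonempty := card_pos.1 (by omega)
  have hne {z : X} (hz : z ∈ W) : u ≠ z := (ne_of_mem_of_not_mem hz huW).symm
  have hsame : ∀ z ∈ W, G.neighborFinset u ∩ G.neighborFinset w ⊆ G.neighborFinset z := by
    intro z hz
    rw [hcol.inter_eq_inter hu (hcol.injOn_neighborFinset hu huW hW hcard) (hne hw) (hne hz)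
      (hcard w hw) (hcard z hz)]
    exact inter_subset_right
  have := card_le_one_of_forall_subset_neighborFinset hcol.card_inter_le_three
    (U := insert u W) (by rw [card_insert_of_notMem huW, hW]; decide)
    (forall_mem_insert _ _ _ |>.2 ⟨inter_subset_left, hsame⟩)
  have := hcard w hw
  omega

omit [DecidableEq X] in
theorem card_edgeFinset_le_twelve_of_card_eq_eight (hcol : IsFourCycleColoring G col)
    (hG : G.CliqueFree 3) (hcard : Fintype.card X = 8) : #G.edgeFinset ≤ 12 := by
  classical
  have hK := hcol.card_inter_le_three
  by_contra! hlt
  obtain ⟨u, hu : 4 ≤ G.degree u⟩ := exists_lt_degree_of_mul_card_lt (G := G) (k := 3) (by omega)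
  have hcompl : Gᶜ.degree u = 7 - G.degree u := by rw [G.degree_compl, hcard]
  rcases hu.eq_or_lt with hu | hu
  · rw [← hu, ← Gᶜ.card_neighborFinset_eq_degree] at hcompl
    have hind : ∀ w ∈ Gᶜ.neighborFinset u, ∀ z ∈ Gᶜ.neighborFinset u, ¬G.Adj w z :=
      fun w hw z hz hwz ↦ hlt.not_ge
        (card_edgeFinset_le_twelve_of_adj hG hK hu.symm hcompl hw hz hwz)
    have hnot : u ∉ Gᶜ.neighborFinset u := Gᶜ.notMem_neighborFinset_self u
    have hle : ∀ w ∈ Gᶜ.neighborFinset u, #(G.neighborFinset u ∩ G.neighborFinset w) ≤ 3 :=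
      fun w hw ↦ hK (ne_of_mem_of_not_mem hw hnot).symm
    obtain ⟨w, hw, hne⟩ := hcol.exists_card_inter_ne_three hu.symm hnot hcompl
    have hsum := sum_lt_sum hle ⟨w, hw, (hle w hw).lt_of_ne hne⟩
    have hcount := card_edgeFinset_eq_of_isIndepSet hG hind
    rw [sum_const, smul_eq_mul] at hsum
    omega
  · have hle := two_mul_card_edgeFinset_le hG hK u
    have hlt8 : G.degree u < 8 := hcard ▸ G.degree_lt_card_verts u
    rw [hcompl] at hle
    interval_cases G.degree u <;> omega

end IsFourCycleColoring

end Coloring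

section RainbowCycles

variable {V : Type*} {s : ℕ} {S H : Finset (Finset V)} {part : V → Fin s}

theorem HasRainbowCycle.mono {k : ℕ} (hSH : S ⊆ H) (hS : HasRainbowCycle S part k) :
    HasRainbowCycle H part k :=
  let ⟨v, A, hv, hA, hmem, hinc, hpart⟩ := hS
  ⟨v, A, hv, hA, fun i ↦ hSH (hmem i), hinc, hpart⟩

theorem hasRainbowCycle_three {A B C : Finset V} (hA : A ∈ S) (hB : B ∈ S) (hC : C ∈ S)
    (hAB : A ≠ B) (hBC : B ≠ C) (hCA : C ≠ A) {p q t : V} (hp : p ∈ A ∧ p ∈ B)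
    (hq : q ∈ B ∧ q ∈ C) (ht : t ∈ C ∧ t ∈ A) (hpq : part p ≠ part q) (hqt : part q ≠ part t)
    (htp : part t ≠ part p) : HasRainbowCycle S part 3 := by
  have hinj : Function.Injective fun i ↦ part (![p, q, t] i) := by
    simp [Function.Injective, Fin.forall_fin_succ, *, Ne.symm]
  refine ⟨![p, q, t], ![B, C, A], hinj.of_comp, ?_, ?_, ?_, hinj⟩
  · simp [Function.Injective, Fin.forall_fin_succ, *, Ne.symm]
  · simp [Fin.forall_fin_succ, *]
  · simp [Fin.forall_fin_succ, finRotate_apply, *]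

theorem hasRainbowCycle_four {A : Fin 4 → Finset V} (hA : A.Injective) (hAS : ∀ i, A i ∈ S)
    {v : Fin 4 → V} (hv : ∀ i, v i ∈ A i ∧ v (i + 1) ∈ A i)
    (hadj : ∀ i, part (v i) ≠ part (v (i + 1))) (hopp : ∀ i, part (v i) ≠ part (v (i + 2))) :
    HasRainbowCycle S part 4 := by
  have hinj : Function.Injective fun i ↦ part (v i) := by
    intro i j hij
    have hdiff : ∀ i j : Fin 4, i = j ∨ j = i + 1 ∨ j = i + 2 ∨ i = j + 1 := by decide
    rcases hdiff i j with rfl | rfl | rfl | rfl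
    exacts [rfl, (hadj _ hij).elim, (hopp _ hij).elim, (hadj _ hij.symm).elim]
  exact ⟨v, A, hinj.of_comp, hA, hAS, by simpa [finRotate_apply] using hv, hinj⟩

variable [DecidableEq V]

/-- Any two distinct edges share at most one vertex. -/
def IsLinear (H : Finset (Finset V)) : Prop := ∀ A ∈ H, ∀ B ∈ H, A ≠ B → #(A ∩ B) ≤ 1

theorem IsLinear.mono (hSH : S ⊆ H) (hH : IsLinear H) : IsLinear S :=
  fun A hA B hB ↦ hH A (hSH hA) B (hSH hB)

theorem IsLinear.eq_of_mem (hS : IsLinear S) {A B : Finset V} (hA : A ∈ S) (hB : B ∈ S)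
    (hAB : A ≠ B) {p q : V} (hp : p ∈ A ∧ p ∈ B) (hq : q ∈ A ∧ q ∈ B) : p = q :=
  card_le_one.1 (hS A hA B hB hAB) p (mem_inter.2 hp) q (mem_inter.2 hq)

theorem IsLinear.eq_and_eq_of_not_hasRainbowCycle_three (hS : IsLinear S)
    (hpart : ∀ A ∈ S, Set.InjOn part A) (h3 : ¬HasRainbowCycle S part 3) {A B C : Finset V}
    (hA : A ∈ S) (hB : B ∈ S) (hC : C ∈ S) (hAB : A ≠ B) (hBC : B ≠ C) (hCA : C ≠ A) {p q t : V}
    (hp : p ∈ A ∧ p ∈ B) (hq : q ∈ B ∧ q ∈ C) (ht : t ∈ C ∧ t ∈ A) : p = q ∧ q = t := by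
  by_cases hpq : p = q
  · subst hpq
    exact ⟨rfl, hS.eq_of_mem hC hA hCA ⟨hq.2, hp.1⟩ ht⟩
  by_cases hqt : q = t
  · subst hqt
    exact ⟨hS.eq_of_mem hA hB hAB hp ⟨ht.2, hq.1⟩, rfl⟩
  by_cases htp : t = p
  · subst htp
    exact (hqt (hS.eq_of_mem hB hC hBC hq ⟨hp.2, ht.1⟩)).elim
  exact (h3 <| hasRainbowCycle_three hA hB hC hAB hBC hCA hp hq ht
    ((hpart B hB).ne hp.2 hq.1 hpq) ((hpart C hC).ne hq.2 ht.1 hqt)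
    ((hpart A hA).ne ht.2 hp.1 htp)).elim

end RainbowCycles

section StarGraph

variable {V : Type*} {S : Finset (Finset V)} {root : V → S}

/-- The vertex `p`, whose chosen edge is `root p`, links two distinct edges through it if one of
them is `root p`. -/
def IsLink (root : V → S) (A B : S) (p : V) : Prop :=
  A ≠ B ∧ (p ∈ A.1 ∧ p ∈ B.1) ∧ (root p = A ∨ root p = B)

theorem IsLink.symm {A B : S} {p : V} (hp : IsLink root A B p) : IsLink root B A p :=
  ⟨hp.1.symm, hp.2.1.symm, hp.2.2.symm⟩

/-- The intersection graph of the edges of a hypergraph, thinned out by replacing the clique of all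
edges through a vertex `p` by the star centred at the chosen edge `root p`. -/
def starGraph (root : V → S) : SimpleGraph S where
  Adj A B := ∃ p, IsLink root A B p
  symm := ⟨fun _ _ ⟨p, hp⟩ ↦ ⟨p, hp.symm⟩⟩
  loopless := ⟨fun _ ⟨_, hp⟩ ↦ hp.1 rfl⟩

theorem exists_forall_mem_imp_mem_root (hS : S.Nonempty) :
    ∃ root : V → S, ∀ (v : V) (A : S), v ∈ A.1 → v ∈ (root v).1 := by
  have : Nonempty S := hS.to_subtype
  have hroot (v : V) : ∃ R : S, ∀ A : S, v ∈ A.1 → v ∈ R.1 := by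
    by_cases hv : ∃ A : S, v ∈ A.1
    · exact hv.imp fun _ hA _ _ ↦ hA
    · exact ⟨Classical.arbitrary S, fun A hA ↦ (hv ⟨A, hA⟩).elim⟩
  exact Classical.skolem.1 hroot

variable [DecidableEq V]

theorem sum_card_filter_root_ne_le_card_edgeFinset_starGraph [DecidableRel (starGraph root).Adj]
    (hS : IsLinear S) (hroot : ∀ (v : V) (A : S), v ∈ A.1 → v ∈ (root v).1) :
    ∑ A : S, #{v ∈ A.1 | root v ≠ A} ≤ #(starGraph root).edgeFinset := by
  rw [← card_sigma]
  refine card_le_card_of_injOn (fun z ↦ s(z.1, root z.2)) ?_ ?_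
  · rintro ⟨A, v⟩ hv
    simp only [coe_sigma, Set.mem_sigma_iff, mem_coe, mem_filter] at hv
    simp only [SimpleGraph.coe_edgeFinset, SimpleGraph.mem_edgeSet]
    exact ⟨v, hv.2.2.symm, ⟨hv.2.1, hroot v A hv.2.1⟩, .inr rfl⟩
  · rintro ⟨A, v⟩ hv ⟨B, w⟩ hw hvw
    simp only [coe_sigma, Set.mem_sigma_iff, mem_coe, mem_filter] at hv hw
    have hvr := hroot v A hv.2.1
    have hwr := hroot w B hw.2.1
    simp only [Sym2.eq_iff] at hvw
    obtain rfl : v = w := hS.eq_of_mem A.2 (root v).2 (Subtype.coe_ne_coe.2 hv.2.2.symm)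
      ⟨hv.2.1, hvr⟩ (by grind)
    grind

theorem sum_card_filter_root_eq_le_card_biUnion :
    ∑ A : S, #{v ∈ A.1 | root v = A} ≤ #(S.biUnion id) := by
  rw [← card_biUnion]
  · refine card_le_card (biUnion_subset.2 fun A _ ↦ ?_)
    exact (filter_subset _ _).trans (subset_biUnion_of_mem id A.2)
  · intro A _ B _ hAB
    simp only [disjoint_left, mem_filter]
    grind

theorem sum_card_le_card_biUnion_add_card_edgeFinset_starGraph
    [DecidableRel (starGraph root).Adj] (hS : IsLinear S)
    (hroot : ∀ (v : V) (A : S), v ∈ A.1 → v ∈ (root v).1) :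
    ∑ A ∈ S, #A ≤ #(S.biUnion id) + #(starGraph root).edgeFinset := calc
  ∑ A ∈ S, #A = ∑ A : S, (#{v ∈ A.1 | root v = A} + #{v ∈ A.1 | root v ≠ A}) := by
    rw [← sum_coe_sort]
    exact sum_congr rfl fun A _ ↦ (card_filter_add_card_filter_not _).symm
  _ ≤ #(S.biUnion id) + #(starGraph root).edgeFinset := by
    rw [sum_add_distrib]
    exact add_le_add sum_card_filter_root_eq_le_card_biUnion
      (sum_card_filter_root_ne_le_card_edgeFinset_starGraph hS hroot)

variable {s : ℕ} {part : V → Fin s}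

theorem cliqueFree_three_starGraph (hS : IsLinear S) (hpart : ∀ A ∈ S, Set.InjOn part A)
    (h3 : ¬HasRainbowCycle S part 3) : (starGraph root).CliqueFree 3 := by
  intro T hT
  obtain ⟨A, B, C, ⟨p, hAB, hp, hpr⟩, ⟨t, hAC, ht, htr⟩, ⟨q, hBC, hq, hqr⟩, -⟩ :=
    SimpleGraph.is3Clique_iff.1 hT
  obtain ⟨rfl, rfl⟩ := hS.eq_and_eq_of_not_hasRainbowCycle_three hpart h3 A.2 B.2 C.2
    (Subtype.coe_ne_coe.2 hAB) (Subtype.coe_ne_coe.2 hBC)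
    (Subtype.coe_ne_coe.2 hAC.symm) hp hq ht.symm
  grind

theorem IsLink.ne_of_cycle (hS : IsLinear S) (hpart : ∀ A ∈ S, Set.InjOn part A)
    (h3 : ¬HasRainbowCycle S part 3) {a b x y : S} (hab : a ≠ b) (hxy : x ≠ y) {p q t u : V}
    (hp : IsLink root a x p) (hq : IsLink root x b q) (ht : IsLink root b y t)
    (hu : IsLink root y a u) : u ≠ p := by
  rintro rfl
  obtain ⟨rfl, rfl⟩ := hS.eq_and_eq_of_not_hasRainbowCycle_three hpart h3 x.2 b.2 y.2
    (Subtype.coe_ne_coe.2 hq.1) (Subtype.coe_ne_coe.2 ht.1)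
    (Subtype.coe_ne_coe.2 hxy.symm) hq.2.1 ht.2.1 ⟨hu.2.1.1, hp.2.1.2⟩
  grind [IsLink]

theorem IsLink.image_inter (hS : IsLinear S) {A B : S} {p : V} (hp : IsLink root A B p) :
    (A.1 ∩ B.1).image part = {part p} := by
  have hinter : A.1 ∩ B.1 = {p} := eq_singleton_iff_unique_mem.2 ⟨mem_inter.2 hp.2.1, fun q hq ↦
    hS.eq_of_mem A.2 B.2 (Subtype.coe_ne_coe.2 hp.1) (mem_inter.1 hq) hp.2.1⟩
  rw [hinter, image_singleton]

theorem isFourCycleColoring_starGraph (hS : IsLinear S) (hpart : ∀ A ∈ S, Set.InjOn part A)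
    (h3 : ¬HasRainbowCycle S part 3) (h4 : ¬HasRainbowCycle S part 4) :
    IsFourCycleColoring (starGraph root) fun A B ↦ (A.1 ∩ B.1).image part := by
  rintro a b hab x ⟨⟨p, hp⟩, q, hq⟩ y ⟨⟨u, hu⟩, t, ht⟩ hxy
  have hqx := hq.symm
  have huy := hu.symm
  have hup : part u ≠ part p := (hpart a a.2).ne hu.2.1.1 hp.2.1.1
    (hp.ne_of_cycle hS hpart h3 hab hxy hqx ht huy)
  have hpq : part p ≠ part q := (hpart x x.2).ne hp.2.1.2 hq.2.1.2
    (hqx.ne_of_cycle hS hpart h3 hxy hab.symm ht huy hp)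
  have hqt : part q ≠ part t := (hpart b b.2).ne hq.2.1.1 ht.2.1.1
    (ht.ne_of_cycle hS hpart h3 hab.symm hxy.symm huy hp hqx)
  have htu : part t ≠ part u := (hpart y y.2).ne ht.2.1.2 hu.2.1.2
    (huy.ne_of_cycle hS hpart h3 hxy.symm hab hp hqx ht)
  beta_reduce
  rw [hp.image_inter hS, hq.image_inter hS, hu.image_inter hS, ht.image_inter hS]
  simp only [ne_eq, singleton_inj]
  refine ⟨hup.symm, ?_⟩
  by_contra! hopp
  refine h4 (hasRainbowCycle_four (A := fun i ↦ (![x, b, y, a] i).1) (v := ![p, q, t, u])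
    (Subtype.coe_injective.comp ?_) (fun i ↦ (![x, b, y, a] i).2) ?_ ?_ ?_)
  · have := hp.1; have := hq.1; have := hu.1; have := ht.1
    simp [Function.Injective, Fin.forall_fin_succ, *, Ne.symm]
  · have := hp.2.1; have := hq.2.1; have := hu.2.1; have := ht.2.1
    simp [Fin.forall_fin_succ, *]
  · simp [Fin.forall_fin_succ, *]
  · simp [Fin.forall_fin_succ, *, hopp.1.symm, hopp.2.symm]

end StarGraph

section Sparse

variable {V : Type*} {s : ℕ} {part : V → Fin s}

theorem injOn_of_forall_card_filter_eq_one {A : Finset V}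
    (hA : ∀ i, #{x ∈ A | part x = i} = 1) : Set.InjOn part A := fun x hx y hy hxy ↦
  card_le_one.1 (hA (part y)).le x (mem_filter.2 ⟨hx, hxy⟩) y (mem_filter.2 ⟨hy, rfl⟩)

theorem card_eq_of_forall_card_filter_eq_one {A : Finset V}
    (hA : ∀ i, #{x ∈ A | part x = i} = 1) : #A = s := by
  rw [card_eq_sum_card_fiberwise (f := part) (t := univ) (by simp [Set.MapsTo])]
  simp [hA]

variable [DecidableEq V] {r : ℕ} {H S : Finset (Finset V)}

theorem exists_graph_isFourCycleColoring (hS : S.Nonempty) (hcard : ∀ A ∈ S, r ≤ #A)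
    (hpart : ∀ A ∈ S, Set.InjOn part A) (hlin : IsLinear S) (h3 : ¬HasRainbowCycle S part 3)
    (h4 : ¬HasRainbowCycle S part 4) :
    ∃ (G : SimpleGraph S) (_ : DecidableRel G.Adj) (col : S → S → Finset (Fin s)),
      G.CliqueFree 3 ∧ IsFourCycleColoring G col ∧ #S * r ≤ #(S.biUnion id) + #G.edgeFinset := by
  classical
  obtain ⟨root, hroot⟩ := exists_forall_mem_imp_mem_root hS
  refine ⟨starGraph root, inferInstance, _, cliqueFree_three_starGraph hlin hpart h3,
    isFourCycleColoring_starGraph hlin hpart h3 h4, ?_⟩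
  calc #S * r ≤ ∑ A ∈ S, #A := card_nsmul_le_sum S card r hcard
    _ ≤ _ := sum_card_le_card_biUnion_add_card_edgeFinset_starGraph hlin hroot

theorem rainbowFree_is_sparse_general (hr : 2 ≤ r) (hcard : ∀ A ∈ H, r ≤ #A)
    (hpart : ∀ A ∈ H, Set.InjOn part A) (hlin : IsLinear H) (h3 : ¬HasRainbowCycle H part 3)
    (h4 : ¬HasRainbowCycle H part 4) :
    GFree H (3 * r - 3) 3 ∧ GFree H (4 * r - 5) 4 ∧ GFree H (5 * r - 7) 5 ∧
      GFree H (7 * r - 11) 7 ∧ GFree H (8 * r - 13) 8 := by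
  have hgraph (S : Finset (Finset V)) (hSH : S ⊆ H) (hS : 0 < #S) :=
    exists_graph_isFourCycleColoring (card_pos.1 hS) (fun A hA ↦ hcard A (hSH hA))
      (fun A hA ↦ hpart A (hSH hA)) (hlin.mono hSH) (mt (.mono hSH) h3) (mt (.mono hSH) h4)
  refine ⟨?_, ?_, ?_, ?_, ?_⟩ <;> intro S hSH hS <;>
    obtain ⟨G, _, col, hG, hcol, hle⟩ := hgraph S hSH (by omega) <;>
    have hmantel := four_mul_card_edgeFinset_le_sq hG <;>
    rw [Fintype.card_coe, hS] at hmantel <;>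
    rw [hS] at hle
  · omega
  · omega
  · omega
  · have := card_edgeFinset_le_ten_of_card_eq_seven (by simpa using hS) hG hcol.card_inter_le_three
    omega
  · have := hcol.card_edgeFinset_le_twelve_of_card_eq_eight hG (by simpa using hS)
    omega

end Sparse

theorem rainbowFree_is_sparse {V : Type*} [DecidableEq V] (r : ℕ) (hr : 3 ≤ r)
    (H : Finset (Finset V)) (part : V → Fin r)
    (hpart : ∀ A ∈ H, ∀ i : Fin r, (A.filter fun x => part x = i).card = 1)
    (hlin : ∀ A ∈ H, ∀ B ∈ H, A ≠ B → (A ∩ B).card ≤ 1)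
    (h3 : ¬ HasRainbowCycle H part 3) (h4 : ¬ HasRainbowCycle H part 4) :
    GFree H (3 * r - 3) 3 ∧ GFree H (4 * r - 5) 4 ∧ GFree H (5 * r - 7) 5 ∧
      GFree H (7 * r - 11) 7 ∧ GFree H (8 * r - 13) 8 :=
  rainbowFree_is_sparse_general (by omega)
    (fun A hA ↦ (card_eq_of_forall_card_filter_eq_one (hpart A hA)).ge)
    (fun A hA ↦ injOn_of_forall_card_filter_eq_one (hpart A hA)) hlin h3 h4
end

section
/- For every integer r ≥ 3 and every real ε > 0 there exists N such that for every integer n ≥ N there exists an r-uniform r-partite linear hypergraph H on n vertices which contains no rainbow cycles of length three or four and has more than n^{2−ε} edges. -/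
/-!
The edges are lines `{(i, x + Xᵢ • a) | i}` in a `ℤ[X₁, …, Xᵣ]`-module, one point in each of `r`
copies of it. Going around a rainbow cycle through the parts `p₀, …, pₖ` gives the relation
`∑ (X_{pᵢ₊₁} - X_{pᵢ}) • aᵢ = 0` between the directions `aᵢ` of its edges. Specialized to integers
`x` that increase along `p₀, …, pₖ`, all its coefficients but the last are positive and they sum to
zero, so the last direction is a convex combination of the others. If all directions lie on the
paraboloid `{(b, b ⬝ b)}`, strict convexity forces them to agree at `x`. Such `x` are Zariski dense,
so the directions are equal as polynomials and the edges of the cycle coincide.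

For the count, let `b` have `d` entries, polynomials of degree less than `d` in each variable with
coefficients in `{0, …, m}`, and let the base points range over a box just large enough to absorb
the products `Xᵢ • (b, b ⬝ b)`. As `m → ∞` the numbers of vertices and directions are powers of `m`
with exponents `(d + 1)ʳ d + O(dʳ)` and `dʳ d`, whose ratio tends to `1` with `d → ∞`.
-/

open Finset

/-- An `r`-uniform `r`-partite linear hypergraph, with parts given by `part`, that has no rainbow
cycle of any length. -/
structure IsRainbowFree {V : Type*} [DecidableEq V] {r : ℕ} (H : Finset (Finset V))
    (part : V → Fin r) : Prop where
  partite : ∀ A ∈ H, ∀ i, #{x ∈ A | part x = i} = 1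
  linear : ∀ A ∈ H, ∀ B ∈ H, A ≠ B → #(A ∩ B) ≤ 1
  not_hasRainbowCycle : ∀ k, 3 ≤ k → ¬ HasRainbowCycle H part k

section Embedding

variable {V W : Type*} {r : ℕ} {H : Finset (Finset V)} {part : V → Fin r}

lemma HasRainbowCycle.of_preimage_map (g : W ↪ V) {k : ℕ}
    (h : HasRainbowCycle (H.preimage (map g) (map_injective g).injOn) (part ∘ g) k) :
    HasRainbowCycle H part k := by
  obtain ⟨v, A, hv, hA, hAH, hvA, hpart⟩ := h
  exact ⟨g ∘ v, fun i ↦ (A i).map g, g.injective.comp hv, (map_injective g).comp hA,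
    fun i ↦ mem_preimage.1 (hAH i),
    fun i ↦ ⟨mem_map_of_mem g (hvA i).1, mem_map_of_mem g (hvA i).2⟩, hpart⟩

lemma IsRainbowFree.preimage_map [DecidableEq V] [DecidableEq W] (hH : IsRainbowFree H part)
    (g : W ↪ V) :
    IsRainbowFree (H.preimage (map g) (map_injective g).injOn) (part ∘ g) where
  partite A hA i := by
    rw [← hH.partite _ (mem_preimage.1 hA) i, filter_map, card_map]
    rfl
  linear A hA B hB hAB := by
    rw [← card_map g, map_inter]
    exact hH.linear _ (mem_preimage.1 hA) _ (mem_preimage.1 hB) ((map_injective g).ne hAB)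
  not_hasRainbowCycle k hk h := hH.not_hasRainbowCycle k hk (h.of_preimage_map g)

lemma IsRainbowFree.exists_fin [DecidableEq V] [Infinite V] (hH : IsRainbowFree H part)
    {S : Finset V} (hS : ∀ A ∈ H, A ⊆ S) {n : ℕ} (hn : #S ≤ n) :
    ∃ (H' : Finset (Finset (Fin n))) (part' : Fin n → Fin r),
      IsRainbowFree H' part' ∧ #H' = #H := by
  classical
  obtain ⟨T, hST, hT⟩ := Infinite.exists_superset_card_eq S n hn
  let g : Fin n ↪ V := (T.equivFinOfCardEq hT).symm.toEmbedding.trans (.subtype _)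
  have hg : T = univ.map g := by
    ext x
    simp [g, ← (T.equivFinOfCardEq hT).exists_congr_right]
  refine ⟨_, _, hH.preimage_map g, ?_⟩
  rw [card_preimage, filter_true_of_mem]
  intro A hA
  obtain ⟨B, -, rfl⟩ := subset_map_iff.1 (((hS A hA).trans hST).trans_eq hg)
  exact ⟨B, rfl⟩

end Embedding

section LineHypergraph

variable {R M : Type*} [CommRing R] [AddCommGroup M] [Module R M] {r : ℕ} {slope : Fin r → R}
  {x x' a a' : M} {X A : Finset M}

/-- The edge `{(i, x + slope i • a) | i}` on the vertex set `Fin r × M`: the `r` points, one per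
part, that the line through `x` with direction `a` has at the parameters `slope i`. -/
def lineEdge (slope : Fin r → R) (x a : M) : Finset (Fin r × M) :=
  univ.map ⟨fun i ↦ (i, x + slope i • a), fun _ _ h ↦ congrArg Prod.fst h⟩

lemma mem_lineEdge {v : Fin r × M} : v ∈ lineEdge slope x a ↔ v.2 = x + slope v.1 • a := by
  simp only [lineEdge, mem_map, mem_univ, true_and]
  constructor
  · rintro ⟨i, rfl⟩
    rfl
  · intro h
    exact ⟨v.1, Prod.ext rfl h.symm⟩

lemma card_filter_fst_lineEdge (i : Fin r) : #{v ∈ lineEdge slope x a | v.1 = i} = 1 := by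
  refine card_eq_one.2 ⟨(i, x + slope i • a), ?_⟩
  ext ⟨j, y⟩
  simp only [mem_filter, mem_lineEdge, mem_singleton, Prod.mk.injEq]
  grind

lemma lineEdge_parameters_unique [IsDomain R] [Module.IsTorsionFree R M]
    (hslope : slope.Injective) {i j : Fin r} (hij : i ≠ j)
    (hi : x + slope i • a = x' + slope i • a') (hj : x + slope j • a = x' + slope j • a') :
    x = x' ∧ a = a' := by
  have hsmul : (slope i - slope j) • (a - a') = 0 := calc
    _ = x + slope i • a - (x + slope j • a) - (x' + slope i • a' - (x' + slope j • a')) := by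
      module
    _ = 0 := by rw [hi, hj, sub_self]
  have ha : a = a' := sub_eq_zero.1 <|
    (smul_eq_zero.1 hsmul).resolve_left (sub_ne_zero.2 (hslope.ne hij))
  subst ha
  exact ⟨add_right_cancel hi, rfl⟩

lemma lineEdge_injective [IsDomain R] [Module.IsTorsionFree R M] (hr : 2 ≤ r)
    (hslope : slope.Injective) : Function.Injective fun e : M × M ↦ lineEdge slope e.1 e.2 := by
  intro e e' (h : lineEdge slope e.1 e.2 = lineEdge slope e'.1 e'.2)
  have point (i) : e.1 + slope i • e.2 = e'.1 + slope i • e'.2 :=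
    mem_lineEdge.1 (h ▸ mem_lineEdge.2 rfl : (i, e.1 + slope i • e.2) ∈ lineEdge slope e'.1 e'.2)
  have hij : (⟨0, by lia⟩ : Fin r) ≠ ⟨1, by lia⟩ := by simp
  exact Prod.ext_iff.2 (lineEdge_parameters_unique hslope hij (point _) (point _))

lemma card_lineEdge_inter_le_one [DecidableEq M] [IsDomain R] [Module.IsTorsionFree R M]
    (hslope : slope.Injective) (h : lineEdge slope x a ≠ lineEdge slope x' a') :
    #(lineEdge slope x a ∩ lineEdge slope x' a') ≤ 1 := by
  refine card_le_one.2 fun v hv w hw ↦ by_contra fun hvw ↦ h ?_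
  simp only [mem_inter, mem_lineEdge] at hv hw
  have hpart : v.1 ≠ w.1 := fun h ↦ hvw (Prod.ext h (by rw [hv.1, hw.1, h]))
  obtain ⟨rfl, rfl⟩ := lineEdge_parameters_unique hslope hpart
    (hv.1.symm.trans hv.2) (hw.1.symm.trans hw.2)
  rfl

/-- The hypergraph of all `lineEdge slope x a` with base point `x ∈ X` and direction `a ∈ A`. -/
def lineHypergraph [DecidableEq M] (slope : Fin r → R) (X A : Finset M) :
    Finset (Finset (Fin r × M)) :=
  (X ×ˢ A).image fun e ↦ lineEdge slope e.1 e.2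

lemma mem_lineHypergraph [DecidableEq M] {E : Finset (Fin r × M)} :
    E ∈ lineHypergraph slope X A ↔ ∃ x ∈ X, ∃ a ∈ A, lineEdge slope x a = E := by
  simp [lineHypergraph, and_assoc]

lemma card_lineHypergraph [DecidableEq M] [IsDomain R] [Module.IsTorsionFree R M] (hr : 2 ≤ r)
    (hslope : slope.Injective) : #(lineHypergraph slope X A) = #X * #A := by
  rw [lineHypergraph, card_image_of_injective _ (lineEdge_injective hr hslope), card_product]

/-- The obstruction to rainbow cycles of lines with directions in `D`. The edges of a cycle
visiting the parts `p 0, …, p k` have directions `a 0, …, a k` that satisfy the closing-up relation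
`∑ i, (slope (p (i + 1)) - slope (p i)) • a i = 0`; rigidity says that such directions coincide. -/
def RainbowRigid (slope : Fin r → R) (D : Set M) : Prop :=
  ∀ ⦃k : ℕ⦄ (p : Fin (k + 1) → Fin r) (a : Fin (k + 1) → M), p.Injective → (∀ i, a i ∈ D) →
    ∑ i, (slope (p (finRotate _ i)) - slope (p i)) • a i = 0 → ∀ i, a i = a (Fin.last k)

lemma RainbowRigid.mono {D D' : Set M} (hD : RainbowRigid slope D) (h : D' ⊆ D) :
    RainbowRigid slope D' :=
  fun _ p a hp ha ↦ hD p a hp fun i ↦ h (ha i)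

lemma RainbowRigid.not_hasRainbowCycle [DecidableEq M] (hA : RainbowRigid slope (A : Set M))
    {k : ℕ} (hk : 2 ≤ k) : ¬ HasRainbowCycle (lineHypergraph slope X A) Prod.fst k := by
  rintro ⟨v, E, -, hE, hEH, hvE, hpart⟩
  obtain ⟨k, rfl⟩ : ∃ l, k = l + 1 := ⟨k - 1, by lia⟩
  choose x _ a ha hxa using fun i ↦ mem_lineHypergraph.1 (hEH i)
  have start (i) : (v i).2 = x i + slope (v i).1 • a i :=
    mem_lineEdge.1 (hxa i ▸ (hvE i).1)
  have finish (i) : (v (finRotate _ i)).2 = x i + slope (v (finRotate _ i)).1 • a i :=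
    mem_lineEdge.1 (hxa i ▸ (hvE i).2)
  have closing : ∑ i, (slope (v (finRotate _ i)).1 - slope (v i).1) • a i = 0 := calc
    _ = ∑ i, ((v (finRotate _ i)).2 - (v i).2) := by
      refine sum_congr rfl fun i _ ↦ ?_
      rw [start i, finish i, add_sub_add_left_eq_sub, sub_smul]
    _ = 0 := by
      rw [sum_sub_distrib, sub_eq_zero]
      exact Equiv.sum_comp (finRotate (k + 1)) fun i ↦ (v i).2
  have parallel := hA _ a hpart ha closing
  have hx01 : x 0 = x (finRotate _ 0) := by
    have h := (finish 0).symm.trans (start (finRotate _ 0))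
    rw [parallel 0, parallel (finRotate _ 0)] at h
    exact add_right_cancel h
  have hE01 : E 0 = E (finRotate _ 0) := by
    rw [← hxa, ← hxa, hx01, parallel 0, parallel (finRotate _ 0)]
  have h01 := congrArg Fin.val (hE hE01)
  rw [coe_finRotate_of_ne_last (by simp [Fin.ext_iff]; lia)] at h01
  simp at h01

lemma RainbowRigid.isRainbowFree [DecidableEq M] [IsDomain R] [Module.IsTorsionFree R M]
    (hA : RainbowRigid slope (A : Set M)) (hslope : slope.Injective) :
    IsRainbowFree (lineHypergraph slope X A) Prod.fst where
  partite := by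
    intro E hE i
    obtain ⟨x, -, a, -, rfl⟩ := mem_lineHypergraph.1 hE
    exact card_filter_fst_lineEdge i
  linear := by
    intro E hE E' hE' hne
    obtain ⟨x, -, a, -, rfl⟩ := mem_lineHypergraph.1 hE
    obtain ⟨x', -, a', -, rfl⟩ := mem_lineHypergraph.1 hE'
    exact card_lineEdge_inter_le_one hslope hne
  not_hasRainbowCycle _ hk := hA.not_hasRainbowCycle (by lia)

lemma RainbowRigid.exists_fin [IsDomain R] [Module.IsTorsionFree R M] [Infinite M]
    (hA : RainbowRigid slope (A : Set M)) (hr : 2 ≤ r) (hslope : slope.Injective) {S : Finset M}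
    (hS : ∀ x ∈ X, ∀ a ∈ A, ∀ i, x + slope i • a ∈ S) {n : ℕ} (hn : r * #S ≤ n) :
    ∃ (H : Finset (Finset (Fin n))) (part : Fin n → Fin r),
      IsRainbowFree H part ∧ #H = #X * #A := by
  classical
  have : NeZero r := ⟨by lia⟩
  rw [← card_lineHypergraph hr hslope]
  refine (hA.isRainbowFree hslope).exists_fin (S := univ ×ˢ S) ?_ (by simpa using hn)
  intro E hE v hv
  obtain ⟨x, hx, a, ha, rfl⟩ := mem_lineHypergraph.1 hE
  simp [mem_lineEdge.1 hv, hS x hx a ha]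

end LineHypergraph

section Paraboloid

/-- The point `(b, b ⬝ᵥ b)` of the paraboloid over `b`. -/
def toParaboloid {κ R : Type*} [Fintype κ] [CommRing R] (b : κ → R) : (κ → R) × R :=
  (b, b ⬝ᵥ b)

lemma toParaboloid_injective {κ R : Type*} [Fintype κ] [CommRing R] :
    Function.Injective (toParaboloid : (κ → R) → (κ → R) × R) :=
  fun _ _ h ↦ congrArg Prod.fst h

-- The relations give `∑ i, w i * ‖y i - y i₀‖ ^ 2 = 0`, a sum of nonnegative terms.
lemma eq_of_sum_smul_toParaboloid_eq_zero {ι κ R : Type*} [Fintype ι] [Fintype κ] [CommRing R]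
    [LinearOrder R] [IsStrictOrderedRing R] {w : ι → R} {y : ι → κ → R} {i₀ : ι}
    (hw : ∀ i ≠ i₀, 0 < w i) (hw0 : ∑ i, w i = 0) (hy : ∑ i, w i • toParaboloid (y i) = 0)
    (i : ι) : y i = y i₀ := by
  have hlin : ∑ i, w i • y i = 0 := by
    simpa [toParaboloid, Prod.fst_sum] using congrArg Prod.fst hy
  have hquad : ∑ i, w i * (y i ⬝ᵥ y i) = 0 := by
    simpa [toParaboloid, Prod.snd_sum] using congrArg Prod.snd hy
  have hdist : ∑ i, w i * ((y i - y i₀) ⬝ᵥ (y i - y i₀)) = 0 := calc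
    _ = ∑ i, w i * (y i ⬝ᵥ y i) - 2 * ((∑ i, w i • y i) ⬝ᵥ y i₀)
        + (∑ i, w i) * (y i₀ ⬝ᵥ y i₀) := by
      rw [sum_dotProduct, mul_sum, sum_mul, ← sum_sub_distrib, ← sum_add_distrib]
      refine sum_congr rfl fun i _ ↦ ?_
      rw [sub_dotProduct, dotProduct_sub, dotProduct_sub, smul_dotProduct, smul_eq_mul,
        dotProduct_comm (y i₀) (y i)]
      ring
    _ = 0 := by rw [hquad, hlin, hw0]; simp
  have hnonneg (i) : 0 ≤ (y i - y i₀) ⬝ᵥ (y i - y i₀) :=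
    sum_nonneg fun j _ ↦ mul_self_nonneg _
  obtain rfl | hi := eq_or_ne i i₀
  · rfl
  have hterm := (sum_eq_zero_iff_of_nonneg fun i _ ↦ by
    obtain rfl | hi := eq_or_ne i i₀
    · simp
    · exact mul_nonneg (hw i hi).le (hnonneg i)).1 hdist i (mem_univ i)
  exact sub_eq_zero.1 (dotProduct_self_eq_zero.1 ((mul_eq_zero.1 hterm).resolve_left (hw i hi).ne'))

-- The points `x` below include arbitrarily large grids: let `x (q i)` range over the `i`-th of
-- consecutive intervals of length `N`.
lemma eq_zero_of_eval_eq_zero_of_strictMono {σ : Type*} [Finite σ] {k : ℕ} {q : Fin k → σ}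
    (hq : q.Injective) {P : MvPolynomial σ ℤ}
    (h : ∀ x : σ → ℤ, StrictMono (x ∘ q) → MvPolynomial.eval x P = 0) : P = 0 := by
  let N := P.totalDegree + 1
  let rank : σ → ℕ := Function.extend q (fun i ↦ i) 0
  have hrank (i) : rank (q i) = i := hq.extend_apply ..
  refine MvPolynomial.eq_zero_of_eval_zero_at_prod_finset P
    (fun j ↦ Ico (rank j * N : ℤ) (rank j * N + N)) (fun j ↦ ?_) fun x hx ↦ h x fun i i' hii' ↦ ?_
  · simpa [N, Nat.lt_succ_iff] using P.degreeOf_le_totalDegree j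
  · have hi := (mem_Ico.1 (hx (q i))).2
    have hi' := (mem_Ico.1 (hx (q i'))).1
    rw [hrank] at hi hi'
    have hle : ((i : ℤ) + 1) * N ≤ i' * N := by gcongr; exact_mod_cast hii'
    simp only [Function.comp_apply]
    linarith

lemma rainbowRigid_X_range_toParaboloid {r : ℕ} {κ : Type*} [Fintype κ] :
    RainbowRigid (MvPolynomial.X : Fin r → MvPolynomial (Fin r) ℤ)
      (Set.range (toParaboloid (κ := κ) (R := MvPolynomial (Fin r) ℤ))) := by
  intro k p a hp ha hclosing i
  choose b hb using ha
  obtain rfl : (fun i ↦ toParaboloid (b i)) = a := funext hb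
  refine congrArg toParaboloid (funext fun j ↦ sub_eq_zero.1 ?_)
  refine eq_zero_of_eval_eq_zero_of_strictMono hp fun x hx ↦ ?_
  rw [map_sub, sub_eq_zero]
  let y (i : Fin (k + 1)) (j : κ) : ℤ := MvPolynomial.eval x (b i j)
  let w (i : Fin (k + 1)) : ℤ := x (p (finRotate _ i)) - x (p i)
  suffices hy : y i = y (Fin.last k) from congrFun hy j
  refine eq_of_sum_smul_toParaboloid_eq_zero (w := w) (fun i hi ↦ ?_) ?_ ?_ i
  · refine sub_pos.2 (hx ?_)
    rw [Fin.lt_def, coe_finRotate_of_ne_last hi]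
    lia
  · rw [sum_sub_distrib, sub_eq_zero]
    exact Equiv.sum_comp (finRotate (k + 1)) fun i ↦ x (p i)
  · have hlin (j) := congrArg (MvPolynomial.eval x) (congrFun (congrArg Prod.fst hclosing) j)
    have hquad := congrArg (MvPolynomial.eval x) (congrArg Prod.snd hclosing)
    refine Prod.ext (funext fun j ↦ ?_) ?_
    · simpa [toParaboloid, Prod.fst_sum, w, y] using hlin j
    · simpa [toParaboloid, Prod.snd_sum, w, y, dotProduct] using hquad

end Paraboloid

section CoeffBox

open scoped Pointwise

variable {σ : Type*} {S T : Finset (σ →₀ ℕ)} {m m' : ℕ} {p q : MvPolynomial σ ℤ}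

/-- The polynomials with all exponents in `S` and all coefficients in `{0, …, m}`. -/
noncomputable def coeffBox (S : Finset (σ →₀ ℕ)) (m : ℕ) : Finset (MvPolynomial σ ℤ) :=
  (S.finsupp fun _ ↦ Icc 0 (m : ℤ)).map AddMonoidAlgebra.coeffEquiv.symm.toEmbedding

lemma card_coeffBox : #(coeffBox S m) = (m + 1) ^ #S := by
  simp [coeffBox]

lemma mem_coeffBox :
    p ∈ coeffBox S m ↔ p.support ⊆ S ∧ ∀ s, 0 ≤ p.coeff s ∧ p.coeff s ≤ m := by
  have hmem : p ∈ coeffBox S m ↔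
      p.support ⊆ S ∧ ∀ s ∈ S, 0 ≤ p.coeff s ∧ p.coeff s ≤ m := by
    simp only [coeffBox, mem_map_equiv, mem_finsupp_iff, mem_Icc]
    rfl
  rw [hmem]
  refine and_congr_right fun hS ↦ ⟨fun h s ↦ ?_, fun h s _ ↦ h s⟩
  by_cases hs : s ∈ S
  · exact h s hs
  · simp [MvPolynomial.notMem_support_iff.1 fun hsp ↦ hs (hS hsp)]

lemma coeffBox_mono (hST : S ⊆ T) (hm : m ≤ m') : coeffBox S m ⊆ coeffBox T m' := by
  intro p hp
  rw [mem_coeffBox] at hp ⊢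
  exact ⟨hp.1.trans hST, fun s ↦ ⟨(hp.2 s).1, (hp.2 s).2.trans (by exact_mod_cast hm)⟩⟩

lemma add_mem_coeffBox (hp : p ∈ coeffBox S m) (hq : q ∈ coeffBox S m') :
    p + q ∈ coeffBox S (m + m') := by
  classical
  rw [mem_coeffBox] at hp hq ⊢
  refine ⟨MvPolynomial.support_add.trans (union_subset hp.1 hq.1), fun s ↦ ?_⟩
  have := hp.2 s
  have := hq.2 s
  rw [MvPolynomial.coeff_add]
  lia

lemma zero_mem_coeffBox : (0 : MvPolynomial σ ℤ) ∈ coeffBox S 0 := by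
  simp [mem_coeffBox]

lemma sum_mem_coeffBox {κ : Type*} {s : Finset κ} {f : κ → MvPolynomial σ ℤ}
    (hf : ∀ j ∈ s, f j ∈ coeffBox S m) : ∑ j ∈ s, f j ∈ coeffBox S (#s * m) := by
  classical
  induction s using Finset.induction_on with
  | empty => simpa using zero_mem_coeffBox
  | insert j s hj ih =>
    rw [sum_insert hj, card_insert_of_notMem hj, add_mul, one_mul, add_comm]
    exact add_mem_coeffBox (hf j (mem_insert_self j s)) (ih fun i hi ↦ hf i (mem_insert_of_mem hi))

lemma mul_mem_coeffBox [DecidableEq σ] (hp : p ∈ coeffBox S m) (hq : q ∈ coeffBox T m') :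
    p * q ∈ coeffBox (S + T) (#S * (m * m')) := by
  rw [mem_coeffBox] at hp hq ⊢
  refine ⟨(MvPolynomial.support_mul p q).trans (add_subset_add hp.1 hq.1), fun s ↦ ?_⟩
  have hcoeff : (p * q).coeff s =
      ∑ t ∈ p.support, if t ≤ s then p.coeff t * q.coeff (s - t) else 0 := by
    conv_lhs => rw [← p.support_sum_monomial_coeff, sum_mul, MvPolynomial.coeff_sum]
    simp only [MvPolynomial.coeff_monomial_mul']
  have hterm (t) : 0 ≤ (if t ≤ s then p.coeff t * q.coeff (s - t) else 0) ∧
      (if t ≤ s then p.coeff t * q.coeff (s - t) else 0) ≤ (m * m' : ℤ) := by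
    obtain ⟨hp0, hpm⟩ := hp.2 t
    obtain ⟨hq0, hqm⟩ := hq.2 (s - t)
    split_ifs
    · exact ⟨by positivity, by gcongr⟩
    · exact ⟨le_rfl, by positivity⟩
  rw [hcoeff]
  refine ⟨sum_nonneg fun t _ ↦ (hterm t).1, ?_⟩
  refine (sum_le_card_nsmul _ _ _ fun t _ ↦ (hterm t).2).trans ?_
  rw [nsmul_eq_mul]
  push_cast
  gcongr
  exact hp.1

variable [Fintype σ] {d e : ℕ}

/-- The exponents of the monomials of degree less than `d` in each variable. -/
noncomputable def expCube (σ : Type*) [Fintype σ] (d : ℕ) : Finset (σ →₀ ℕ) :=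
  univ.finsupp fun _ ↦ range d

lemma mem_expCube {s : σ →₀ ℕ} : s ∈ expCube σ d ↔ ∀ i, s i < d := by
  simp [expCube, mem_finsupp_iff]

lemma card_expCube : #(expCube σ d) = d ^ Fintype.card σ := by
  simp [expCube]

lemma expCube_mono (h : d ≤ e) : expCube σ d ⊆ expCube σ e :=
  fun _ hs ↦ mem_expCube.2 fun i ↦ (mem_expCube.1 hs i).trans_le h

lemma mul_self_mem_coeffBox_expCube (hp : p ∈ coeffBox (expCube σ d) m) :
    p * p ∈ coeffBox (expCube σ (2 * d)) (d ^ Fintype.card σ * m ^ 2) := by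
  classical
  refine coeffBox_mono (add_subset_iff.2 fun s hs t ht ↦ mem_expCube.2 fun i ↦ ?_)
    (by rw [card_expCube, sq]) (mul_mem_coeffBox hp hp)
  have := mem_expCube.1 hs i
  have := mem_expCube.1 ht i
  rw [Finsupp.add_apply]
  lia

lemma dotProduct_self_mem_coeffBox_expCube {κ : Type*} [Fintype κ] {b : κ → MvPolynomial σ ℤ}
    (hb : ∀ j, b j ∈ coeffBox (expCube σ d) m) :
    b ⬝ᵥ b ∈ coeffBox (expCube σ (2 * d))
      (Fintype.card κ * (d ^ Fintype.card σ * m ^ 2)) :=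
  sum_mem_coeffBox fun j _ ↦ mul_self_mem_coeffBox_expCube (hb j)

lemma X_mul_mem_coeffBox_expCube (i : σ) (hp : p ∈ coeffBox (expCube σ d) m) :
    MvPolynomial.X i * p ∈ coeffBox (expCube σ (d + 1)) m := by
  classical
  have hX : MvPolynomial.X i ∈ coeffBox {Finsupp.single i 1} 1 := by
    simp only [mem_coeffBox, MvPolynomial.support_X, subset_rfl, MvPolynomial.coeff_X, true_and]
    intro s
    split_ifs <;> simp
  refine coeffBox_mono (add_subset_iff.2 fun s hs t ht ↦ mem_expCube.2 fun j ↦ ?_)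
    (by simp) (mul_mem_coeffBox hX hp)
  have := mem_expCube.1 ht j
  rw [mem_singleton.1 hs, Finsupp.add_apply, Finsupp.single_apply]
  split_ifs <;> lia

open scoped Classical in
/-- The pairs `(b, c)` where the entries of `b` have degree less than `d` in each variable and
coefficients in `{0, …, m}`, and `c` has degree less than `2 * d` in each variable and coefficients
in `{0, …, m'}`. The doubled degree makes room for the points of the paraboloid over small `b`. -/
noncomputable def paraboloidBox (σ κ : Type*) [Fintype σ] [Fintype κ] (d m m' : ℕ) :
    Finset ((κ → MvPolynomial σ ℤ) × MvPolynomial σ ℤ) :=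
  Fintype.piFinset (fun _ ↦ coeffBox (expCube σ d) m) ×ˢ coeffBox (expCube σ (2 * d)) m'

variable {κ : Type*} [Fintype κ]

lemma mem_paraboloidBox {x : (κ → MvPolynomial σ ℤ) × MvPolynomial σ ℤ} :
    x ∈ paraboloidBox σ κ d m m' ↔
      (∀ j, x.1 j ∈ coeffBox (expCube σ d) m) ∧ x.2 ∈ coeffBox (expCube σ (2 * d)) m' := by
  simp [paraboloidBox]

lemma card_paraboloidBox : #(paraboloidBox σ κ d m m') =
    (m + 1) ^ (d ^ Fintype.card σ * Fintype.card κ) * (m' + 1) ^ (2 * d) ^ Fintype.card σ := by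
  simp [paraboloidBox, card_coeffBox, card_expCube, pow_mul]

lemma add_X_smul_toParaboloid_mem_paraboloidBox {x : (κ → MvPolynomial σ ℤ) × MvPolynomial σ ℤ}
    (hx : x ∈ paraboloidBox σ κ (d + 1) m m') {b : κ → MvPolynomial σ ℤ}
    (hb : ∀ j, b j ∈ coeffBox (expCube σ d) e) (i : σ) :
    x + (MvPolynomial.X i : MvPolynomial σ ℤ) • toParaboloid b ∈ paraboloidBox σ κ (d + 1) (m + e)
      (m' + Fintype.card κ * (d ^ Fintype.card σ * e ^ 2)) := by
  rw [mem_paraboloidBox] at hx ⊢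
  have hquad := X_mul_mem_coeffBox_expCube i (dotProduct_self_mem_coeffBox_expCube hb)
  exact ⟨fun j ↦ add_mem_coeffBox (hx.1 j) (X_mul_mem_coeffBox_expCube i (hb j)),
    add_mem_coeffBox hx.2 (coeffBox_mono (expCube_mono (by lia)) le_rfl hquad)⟩

end CoeffBox

section Asymptotics

open Filter Topology

lemma eventually_exists_natCast_mul_le_and_rpow_lt {t : ℝ} {w : ℕ} (ht : t < w) {C : ℝ}
    (hC : 0 < C) : ∀ᶠ y : ℝ in atTop, ∃ m : ℕ, 1 ≤ m ∧ C * m ≤ y ∧ y ^ t < (m : ℝ) ^ w := by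
  filter_upwards [eventually_ge_atTop (2 * C),
    (tendsto_rpow_atTop (sub_pos.2 ht)).eventually_gt_atTop ((2 * C) ^ w)] with y hyC hyw
  have hy : 0 < y := by linarith
  have htwo : 2 ≤ y / C := (le_div_iff₀ hC).2 hyC
  have hhalf : y / (2 * C) ≤ ⌊y / C⌋₊ := by
    have : y / (2 * C) = y / C / 2 := by field_simp
    linarith [Nat.lt_floor_add_one (y / C)]
  refine ⟨⌊y / C⌋₊, Nat.le_floor (by norm_num; linarith), ?_, ?_⟩
  · rw [mul_comm, ← le_div_iff₀ hC]
    exact Nat.floor_le (by positivity)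
  · calc y ^ t < (y / (2 * C)) ^ w := by
          rw [div_pow, lt_div_iff₀ (by positivity)]
          calc y ^ t * (2 * C) ^ w < y ^ t * y ^ (w - t) := by gcongr
            _ = y ^ w := by rw [← Real.rpow_add hy, add_sub_cancel, Real.rpow_natCast]
      _ ≤ (⌊y / C⌋₊ : ℝ) ^ w := by gcongr

lemma eventually_exists_mul_pow_le_and_rpow_lt {s : ℝ} {u w : ℕ} (hu : u ≠ 0) (hs : u * s < w)
    {C : ℕ} (hC : 0 < C) :
    ∀ᶠ n : ℕ in atTop, ∃ m : ℕ, 1 ≤ m ∧ (C * m) ^ u ≤ n ∧ (n : ℝ) ^ s < (m : ℝ) ^ w := by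
  have hroot : Tendsto (fun n : ℕ ↦ (n : ℝ) ^ (u : ℝ)⁻¹) atTop atTop :=
    (tendsto_rpow_atTop (by positivity)).comp tendsto_natCast_atTop_atTop
  filter_upwards [hroot.eventually
    (eventually_exists_natCast_mul_le_and_rpow_lt hs (Nat.cast_pos.2 hC))] with n ⟨m, hm, hle, hlt⟩
  refine ⟨m, hm, ?_, ?_⟩
  · have := pow_le_pow_left₀ (by positivity) hle u
    rw [Real.rpow_inv_natCast_pow n.cast_nonneg hu] at this
    exact_mod_cast this
  · rwa [← Real.rpow_mul n.cast_nonneg, inv_mul_cancel_left₀ (by exact_mod_cast hu)] at hlt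

/-- The construction has on the order of `m ^ vertexExponent r d` vertices when its polynomials have
degree less than `d` in each of `r` variables and coefficients at most `m`: the first summand counts
the coefficients of `d` polynomials of degree at most `d`, the second one those of a quadratic
polynomial in them, weighted by `2` as they are of size `m ^ 2`. -/
def vertexExponent (r d : ℕ) : ℕ := (d + 1) ^ r * d + 2 * (2 * (d + 1)) ^ r

lemma vertexExponent_ne_zero (r d : ℕ) : vertexExponent r d ≠ 0 := by
  rw [vertexExponent]
  positivity

lemma exists_one_sub_mul_vertexExponent_lt (r : ℕ) {ε : ℝ} (hε : 0 < ε) :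
    ∃ d : ℕ, (1 - ε) * vertexExponent r d < d ^ r * d := by
  have hlim : Tendsto (fun d : ℕ ↦ ((d : ℝ) / (d + 1)) ^ r * (d / (d + 2 ^ (r + 1))))
      atTop (𝓝 1) := by
    simpa using ((tendsto_natCast_div_add_atTop (1 : ℝ)).pow r).mul
      (tendsto_natCast_div_add_atTop ((2 : ℝ) ^ (r + 1)))
  obtain ⟨d, hd⟩ := (hlim.eventually_const_lt (sub_lt_self 1 hε)).exists
  refine ⟨d, ?_⟩
  have hfactor : (vertexExponent r d : ℝ) = (d + 1) ^ r * (d + 2 ^ (r + 1)) := by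
    rw [vertexExponent, mul_pow]
    push_cast
    ring
  rw [div_pow, div_mul_div_comm, lt_div_iff₀ (by positivity)] at hd
  rwa [hfactor]

end Asymptotics

lemma exists_isRainbowFree_card_eq {r : ℕ} (hr : 2 ≤ r) (d m : ℕ) {n : ℕ}
    (hn : r * ((2 * m + 1) ^ ((d + 1) ^ r * d) *
      ((d ^ (r + 1) + 1) * m ^ 2 + 1) ^ (2 * (d + 1)) ^ r) ≤ n) :
    ∃ (H : Finset (Finset (Fin n))) (part : Fin n → Fin r), IsRainbowFree H part ∧
      #H = (m + 1) ^ ((d + 1) ^ r * d) * (m ^ 2 + 1) ^ (2 * (d + 1)) ^ r *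
        (m + 1) ^ (d ^ r * d) := by
  classical
  let X := paraboloidBox (Fin r) (Fin d) (d + 1) m (m ^ 2)
  let S := paraboloidBox (Fin r) (Fin d) (d + 1) (2 * m) ((d ^ (r + 1) + 1) * m ^ 2)
  let B : Finset (Fin d → MvPolynomial (Fin r) ℤ) :=
    Fintype.piFinset fun _ ↦ coeffBox (expCube (Fin r) d) m
  let A := B.image toParaboloid
  have hA : RainbowRigid (MvPolynomial.X : Fin r → MvPolynomial (Fin r) ℤ) (SetLike.coe A) :=
    rainbowRigid_X_range_toParaboloid.mono (by
      rw [coe_image]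
      exact Set.image_subset_range _ _)
  have hS : ∀ x ∈ X, ∀ a ∈ A, ∀ i, x + (MvPolynomial.X i : MvPolynomial (Fin r) ℤ) • a ∈ S := by
    intro x hx a ha i
    obtain ⟨b, hb, rfl⟩ := mem_image.1 ha
    convert add_X_smul_toParaboloid_mem_paraboloidBox hx (Fintype.mem_piFinset.1 hb) i using 2
    · ring
    · simp only [Fintype.card_fin]
      ring
  obtain ⟨H, part, hH, hcard⟩ := hA.exists_fin hr MvPolynomial.X_injective hS (n := n)
    (by simpa [S, card_paraboloidBox] using hn)
  refine ⟨H, part, hH, ?_⟩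
  rw [hcard, card_image_of_injective _ toParaboloid_injective]
  simp [X, B, card_paraboloidBox, card_coeffBox, card_expCube, pow_mul]

lemma exists_isRainbowFree_pow_le_card {r : ℕ} (hr : 2 ≤ r) (d : ℕ) {m : ℕ}
    (hm : 1 ≤ m) {n : ℕ} (hn : (3 * r * (d ^ (r + 1) + 2) * m) ^ vertexExponent r d ≤ n) :
    ∃ (H : Finset (Finset (Fin n))) (part : Fin n → Fin r), IsRainbowFree H part ∧
      m ^ (vertexExponent r d + d ^ r * d) ≤ #H := by
  set L := d ^ (r + 1) + 2 with hL
  have hlinear : 2 * m + 1 ≤ 3 * L * m := calc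
    2 * m + 1 ≤ 3 * 1 * m := by lia
    _ ≤ 3 * L * m := by gcongr; lia
  have hquad : (d ^ (r + 1) + 1) * m ^ 2 + 1 ≤ (3 * L * m) ^ 2 := calc
    _ ≤ (d ^ (r + 1) + 1) * m ^ 2 + m ^ 2 := by gcongr; exact Nat.one_le_pow _ _ hm
    _ = L * m ^ 2 := by rw [hL]; ring
    _ ≤ (3 * L) ^ 2 * m ^ 2 := by gcongr; nlinarith
    _ = (3 * L * m) ^ 2 := (mul_pow _ _ _).symm
  have hvertices : r * ((2 * m + 1) ^ ((d + 1) ^ r * d) *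
      ((d ^ (r + 1) + 1) * m ^ 2 + 1) ^ (2 * (d + 1)) ^ r) ≤ n := calc
    _ ≤ r ^ vertexExponent r d * ((3 * L * m) ^ ((d + 1) ^ r * d) *
        ((3 * L * m) ^ 2) ^ (2 * (d + 1)) ^ r) := by
      gcongr
      exact Nat.le_self_pow (vertexExponent_ne_zero r d) r
    _ = (3 * r * L * m) ^ vertexExponent r d := by
      rw [← pow_mul, ← pow_add, ← vertexExponent, ← mul_pow]
      ring
    _ ≤ n := hn
  obtain ⟨H, part, hH, hcard⟩ := exists_isRainbowFree_card_eq hr d m hvertices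
  refine ⟨H, part, hH, ?_⟩
  rw [hcard, vertexExponent, pow_add, pow_add, pow_mul m 2]
  gcongr <;> lia

theorem exists_large_rainbowFree_hypergraph_general (r : ℕ) (hr : 2 ≤ r) (ε : ℝ) (hε : 0 < ε) :
    ∃ N : ℕ, ∀ n : ℕ, N ≤ n →
      ∃ (H : Finset (Finset (Fin n))) (part : Fin n → Fin r),
        IsRainbowFree H part ∧ (n : ℝ) ^ (2 - ε) < #H := by
  obtain ⟨d, hexp⟩ := exists_one_sub_mul_vertexExponent_lt r hε
  have hrate : vertexExponent r d * (2 - ε) < (vertexExponent r d + d ^ r * d : ℕ) := by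
    push_cast
    linarith
  obtain ⟨N, hN⟩ := Filter.eventually_atTop.1 <| eventually_exists_mul_pow_le_and_rpow_lt
    (vertexExponent_ne_zero r d) hrate (C := 3 * r * (d ^ (r + 1) + 2)) (by positivity)
  refine ⟨N, fun n hn ↦ ?_⟩
  obtain ⟨m, hm, hmn, hlt⟩ := hN n hn
  obtain ⟨H, part, hH, hcard⟩ := exists_isRainbowFree_pow_le_card hr d hm hmn
  exact ⟨H, part, hH, hlt.trans_le (by exact_mod_cast hcard)⟩

theorem exists_large_rainbowFree_hypergraph (r : ℕ) (hr : 3 ≤ r) (ε : ℝ) (hε : 0 < ε) :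
    ∃ N : ℕ, ∀ n : ℕ, N ≤ n →
      ∃ (H : Finset (Finset (Fin n))) (part : Fin n → Fin r),
        (∀ A ∈ H, ∀ i : Fin r, (A.filter fun x => part x = i).card = 1) ∧
        (∀ A ∈ H, ∀ B ∈ H, A ≠ B → (A ∩ B).card ≤ 1) ∧
        ¬ HasRainbowCycle H part 3 ∧ ¬ HasRainbowCycle H part 4 ∧
        (n : ℝ) ^ ((2 : ℝ) - ε) < (H.card : ℝ) := by
  obtain ⟨N, hN⟩ := exists_large_rainbowFree_hypergraph_general r (by lia) ε hε
  exact ⟨N, fun n hn ↦ let ⟨H, part, hH, hcard⟩ := hN n hn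
    ⟨H, part, hH.partite, hH.linear, hH.not_hasRainbowCycle 3 (by lia),
      hH.not_hasRainbowCycle 4 (by lia), hcard⟩⟩
end

section
/- For every integer r ≥ 3, every e ∈ {4, 5, 7, 8} and every real ε > 0, there exists N such that for all integers n ≥ N, f_r(n, e(r−2)+3, e) > n^{2−ε}. -/
open Finset

/-!
Consider light rays in `ℤ^D`, that is, particles moving along lines with a common speed. Fixed
times `b i` turn any set of light rays into an `r`-partite hypergraph: the vertices in the part `i`
are the positions at the time `b i`, and each ray is the edge formed by its `r` positions. Among
the rays in a box, a pigeonhole over the possible speeds, as in Behrend's construction, leaves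
almost `n ^ 2` rays on `n` vertices when `D` is large.

Three light rays which meet in pairs pass through a common event, since three null vectors with sum
zero are parallel. Hence the hypergraph is linear and triangle-free. Further patterns of
intersections force polynomial relations between the meeting times: two rays meeting four others do
so at times with equal cross ratios, two rays which each share three neighbours with a third, two of
these being common to all, satisfy a relation found by eliminating velocities, and two rays with a
common neighbour are not coplanar. For generic times the relations hold identically. Most of them
equate products of differences of variables, which can be compared factor by factor, and together
they rule out three explicit subgraphs of the intersection graph.

A set `S` of edges spans at most `#S * (r - 2) + 3` vertices exactly if its excess, the number of
vertices by which it falls short of being disjoint, is at least `2 * #S - 3`. Removing an edge which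
meets the others in at most two parts lowers the excess by at most two, so one may assume that every
edge meets at least three others. With at most eight edges the intersection graph is then
triangle-free. This is impossible for at most five edges; for six edges the graph is `K₃,₃`, and
adding a seventh edge that meets the others in two parts creates one of the three subgraphs; for
seven or eight edges, an excess beyond the bound gives an edge which meets four others, and again
one of the three subgraphs.
-/

/-! ### Triangle-free graphs with few vertices -/

section TriangleFree

variable {P : Type*} {G : SimpleGraph P}

/-- `G` contains a copy of `K₃,₄`, possibly with the edge `u₂v₃` missing, whose two sides are
independent sets. -/
def ContainsK34Minus (G : SimpleGraph P) : Prop :=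
  ∃ (u : Fin 3 → P) (v : Fin 4 → P),
    (Pairwise fun i j ↦ Gᶜ.Adj (u i) (u j)) ∧ (Pairwise fun i j ↦ Gᶜ.Adj (v i) (v j)) ∧
      ∀ i j, i ≠ 2 ∨ j ≠ 3 → G.Adj (u i) (v j)

/-- `G` contains a copy of `K₄,₄`, possibly with some of the edges `u₀v₀`, `u₁v₁`, `u₂v₂` missing,
whose two sides are independent sets. -/
def ContainsK44Minus (G : SimpleGraph P) : Prop :=
  ∃ u v : Fin 4 → P,
    (Pairwise fun i j ↦ Gᶜ.Adj (u i) (u j)) ∧ (Pairwise fun i j ↦ Gᶜ.Adj (v i) (v j)) ∧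
      ∀ i j, i ≠ j ∨ i = 3 → G.Adj (u i) (v j)

/-- `G` contains a `K₂,₄` with sides `u`, `v` together with an edge `ed` such that `e` is joined to
`v₀`, `v₁` and `d` is joined to `v₂`, `v₃`, where the remaining pairs, `u₀d`, `u₁e` and the like,
are not adjacent. -/
def ContainsLinkedK24 (G : SimpleGraph P) : Prop :=
  ∃ (u : Fin 2 → P) (v : Fin 4 → P) (e d : P),
    (Pairwise fun i j ↦ Gᶜ.Adj (u i) (u j)) ∧ (Pairwise fun i j ↦ Gᶜ.Adj (v i) (v j)) ∧
      (∀ i j, G.Adj (u i) (v j)) ∧ (∀ i, Gᶜ.Adj (u i) e ∧ Gᶜ.Adj (u i) d) ∧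
      (G.Adj e (v 0) ∧ G.Adj e (v 1) ∧ Gᶜ.Adj e (v 2) ∧ Gᶜ.Adj e (v 3)) ∧
      (Gᶜ.Adj d (v 0) ∧ Gᶜ.Adj d (v 1) ∧ G.Adj d (v 2) ∧ G.Adj d (v 3)) ∧ G.Adj e d

lemma pairwise_compl_adj_of_isIndepSet {α : Type*} {A : Set P} (hA : G.IsIndepSet A) {u : α → P}
    (hu : Function.Injective u) (huA : ∀ i, u i ∈ A) : Pairwise fun i j ↦ Gᶜ.Adj (u i) (u j) :=
  fun i j hij ↦ (G.compl_adj _ _).2 ⟨hu.ne hij, hA (huA i) (huA j) (hu.ne hij)⟩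

lemma containsK34Minus_of_isIndepSet {A B : Finset P} (hA : G.IsIndepSet A)
    (hB : G.IsIndepSet B) (hA3 : 3 ≤ #A) (hB4 : 4 ≤ #B) {w z : P} (hw : w ∈ A) (hz : z ∈ B)
    (hadj : ∀ a ∈ A, ∀ b ∈ B, a ≠ w ∨ b ≠ z → G.Adj a b) : ContainsK34Minus G := by
  classical
  have hA2 : 1 < #(A.erase w) := by have := card_erase_add_one hw; omega
  have hB3 : 2 < #(B.erase z) := by have := card_erase_add_one hz; omega
  obtain ⟨a₀, ha₀, a₁, ha₁, ha⟩ := one_lt_card.1 hA2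
  obtain ⟨b₀, hb₀, b₁, hb₁, b₂, hb₂, hb₀₁, hb₀₂, hb₁₂⟩ := two_lt_card.1 hB3
  simp only [mem_erase] at ha₀ ha₁ hb₀ hb₁ hb₂
  have hu : ∀ i, ![a₀, a₁, w] i ∈ A := by simp [Fin.forall_fin_succ, *]
  have hv : ∀ j, ![b₀, b₁, b₂, z] j ∈ B := by simp [Fin.forall_fin_succ, *]
  refine ⟨![a₀, a₁, w], ![b₀, b₁, b₂, z], pairwise_compl_adj_of_isIndepSet hA ?_ hu,
    pairwise_compl_adj_of_isIndepSet hB ?_ hv, fun i j hij ↦ hadj _ (hu i) _ (hv j) ?_⟩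
  · simp [Function.Injective, Fin.forall_fin_succ, *, Ne.symm]
  · simp [Function.Injective, Fin.forall_fin_succ, *, Ne.symm]
  · revert i j
    simp [Fin.forall_fin_succ, *]

lemma containsK44Minus_of_isIndepSet {A B : Finset P} (hA : G.IsIndepSet A)
    (hB : G.IsIndepSet B) (hA4 : #A = 4) (hB4 : #B = 4) {p : P} (hp : p ∈ A)
    (hpB : ∀ b ∈ B, G.Adj p b)
    (hAB : ∀ a ∈ A, ∀ b ∈ B, ∀ b' ∈ B, ¬ G.Adj a b → ¬ G.Adj a b' → b = b')
    (hBA : ∀ b ∈ B, ∀ a ∈ A, ∀ a' ∈ A, ¬ G.Adj b a → ¬ G.Adj b a' → a = a') :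
    ContainsK44Minus G := by
  classical
  obtain ⟨u, hu⟩ := exists_equiv_extend_of_card_eq (α := Fin 4) (t := A) (s := {3})
    (f := fun _ ↦ p) (by simp [hA4]) (by simpa using hp) (by simp)
  have hu3 : (u 3 : P) = p := hu 3 (by simp)
  let s : Finset (Fin 4) := {i | ∃ b ∈ B, ¬ G.Adj (u i) b}
  have hmissed : ∀ i ∈ s, ∃ b ∈ B, ¬ G.Adj (u i) b := fun i hi ↦ (mem_filter.1 hi).2
  have _ : Nonempty P := ⟨p⟩
  choose! f hfB hf using hmissed
  obtain ⟨v, hv⟩ := exists_equiv_extend_of_card_eq (α := Fin 4) (t := B) (s := s) (f := f)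
    (by simp [hB4]) (image_subset_iff.2 hfB) fun i hi j hj hij ↦ u.injective <| Subtype.ext <|
      hBA (f i) (hfB i hi) _ (u i).2 _ (u j).2 (fun h ↦ hf i hi h.symm)
        fun h ↦ hf j hj (hij ▸ h.symm)
  refine ⟨fun i ↦ u i, fun i ↦ v i,
    pairwise_compl_adj_of_isIndepSet hA (Subtype.val_injective.comp u.injective) fun i ↦ (u i).2,
    pairwise_compl_adj_of_isIndepSet hB (Subtype.val_injective.comp v.injective) fun i ↦ (v i).2,
    fun i j hij ↦ ?_⟩
  by_cases hi3 : i = 3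
  · simpa only [hi3, hu3] using hpB _ (v j).2
  by_contra hnadj
  have his : i ∈ s := mem_filter.2 ⟨mem_univ i, v j, (v j).2, hnadj⟩
  have hvij := hAB _ (u i).2 _ (hfB i his) _ (v j).2 (hf i his) hnadj
  rw [← hv i his, SetCoe.ext_iff, v.injective.eq_iff] at hvij
  exact hij.elim (· hvij) hi3

variable {S : Finset P} {p q s : P} {d : ℕ}

lemma not_adj_of_cliqueFreeOn (hT : G.CliqueFreeOn S 3) (hp : p ∈ S) (hq : q ∈ S) (hs : s ∈ S)
    (hpq : G.Adj p q) (hqs : G.Adj q s) : ¬ G.Adj p s := by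
  classical
  refine fun hps ↦ hT (t := {p, q, s}) ?_ (SimpleGraph.is3Clique_triple_iff.2 ⟨hpq, hps, hqs⟩)
  simp [Set.insert_subset_iff, hp, hq, hs]

variable [DecidableRel G.Adj]

/-- The neighbours of `p` lying in `S`. -/
def nbrsIn (G : SimpleGraph P) [DecidableRel G.Adj] (S : Finset P) (p : P) : Finset P :=
  {q ∈ S | G.Adj p q}

lemma mem_nbrsIn : q ∈ nbrsIn G S p ↔ q ∈ S ∧ G.Adj p q := mem_filter

lemma nbrsIn_subset : nbrsIn G S p ⊆ S := filter_subset _ _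

lemma isIndepSet_nbrsIn (hT : G.CliqueFreeOn S 3) (hp : p ∈ S) :
    G.IsIndepSet (nbrsIn G S p : Set P) := by
  intro q hq s hs _
  rw [mem_coe, mem_nbrsIn] at hq hs
  exact not_adj_of_cliqueFreeOn hT hq.1 hp hs.1 hq.2.symm hs.2

lemma nbrsIn_subset_sdiff_nbrsIn [DecidableEq P] (hT : G.CliqueFreeOn S 3)
    (hp : p ∈ S) (hq : q ∈ nbrsIn G S p) :
    nbrsIn G S q ⊆ S \ nbrsIn G S p := by
  intro s hs
  rw [mem_nbrsIn] at hq hs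
  rw [mem_sdiff, mem_nbrsIn]
  exact ⟨hs.1, fun hps ↦ not_adj_of_cliqueFreeOn hT hp hq.1 hs.1 hq.2 hs.2 hps.2⟩

lemma card_nbrsIn_add_le_card (hT : G.CliqueFreeOn S 3) (hd : ∀ p ∈ S, d ≤ #(nbrsIn G S p))
    (hp : p ∈ S) : #(nbrsIn G S p) + d ≤ #S := by
  classical
  obtain hN | ⟨q, hq⟩ := (nbrsIn G S p).eq_empty_or_nonempty
  · have := hd p hp
    simp_all
  have hle := card_le_card (nbrsIn_subset_sdiff_nbrsIn hT hp hq)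
  have := card_sdiff_add_card_eq_card (nbrsIn_subset (G := G) (S := S) (p := p))
  have := hd q (nbrsIn_subset hq)
  omega

lemma nbrsIn_eq_sdiff_nbrsIn [DecidableEq P] (hT : G.CliqueFreeOn S 3)
    (hd : ∀ p ∈ S, d ≤ #(nbrsIn G S p)) (hp : p ∈ S) (hcard : #S ≤ #(nbrsIn G S p) + d)
    (hq : q ∈ nbrsIn G S p) :
    nbrsIn G S q = S \ nbrsIn G S p := by
  refine eq_of_subset_of_card_le (nbrsIn_subset_sdiff_nbrsIn hT hp hq) ?_
  have := card_sdiff_add_card_eq_card (nbrsIn_subset (G := G) (S := S) (p := p))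
  have := hd q (nbrsIn_subset hq)
  omega

lemma containsK34Minus_of_four_le_card_nbrsIn (hT : G.CliqueFreeOn S 3)
    (hd : ∀ p ∈ S, 3 ≤ #(nbrsIn G S p)) (hp : p ∈ S) (hp4 : 4 ≤ #(nbrsIn G S p))
    (hcard : #S ≤ #(nbrsIn G S p) + 3) : ContainsK34Minus G := by
  classical
  have hN := fun q hq ↦ nbrsIn_eq_sdiff_nbrsIn (q := q) hT hd hp hcard hq
  obtain ⟨q, hq⟩ := card_pos.1 (by omega : 0 < #(nbrsIn G S p))
  have hqS := nbrsIn_subset hq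
  refine containsK34Minus_of_isIndepSet (isIndepSet_nbrsIn hT hqS) (isIndepSet_nbrsIn hT hp)
    (hd q hqS) hp4 (mem_nbrsIn.2 ⟨hp, (mem_nbrsIn.1 hq).2.symm⟩) hq fun a ha b hb _ ↦ ?_
  rw [hN q hq, ← hN b hb] at ha
  exact (mem_nbrsIn.1 ha).2.symm

lemma exists_completeBipartite_of_card_eq_six [DecidableEq P] (hT : G.CliqueFreeOn S 3)
    (hd : ∀ p ∈ S, 3 ≤ #(nbrsIn G S p)) (hS : #S = 6) :
    ∃ A ⊆ S, #A = 3 ∧ #(S \ A) = 3 ∧ G.IsIndepSet (A : Set P) ∧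
      G.IsIndepSet (↑(S \ A) : Set P) ∧ ∀ a ∈ A, ∀ b ∈ S \ A, G.Adj a b := by
  obtain ⟨p, hp⟩ := card_pos.1 (by omega : 0 < #S)
  have h3 := hd p hp
  have hN := fun q hq ↦ nbrsIn_eq_sdiff_nbrsIn (q := q) hT hd hp (by omega) hq
  obtain ⟨q, hq⟩ := card_pos.1 (by omega : 0 < #(nbrsIn G S p))
  have hcard := card_sdiff_add_card_eq_card (nbrsIn_subset (G := G) (S := S) (p := p))
  have hq3 := hd q (nbrsIn_subset hq)
  have hq_indep := isIndepSet_nbrsIn hT (nbrsIn_subset hq)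
  rw [hN q hq] at hq3 hq_indep
  refine ⟨nbrsIn G S p, nbrsIn_subset, by omega, by omega, isIndepSet_nbrsIn hT hp, hq_indep,
    fun a ha b hb ↦ ?_⟩
  rw [← hN a ha] at hb
  exact (mem_nbrsIn.1 hb).2

lemma eq_of_not_adj_of_not_adj {T : Finset P} {a b : P} (hsub : nbrsIn G S q ⊆ T)
    (hcard : #T ≤ #(nbrsIn G S q) + 1) (ha : a ∈ T) (hb : b ∈ T) (hqa : ¬ G.Adj q a)
    (hqb : ¬ G.Adj q b) : a = b := by
  classical
  by_contra hab
  have hle := card_le_card (show nbrsIn G S q ⊆ (T.erase a).erase b by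
    intro s hs
    have := (mem_nbrsIn.1 hs).2
    exact mem_erase.2 ⟨fun h ↦ hqb (h ▸ this), mem_erase.2 ⟨fun h ↦ hqa (h ▸ this), hsub hs⟩⟩)
  have hb' := card_erase_add_one (mem_erase.2 ⟨Ne.symm hab, hb⟩)
  have ha' := card_erase_add_one ha
  omega

lemma eq_of_not_adj_of_mem_nbrsIn [DecidableEq P] (hT : G.CliqueFreeOn S 3)
    (hd : ∀ p ∈ S, 3 ≤ #(nbrsIn G S p)) (hp : p ∈ S) (hcard : #(S \ nbrsIn G S p) = 4) :
    ∀ v ∈ nbrsIn G S p, ∀ a ∈ S \ nbrsIn G S p, ∀ b ∈ S \ nbrsIn G S p,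
      ¬ G.Adj v a → ¬ G.Adj v b → a = b := fun v hv _ ha _ hb ↦
  eq_of_not_adj_of_not_adj (nbrsIn_subset_sdiff_nbrsIn hT hp hv)
    (by rw [hcard]; exact Nat.succ_le_succ (hd v (nbrsIn_subset hv))) ha hb

lemma containsK44Minus_of_isIndepSet_sdiff [DecidableEq P] (hT : G.CliqueFreeOn S 3)
    (hd : ∀ p ∈ S, 3 ≤ #(nbrsIn G S p)) (hp : p ∈ S) (hp4 : #(nbrsIn G S p) = 4)
    (hcard : #(S \ nbrsIn G S p) = 4)
    (hindep : G.IsIndepSet (↑(S \ nbrsIn G S p) : Set P)) : ContainsK44Minus G := by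
  have hsub : ∀ w ∈ S \ nbrsIn G S p, nbrsIn G S w ⊆ nbrsIn G S p := by
    intro w hw q hq
    obtain ⟨hqS, hwq⟩ := mem_nbrsIn.1 hq
    by_contra hqN
    exact hindep hw (mem_sdiff.2 ⟨hqS, hqN⟩) hwq.ne hwq
  refine containsK44Minus_of_isIndepSet hindep (isIndepSet_nbrsIn hT hp) hcard hp4
    (p := p) (by simp [mem_nbrsIn, hp]) (fun b hb ↦ (mem_nbrsIn.1 hb).2)
    (fun w hw a ha b hb ↦ eq_of_not_adj_of_not_adj (hsub w hw) ?_ ha hb)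
    (eq_of_not_adj_of_mem_nbrsIn hT hd hp hcard)
  rw [hp4]
  exact Nat.succ_le_succ (hd w (mem_sdiff.1 hw).1)

lemma nbrsIn_subset_union_filter [DecidableEq P] {w₁ w₂ w₃ : P}
    (hw : S \ nbrsIn G S p ⊆ {p, w₁, w₂, w₃}) (hw₁ : w₁ ∈ S \ nbrsIn G S p) :
    nbrsIn G S w₁ ⊆ {w₂, w₃} ∪ {v ∈ nbrsIn G S p | G.Adj w₁ v} := by
  intro q hq
  obtain ⟨hqS, hq⟩ := mem_nbrsIn.1 hq
  by_cases hqN : q ∈ nbrsIn G S p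
  · exact mem_union_right _ (mem_filter.2 ⟨hqN, hq⟩)
  have hqw := hw (mem_sdiff.2 ⟨hqS, hqN⟩)
  simp only [mem_insert, mem_singleton] at hqw
  obtain rfl | rfl | rfl | rfl := hqw
  · exact absurd (mem_nbrsIn.2 ⟨(mem_sdiff.1 hw₁).1, hq.symm⟩) (mem_sdiff.1 hw₁).2
  · exact absurd rfl hq.ne
  · simp
  · simp

lemma not_adj_and_one_lt_card_filter_adj [DecidableEq P] (hT : G.CliqueFreeOn S 3) {w₁ w₂ w₃ : P}
    (hw : S \ nbrsIn G S p ⊆ {p, w₁, w₂, w₃}) (hw₁ : w₁ ∈ S \ nbrsIn G S p)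
    (h3 : 3 ≤ #(nbrsIn G S w₁)) (hw₃ : w₃ ∈ S) (hNw₃ : ∀ v ∈ nbrsIn G S p, G.Adj v w₃) :
    ¬ G.Adj w₁ w₃ ∧ 1 < #{v ∈ nbrsIn G S p | G.Adj w₁ v} := by
  have hsub := nbrsIn_subset_union_filter hw hw₁
  have hw₁w₃ : ¬ G.Adj w₁ w₃ := by
    have hle := (card_le_card hsub).trans (card_union_le _ _)
    have := card_le_two (a := w₂) (b := w₃)
    obtain ⟨v, hv⟩ := card_pos.1 (by omega : 0 < #{v ∈ nbrsIn G S p | G.Adj w₁ v})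
    obtain ⟨hv, hwv⟩ := mem_filter.1 hv
    exact not_adj_of_cliqueFreeOn hT (mem_sdiff.1 hw₁).1 (nbrsIn_subset hv) hw₃ hwv (hNw₃ v hv)
  have hsub' : nbrsIn G S w₁ ⊆ {w₂} ∪ {v ∈ nbrsIn G S p | G.Adj w₁ v} := by
    intro q hq
    have hqw := hsub hq
    simp only [mem_union, mem_insert, mem_singleton] at hqw ⊢
    obtain (hqw | rfl) | hqw := hqw
    · exact Or.inl hqw
    · exact absurd (mem_nbrsIn.1 hq).2 hw₁w₃
    · exact Or.inr hqw
  have hle := (card_le_card hsub').trans (card_union_le _ _)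
  rw [card_singleton] at hle
  exact ⟨hw₁w₃, by omega⟩

lemma exists_sdiff_nbrsIn_eq [DecidableEq P] (hp : p ∈ S) (hcard : #(S \ nbrsIn G S p) = 4)
    {w₁ w₂ : P} (hw₁ : w₁ ∈ S \ nbrsIn G S p) (hw₂ : w₂ ∈ S \ nbrsIn G S p)
    (hadj : G.Adj w₁ w₂) :
    ∃ w₃, w₃ ≠ p ∧ w₁ ≠ w₃ ∧ w₂ ≠ w₃ ∧ S \ nbrsIn G S p = {p, w₁, w₂, w₃} := by
  have hpw₁ : p ≠ w₁ := by
    rintro rfl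
    exact (mem_sdiff.1 hw₂).2 (mem_nbrsIn.2 ⟨(mem_sdiff.1 hw₂).1, hadj⟩)
  have hpw₂ : p ≠ w₂ := by
    rintro rfl
    exact (mem_sdiff.1 hw₁).2 (mem_nbrsIn.2 ⟨(mem_sdiff.1 hw₁).1, hadj.symm⟩)
  obtain ⟨w₃, hw₃, hw₃not⟩ := exists_mem_notMem_of_card_lt_card
    (card_le_three.trans_lt (by omega) : #{p, w₁, w₂} < #(S \ nbrsIn G S p))
  simp only [mem_insert, mem_singleton, not_or] at hw₃not
  obtain ⟨hw₃p, hw₃₁, hw₃₂⟩ := hw₃not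
  have hpU : p ∈ S \ nbrsIn G S p := by simp [mem_nbrsIn, hp]
  refine ⟨w₃, hw₃p, Ne.symm hw₃₁, Ne.symm hw₃₂, (eq_of_subset_of_card_le ?_ ?_).symm⟩
  · simp only [insert_subset_iff, singleton_subset_iff]
    exact ⟨hpU, hw₁, hw₂, hw₃⟩
  · rw [hcard]
    simp [hpw₁, hpw₂, hadj.ne, Ne.symm hw₃p, Ne.symm hw₃₁, Ne.symm hw₃₂]

/-- Each neighbour of `p` misses one of the adjacent non-neighbours `w₁`, `w₂` of `p`, hence is
joined to the other one and to the remaining non-neighbour. -/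
lemma containsLinkedK24_of_adj [DecidableEq P] (hT : G.CliqueFreeOn S 3)
    (hd : ∀ p ∈ S, 3 ≤ #(nbrsIn G S p)) (hp : p ∈ S) (hcard : #(S \ nbrsIn G S p) = 4)
    {w₁ w₂ : P} (hw₁ : w₁ ∈ S \ nbrsIn G S p) (hw₂ : w₂ ∈ S \ nbrsIn G S p)
    (hadj : G.Adj w₁ w₂) : ContainsLinkedK24 G := by
  obtain ⟨w₃, hw₃p, hw₁₃, hw₂₃, hU⟩ := exists_sdiff_nbrsIn_eq hp hcard hw₁ hw₂ hadj
  have hw₃ : w₃ ∈ S \ nbrsIn G S p := by simp [hU]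
  have hw₁S := (mem_sdiff.1 hw₁).1
  have hw₂S := (mem_sdiff.1 hw₂).1
  have hNw (v) (hv : v ∈ nbrsIn G S p) (h₁ : G.Adj w₁ v) : ¬ G.Adj w₂ v := fun h₂ ↦
    not_adj_of_cliqueFreeOn hT hw₁S (nbrsIn_subset hv) hw₂S h₁ h₂.symm hadj
  have hNw₃ (v) (hv : v ∈ nbrsIn G S p) : G.Adj v w₃ := by
    have hmiss := eq_of_not_adj_of_mem_nbrsIn hT hd hp hcard v hv
    by_contra h
    by_cases h₁ : G.Adj w₁ v
    · exact hw₂₃ (hmiss w₂ hw₂ w₃ hw₃ (fun h' ↦ hNw v hv h₁ h'.symm) h)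
    · exact hw₁₃ (hmiss w₁ hw₁ w₃ hw₃ (fun h' ↦ h₁ h'.symm) h)
  obtain ⟨hw₁w₃, hN₁⟩ := not_adj_and_one_lt_card_filter_adj hT hU.subset hw₁ (hd w₁ hw₁S)
    (mem_sdiff.1 hw₃).1 hNw₃
  obtain ⟨hw₂w₃, hN₂⟩ := not_adj_and_one_lt_card_filter_adj hT (w₁ := w₂) (w₂ := w₁)
    (hU.subset.trans (by grind)) hw₂ (hd w₂ hw₂S) (mem_sdiff.1 hw₃).1 hNw₃
  obtain ⟨v₀, hv₀, v₁, hv₁, hv₀₁⟩ := one_lt_card.1 hN₁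
  obtain ⟨v₂, hv₂, v₃, hv₃, hv₂₃⟩ := one_lt_card.1 hN₂
  have hpU : ∀ w ∈ S \ nbrsIn G S p, ¬ G.Adj p w := by simp +contextual [mem_nbrsIn]
  have hN := isIndepSet_nbrsIn hT hp
  simp only [mem_filter, mem_nbrsIn] at hv₀ hv₁ hv₂ hv₃ hNw hNw₃
  refine ⟨![p, w₃], ![v₀, v₁, v₂, v₃], w₁, w₂, ?_, pairwise_compl_adj_of_isIndepSet hN ?_ ?_,
    ?_, ?_, ?_, ?_, hadj⟩
  all_goals simp [Fin.forall_fin_succ, Pairwise, Function.Injective]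
  all_goals grind [SimpleGraph.Adj.symm]

lemma contains_of_card_eq_eight (hT : G.CliqueFreeOn S 3) (hd : ∀ p ∈ S, 3 ≤ #(nbrsIn G S p))
    (hS : #S = 8) (hp : p ∈ S) (hp4 : 4 ≤ #(nbrsIn G S p)) :
    ContainsK34Minus G ∨ ContainsK44Minus G ∨ ContainsLinkedK24 G := by
  classical
  obtain hp4 | hp5 := hp4.eq_or_lt
  · have hcard : #(S \ nbrsIn G S p) = 4 := by
      have := card_sdiff_add_card_eq_card (nbrsIn_subset (G := G) (S := S) (p := p))
      omega
    by_cases hindep : G.IsIndepSet (↑(S \ nbrsIn G S p) : Set P)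
    · exact .inr <| .inl <| containsK44Minus_of_isIndepSet_sdiff hT hd hp hp4.symm hcard hindep
    · simp only [SimpleGraph.IsIndepSet, Set.Pairwise, not_forall, not_not] at hindep
      obtain ⟨w₁, hw₁, w₂, hw₂, -, hadj⟩ := hindep
      exact .inr <| .inr <| containsLinkedK24_of_adj hT hd hp hcard hw₁ hw₂ hadj
  · exact .inl <| containsK34Minus_of_four_le_card_nbrsIn hT hd hp (by omega) (by omega)

end TriangleFree

/-! ### Sparse hypergraphs -/

section Excess

variable {ι P V : Type*} {l : ι → P → V} {S : Finset P}
  {p q s : P} {i j k : ι}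

/-- The intersection graph of an `ι`-partite hypergraph with edge set `P`, encoded by the function
`l` sending a part `i` and an edge `p` to the vertex `l i p` in which `p` meets the part `i`:
distinct edges are adjacent when they share a vertex. -/
def intersectionGraph (l : ι → P → V) : SimpleGraph P where
  Adj p q := p ≠ q ∧ ∃ i, l i p = l i q
  symm := ⟨fun _ _ h ↦ ⟨h.1.symm, h.2.imp fun _ ↦ Eq.symm⟩⟩
  loopless := ⟨fun _ h ↦ h.1 rfl⟩

instance [Fintype ι] [DecidableEq P] [DecidableEq V] : DecidableRel (intersectionGraph l).Adj :=
  fun p q ↦ inferInstanceAs (Decidable (p ≠ q ∧ ∃ i, l i p = l i q))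

/-- The hypergraph encoded by `l` is linear (two edges share at most one vertex) and has no
triangle: three pairwise intersecting edges share a vertex. -/
structure IsLinearTriangleFree (l : ι → P → V) : Prop where
  linear : ∀ ⦃p q i j⦄, p ≠ q → l i p = l i q → l j p = l j q → i = j
  triangle : ∀ ⦃p q s i j k⦄, p ≠ q → q ≠ s → p ≠ s →
    l i p = l i q → l j q = l j s → l k p = l k s → i = j

lemma IsLinearTriangleFree.eq_and_eq (hl : IsLinearTriangleFree l) (hpq : p ≠ q) (hqs : q ≠ s)
    (hps : p ≠ s) (hi : l i p = l i q) (hj : l j q = l j s) (hk : l k p = l k s) :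
    i = k ∧ j = k := by
  obtain rfl := hl.triangle hpq hqs hps hi hj hk
  have hik := hl.linear hps (hi.trans hj) hk
  exact ⟨hik, hik⟩

/-- A neighbour `b ∈ B` of `z` would meet `z` in the vertex where `z` meets `w₁` and also in the
one where it meets `w₂`. -/
lemma IsLinearTriangleFree.containsK34Minus_of_meets (hl : IsLinearTriangleFree l) {A B : Finset P}
    {z w₁ w₂ : P} (hA : (intersectionGraph l).IsIndepSet (A : Set P))
    (hB : (intersectionGraph l).IsIndepSet (B : Set P)) (hA3 : #A = 3) (hB3 : 3 ≤ #B)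
    (hAB : ∀ a ∈ A, ∀ b ∈ B, (intersectionGraph l).Adj a b) (hzA : z ∉ A) (hzB : z ∉ B)
    (hw₁ : w₁ ∈ A) (hw₂ : w₂ ∈ A) (hij : i ≠ j) (hi : l i w₁ = l i z) (hj : l j w₂ = l j z) :
    ContainsK34Minus (intersectionGraph l) := by
  classical
  have hw₁z : w₁ ≠ z := ne_of_mem_of_not_mem hw₁ hzA
  have hw₂z : w₂ ≠ z := ne_of_mem_of_not_mem hw₂ hzA
  have hw₁₂ : w₁ ≠ w₂ := by
    rintro rfl
    exact hij (hl.linear hw₁z hi hj)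
  have hz : ∀ b ∈ B, ¬ (intersectionGraph l).Adj z b := by
    rintro b hb ⟨hzb, k, hk⟩
    obtain ⟨hw₁b, k₁, hk₁⟩ := hAB w₁ hw₁ b hb
    obtain ⟨hw₂b, k₂, hk₂⟩ := hAB w₂ hw₂ b hb
    exact hij <| (hl.triangle hw₁z hzb hw₁b hi hk hk₁).trans
      (hl.triangle hw₂z hzb hw₂b hj hk hk₂).symm
  obtain ⟨w, hw, hw'⟩ := exists_mem_notMem_of_card_lt_card
    (card_le_two.trans_lt (by omega) : #{w₁, w₂} < #A)
  have hA_eq : A = {w, w₁, w₂} := by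
    simp only [mem_insert, mem_singleton, not_or] at hw'
    refine (eq_of_subset_of_card_le ?_ ?_).symm
    · simp [insert_subset_iff, hw, hw₁, hw₂]
    · simp [hA3, hw', hw₁₂]
  refine containsK34Minus_of_isIndepSet (B := insert z B) hA ?_ hA3.ge ?_ hw
    (mem_insert_self z B) ?_
  · rw [coe_insert]
    exact hB.insert fun b hb _ ↦ ⟨hz b hb, fun h ↦ hz b hb h.symm⟩
  · rw [card_insert_of_notMem hzB]
    omega
  · intro a ha b hb hab
    obtain rfl | hb := mem_insert.1 hb
    · simp only [hA_eq, mem_insert, mem_singleton] at ha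
      obtain rfl | rfl | rfl := ha
      · simp at hab
      · exact ⟨hw₁z, i, hi⟩
      · exact ⟨hw₂z, j, hj⟩
    · exact hAB a ha b hb

variable [DecidableEq V]

lemma card_fiber_le_two (hT : (intersectionGraph l).CliqueFreeOn S 3) (i : ι) (v : V) :
    #{p ∈ S | l i p = v} ≤ 2 := by
  classical
  by_contra! h
  obtain ⟨a, ha, b, hb, c, hc, hab, hac, hbc⟩ := two_lt_card.1 h
  simp only [mem_filter] at ha hb hc
  refine hT (t := {a, b, c}) ?_ (SimpleGraph.is3Clique_triple_iff.2
    ⟨⟨hab, i, ha.2.trans hb.2.symm⟩, ⟨hac, i, ha.2.trans hc.2.symm⟩,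
      hbc, i, hb.2.trans hc.2.symm⟩)
  simp [Set.insert_subset_iff, ha.1, hb.1, hc.1]

variable [Fintype ι]

/-- The number of vertices by which the edges in `S` fall short of being pairwise disjoint. -/
def excess (l : ι → P → V) (S : Finset P) : ℕ := ∑ i, (#S - #(S.image (l i)))

lemma excess_eq_zero_of_card_le_one (hS : #S ≤ 1) : excess l S = 0 := by
  refine sum_eq_zero fun i _ ↦ ?_
  obtain rfl | hne := S.eq_empty_or_nonempty
  · simp
  · have := (hne.image (l i)).card_pos
    omega

variable [DecidableEq P]

/-- The parts in which the edge `p` shares its vertex with another edge of `S`. -/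
def sharedParts (l : ι → P → V) (S : Finset P) (p : P) : Finset ι :=
  {i | ∃ q ∈ S, q ≠ p ∧ l i q = l i p}

lemma mem_sharedParts : i ∈ sharedParts l S p ↔ ∃ q ∈ S, q ≠ p ∧ l i q = l i p := by
  simp [sharedParts]

lemma excess_eq_excess_erase_add (hp : p ∈ S) :
    excess l S = excess l (S.erase p) + #(sharedParts l S p) := by
  rw [excess, excess, sharedParts, card_filter, ← sum_add_distrib]
  refine sum_congr rfl fun i _ ↦ ?_
  have hle : #((S.erase p).image (l i)) ≤ #(S.erase p) := card_image_le
  have hmem : l i p ∈ (S.erase p).image (l i) ↔ ∃ q ∈ S, q ≠ p ∧ l i q = l i p := by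
    simp only [mem_image, mem_erase, and_assoc, and_left_comm, ne_eq]
  conv_lhs => rw [← insert_erase hp, image_insert, card_insert_of_notMem (notMem_erase p S)]
  split_ifs with h
  · rw [insert_eq_of_mem (hmem.2 h)]
    omega
  · rw [card_insert_of_notMem (mt hmem.1 h)]
    omega

/-- A set of parts in each of which `p` meets another edge of `S`, is no larger than the set of
edges met there: by linearity no edge is met twice. -/
lemma IsLinearTriangleFree.card_le_card_meeting (hl : IsLinearTriangleFree l) {J : Finset ι}
    (hJ : J ⊆ sharedParts l S p) : #J ≤ #{q ∈ S | q ≠ p ∧ ∃ j ∈ J, l j q = l j p} := by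
  have hmeet : ∀ j ∈ J, ∃ q ∈ S, q ≠ p ∧ l j q = l j p := fun j hj ↦ mem_sharedParts.1 (hJ hj)
  have _ : Nonempty P := ⟨p⟩
  choose! f hfS hfp hfl using hmeet
  refine card_le_card_of_injOn f (fun j hj ↦ ?_) fun i hi j hj hij ↦ ?_
  · exact mem_filter.2 ⟨hfS j hj, hfp j hj, j, hj, hfl j hj⟩
  · exact hl.linear (hfp i hi) (hfl i hi) (hij ▸ hfl j hj)

lemma IsLinearTriangleFree.card_sharedParts_le (hl : IsLinearTriangleFree l) :
    #(sharedParts l S p) ≤ #(nbrsIn (intersectionGraph l) S p) :=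
  (hl.card_le_card_meeting Subset.rfl).trans <| card_le_card <| monotone_filter_right S <|
    fun _ _ ⟨hne, j, _, hj⟩ ↦ ⟨hne.symm, j, hj.symm⟩

/-- The edge `p` together with the edges of `S` that meet it outside the part `k`. -/
def starOutside [DecidableEq ι] (l : ι → P → V) (S : Finset P) (k : ι) (p : P) : Finset P :=
  {q ∈ S | q = p ∨ ∃ i, i ≠ k ∧ l i q = l i p}

lemma IsLinearTriangleFree.disjoint_starOutside [DecidableEq ι] (hl : IsLinearTriangleFree l)
    (hpq : p ≠ q) (hk : l k p = l k q) : Disjoint (starOutside l S k p) (starOutside l S k q) := by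
  refine disjoint_left.2 fun s hsp hsq ↦ ?_
  obtain ⟨-, hsp⟩ := mem_filter.1 hsp
  obtain ⟨-, hsq⟩ := mem_filter.1 hsq
  obtain rfl | ⟨i, hik, hi⟩ := hsp
  · obtain rfl | ⟨j, hjk, hj⟩ := hsq
    · exact hpq rfl
    · exact hjk (hl.linear hpq hj hk)
  obtain rfl | ⟨j, hjk, hj⟩ := hsq
  · exact hik (hl.linear hpq hi.symm hk)
  by_cases hsp : s = p
  · subst hsp
    exact hjk (hl.linear hpq hj hk)
  by_cases hsq : s = q
  · subst hsq
    exact hik (hl.linear hpq hi.symm hk)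
  exact hik (hl.eq_and_eq (Ne.symm hsp) hsq hpq hi.symm hj hk).1

lemma IsLinearTriangleFree.card_sharedParts_le_card_starOutside [DecidableEq ι]
    (hl : IsLinearTriangleFree l) (hp : p ∈ S) : #(sharedParts l S p) ≤ #(starOutside l S k p) := by
  have hmeet := hl.card_le_card_meeting (erase_subset k (sharedParts l S p))
  have hsub : insert p ({q ∈ S | q ≠ p ∧ ∃ i ∈ (sharedParts l S p).erase k, l i q = l i p}) ⊆
      starOutside l S k p :=
    insert_subset (mem_filter.2 ⟨hp, Or.inl rfl⟩) <|
      monotone_filter_right S fun _ _ ⟨_, i, hi, hq⟩ ↦ Or.inr ⟨i, ne_of_mem_erase hi, hq⟩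
  have hcard := card_le_card hsub
  rw [card_insert_of_notMem (by simp)] at hcard
  have := pred_card_le_card_erase (s := sharedParts l S p) (a := k)
  omega

/-- Three edges through a common vertex would each meet two further edges elsewhere, giving nine
edges in total. -/
lemma IsLinearTriangleFree.cliqueFreeOn (hl : IsLinearTriangleFree l) (hS : #S ≤ 8)
    (h3 : ∀ p ∈ S, 3 ≤ #(sharedParts l S p)) : (intersectionGraph l).CliqueFreeOn S 3 := by
  classical
  intro T hTS hT
  obtain ⟨p, q, s, ⟨hpq, i, hi⟩, ⟨hps, k, hk⟩, ⟨hqs, j, hj⟩, rfl⟩ :=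
    SimpleGraph.is3Clique_iff.1 hT
  obtain ⟨rfl, rfl⟩ := hl.eq_and_eq hpq hqs hps hi hj hk
  set T : Finset P := {p, q, s} with hTdef
  have hcommon : ∀ x ∈ T, ∀ y ∈ T, l j x = l j y := by
    simp [hTdef, ← hk, ← hi]
  have hdisj : (T : Set P).PairwiseDisjoint (starOutside l S j) := fun x hx y hy hxy ↦
    hl.disjoint_starOutside hxy (hcommon x hx y hy)
  have hsum := card_nsmul_le_sum T _ 3 fun x hx ↦
    (h3 x (hTS hx)).trans (hl.card_sharedParts_le_card_starOutside (k := j) (hTS hx))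
  have hsub : T.biUnion (starOutside l S j) ⊆ S := biUnion_subset.2 fun _ _ ↦ filter_subset _ _
  rw [hT.card_eq, ← card_biUnion hdisj, smul_eq_mul] at hsum
  have := card_le_card hsub
  omega

lemma two_mul_excess_le (hT : (intersectionGraph l).CliqueFreeOn S 3) :
    2 * excess l S ≤ ∑ p ∈ S, #(sharedParts l S p) := by
  have hswap : ∑ p ∈ S, #(sharedParts l S p) =
      ∑ i, #{p ∈ S | ∃ q ∈ S, q ≠ p ∧ l i q = l i p} := by
    simp only [sharedParts, card_filter]
    exact sum_comm
  rw [hswap, excess, mul_sum]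
  refine sum_le_sum fun i _ ↦ ?_
  set D : Finset P := {p ∈ S | ∃ q ∈ S, q ≠ p ∧ l i q = l i p} with hD
  have hfiber : ∀ v ∈ S.image (l i),
      2 * #{p ∈ S | l i p = v} ≤ 2 + #{p ∈ D | l i p = v} := by
    intro v _
    have hle := card_fiber_le_two hT i v
    rcases Nat.lt_or_ge 1 #{p ∈ S | l i p = v} with h | h
    · have hsub : ({p ∈ S | l i p = v} : Finset P) ⊆ {p ∈ D | l i p = v} := by
        intro p hp
        obtain ⟨q, hq, hqp⟩ := exists_mem_ne h p
        simp only [mem_filter, hD] at hp hq ⊢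
        exact ⟨⟨hp.1, q, hq.1, hqp, hq.2.trans hp.2.symm⟩, hp.2⟩
      have := card_le_card hsub
      omega
    · omega
  have hS := card_eq_sum_card_image (l i) S
  have hDcard := card_eq_sum_card_fiberwise (s := D) (t := S.image (l i)) (f := l i)
    fun p hp ↦ mem_image_of_mem _ (mem_of_mem_filter p hp)
  have hsum := sum_le_sum hfiber
  rw [← mul_sum, sum_add_distrib, ← hS, ← hDcard, sum_const, smul_eq_mul] at hsum
  omega

/-- A linear, triangle-free hypergraph whose intersection graph contains none of the subgraphs
`ContainsK34Minus`, `ContainsK44Minus` and `ContainsLinkedK24`, so that its sets of `3`, `4`, `5`,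
`7` or `8` edges have small excess. -/
structure IsSparse (l : ι → P → V) : Prop extends IsLinearTriangleFree l where
  not_containsK34Minus : ¬ ContainsK34Minus (intersectionGraph l)
  not_containsK44Minus : ¬ ContainsK44Minus (intersectionGraph l)
  not_containsLinkedK24 : ¬ ContainsLinkedK24 (intersectionGraph l)

lemma IsLinearTriangleFree.le_card_nbrsIn {d : ℕ} (hl : IsLinearTriangleFree l)
    (hd : ∀ p ∈ S, d ≤ #(sharedParts l S p)) :
    ∀ p ∈ S, d ≤ #(nbrsIn (intersectionGraph l) S p) := fun p hp ↦
  (hd p hp).trans hl.card_sharedParts_le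

lemma IsLinearTriangleFree.exists_card_sharedParts_le_one (hl : IsLinearTriangleFree l)
    (hS : S.Nonempty) (hS3 : #S ≤ 3) : ∃ p ∈ S, #(sharedParts l S p) ≤ 1 := by
  by_cases hT : (intersectionGraph l).CliqueFreeOn S 3
  · by_contra! h2
    obtain ⟨p, hp⟩ := hS
    have := h2 p hp
    have := hl.card_sharedParts_le (S := S) (p := p)
    have := card_nbrsIn_add_le_card hT (hl.le_card_nbrsIn h2) hp
    omega
  · simp only [SimpleGraph.CliqueFreeOn, not_forall, not_not] at hT
    obtain ⟨T, hTS, hT⟩ := hT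
    obtain rfl := eq_of_subset_of_card_le (coe_subset.1 hTS) (hT.card_eq ▸ hS3)
    obtain ⟨p, q, s, ⟨hpq, i, hi⟩, ⟨hps, k, hk⟩, ⟨hqs, j, hj⟩, rfl⟩ :=
      SimpleGraph.is3Clique_iff.1 hT
    obtain ⟨rfl, rfl⟩ := hl.eq_and_eq hpq hqs hps hi hj hk
    refine ⟨p, by simp, (card_le_card fun i' hi' ↦ ?_).trans (card_singleton j).le⟩
    obtain ⟨x, hx, hxp, hx'⟩ := mem_sharedParts.1 hi'
    simp only [mem_insert, mem_singleton, hxp, false_or] at hx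
    obtain rfl | rfl := hx
    · exact mem_singleton.2 (hl.linear hpq hx'.symm hi)
    · exact mem_singleton.2 (hl.linear hps hx'.symm hk)

lemma IsLinearTriangleFree.exists_card_sharedParts_le_two (hl : IsLinearTriangleFree l)
    (hS : S.Nonempty) (hS5 : #S ≤ 5) : ∃ p ∈ S, #(sharedParts l S p) ≤ 2 := by
  by_contra! h3
  obtain ⟨p, hp⟩ := hS
  have := h3 p hp
  have := hl.card_sharedParts_le (S := S) (p := p)
  have := card_nbrsIn_add_le_card (hl.cliqueFreeOn (by omega) h3) (hl.le_card_nbrsIn h3) hp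
  omega

omit [DecidableEq P] in
lemma IsLinearTriangleFree.excess_le_pred (hl : IsLinearTriangleFree l) (hS : #S ≤ 3) :
    excess l S ≤ #S - 1 := by
  classical
  induction h : #S generalizing S with
  | zero => simp [excess_eq_zero_of_card_le_one (l := l) (S := S) (by omega)]
  | succ n ih =>
    obtain rfl | hn := Nat.eq_zero_or_pos n
    · simp [excess_eq_zero_of_card_le_one (l := l) (S := S) (by omega)]
    obtain ⟨p, hp, hp1⟩ := hl.exists_card_sharedParts_le_one (card_pos.1 (by omega)) hS
    have hcard := card_erase_of_mem hp
    have := ih (S := S.erase p) (by omega) (by omega)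
    have := excess_eq_excess_erase_add (l := l) hp
    omega

omit [DecidableEq P] in
lemma IsLinearTriangleFree.excess_le_of_card_le_five (hl : IsLinearTriangleFree l)
    (hS3 : 3 ≤ #S) (hS5 : #S ≤ 5) : excess l S ≤ 2 * #S - 4 := by
  classical
  obtain ⟨n, hn⟩ := Nat.exists_eq_add_of_le hS3
  induction n generalizing S with
  | zero =>
    have := hl.excess_le_pred hn.le
    omega
  | succ n ih =>
    obtain ⟨p, hp, hp2⟩ := hl.exists_card_sharedParts_le_two (card_pos.1 (by omega)) hS5
    have hcard := card_erase_of_mem hp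
    have := ih (S := S.erase p) (by omega) (by omega) (by omega)
    have := excess_eq_excess_erase_add (l := l) hp
    omega

lemma IsLinearTriangleFree.exists_four_le_card_nbrsIn (hl : IsLinearTriangleFree l)
    (hT : (intersectionGraph l).CliqueFreeOn S 3) (h : 3 * #S < 2 * excess l S) :
    ∃ p ∈ S, 4 ≤ #(nbrsIn (intersectionGraph l) S p) := by
  refine exists_lt_of_sum_lt (f := fun _ ↦ 3) ?_
  rw [sum_const, smul_eq_mul, mul_comm]
  exact h.trans_le <| (two_mul_excess_le hT).trans <| sum_le_sum fun _ _ ↦ hl.card_sharedParts_le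

omit [DecidableEq P] in
lemma IsLinearTriangleFree.excess_le_nine (hl : IsLinearTriangleFree l) (hS : #S = 6) :
    excess l S ≤ 9 := by
  classical
  have herase (p) (hp : p ∈ S) : excess l (S.erase p) ≤ 6 := by
    have hcard := card_erase_of_mem hp
    have := hl.excess_le_of_card_le_five (S := S.erase p) (by omega) (by omega)
    omega
  by_cases h3 : ∀ p ∈ S, 3 ≤ #(sharedParts l S p)
  · obtain ⟨p, hp⟩ := card_pos.1 (by omega : 0 < #S)
    have := card_nbrsIn_add_le_card (hl.cliqueFreeOn (by omega) h3) (hl.le_card_nbrsIn h3) hp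
    have := hl.card_sharedParts_le (S := S) (p := p)
    have := excess_eq_excess_erase_add (l := l) hp
    have := herase p hp
    omega
  · push Not at h3
    obtain ⟨p, hp, hp3⟩ := h3
    have := excess_eq_excess_erase_add (l := l) hp
    have := herase p hp
    omega

lemma IsLinearTriangleFree.three_le_card_sharedParts (hl : IsLinearTriangleFree l) (hS : #S = 6)
    (h9 : 9 ≤ excess l S) : ∀ p ∈ S, 3 ≤ #(sharedParts l S p) := by
  intro p hp
  have hcard := card_erase_of_mem hp
  have := hl.excess_le_of_card_le_five (S := S.erase p) (by omega) (by omega)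
  have := excess_eq_excess_erase_add (l := l) hp
  omega

lemma IsLinearTriangleFree.containsK34Minus_of_erase (hl : IsLinearTriangleFree l) {z : P}
    (hS : #(S.erase z) = 6) (h3 : ∀ p ∈ S.erase z, 3 ≤ #(sharedParts l (S.erase z) p))
    (hz : 1 < #(sharedParts l S z)) : ContainsK34Minus (intersectionGraph l) := by
  obtain ⟨A, hAS, hA3, hB3, hA, hB, hAB⟩ := exists_completeBipartite_of_card_eq_six
    (hl.cliqueFreeOn (by omega) h3) (hl.le_card_nbrsIn h3) hS
  have hzA : z ∉ A := fun h ↦ notMem_erase z S (hAS h)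
  have hzB : z ∉ S.erase z \ A := by simp
  obtain ⟨i, hi, j, hj, hij⟩ := one_lt_card.1 hz
  obtain ⟨w₁, hw₁S, hw₁z, hi⟩ := mem_sharedParts.1 hi
  obtain ⟨w₂, hw₂S, hw₂z, hj⟩ := mem_sharedParts.1 hj
  have hcross {a b : P} {i j : ι} (hij : i ≠ j) (ha : a ∈ A) (hb : b ∈ S.erase z \ A)
      (hi : l i a = l i z) (hj : l j b = l j z) : False := by
    obtain ⟨hab, k, hk⟩ := hAB a ha b hb
    exact hij <| hl.triangle (ne_of_mem_of_not_mem ha hzA)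
      (ne_of_mem_of_not_mem hb hzB).symm hab hi hj.symm hk
  by_cases hw₁ : w₁ ∈ A <;> by_cases hw₂ : w₂ ∈ A
  · exact hl.containsK34Minus_of_meets hA hB hA3 hB3.ge hAB hzA hzB hw₁ hw₂ hij hi hj
  · exact (hcross hij hw₁ (by simp [*]) hi hj).elim
  · exact (hcross hij.symm hw₂ (by simp [*]) hj hi).elim
  · exact hl.containsK34Minus_of_meets hB hA hB3 hA3.ge (fun b hb a ha ↦ (hAB a ha b hb).symm)
      hzB hzA (by simp [*]) (by simp [*]) hij hi hj

omit [DecidableEq P] in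
lemma IsSparse.excess_le_ten (hl : IsSparse l) (hS : #S = 7) : excess l S ≤ 10 := by
  classical
  by_contra! h11
  by_cases h3 : ∀ p ∈ S, 3 ≤ #(sharedParts l S p)
  · have hT := hl.cliqueFreeOn (by omega) h3
    obtain ⟨p, hp, hp4⟩ := hl.exists_four_le_card_nbrsIn hT (by omega)
    exact hl.not_containsK34Minus <|
      containsK34Minus_of_four_le_card_nbrsIn hT (hl.le_card_nbrsIn h3) hp hp4 (by omega)
  · push Not at h3
    obtain ⟨z, hz, hz3⟩ := h3
    have hcard := card_erase_of_mem hz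
    have hsix : #(S.erase z) = 6 := by omega
    have := hl.excess_le_nine hsix
    have := excess_eq_excess_erase_add (l := l) hz
    exact hl.not_containsK34Minus <| hl.containsK34Minus_of_erase hsix
      (hl.three_le_card_sharedParts hsix (by omega)) (by omega)

omit [DecidableEq P] in
lemma IsSparse.excess_le_twelve (hl : IsSparse l) (hS : #S = 8) : excess l S ≤ 12 := by
  classical
  by_contra! h13
  by_cases h3 : ∀ p ∈ S, 3 ≤ #(sharedParts l S p)
  · have hT := hl.cliqueFreeOn hS.le h3
    obtain ⟨p, hp, hp4⟩ := hl.exists_four_le_card_nbrsIn hT (by omega)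
    obtain h | h | h := contains_of_card_eq_eight hT (hl.le_card_nbrsIn h3) hS hp hp4
    · exact hl.not_containsK34Minus h
    · exact hl.not_containsK44Minus h
    · exact hl.not_containsLinkedK24 h
  · push Not at h3
    obtain ⟨z, hz, hz3⟩ := h3
    have hcard := card_erase_of_mem hz
    have := hl.excess_le_ten (S := S.erase z) (by omega)
    have := excess_eq_excess_erase_add (l := l) hz
    omega

omit [DecidableEq P] in
lemma IsSparse.excess_le (hl : IsSparse l)
    (hS : #S = 3 ∨ #S = 4 ∨ #S = 5 ∨ #S = 7 ∨ #S = 8) : excess l S ≤ 2 * #S - 4 := by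
  obtain hS | hS | hS | hS | hS := hS
  · exact hl.excess_le_of_card_le_five (by omega) (by omega)
  · exact hl.excess_le_of_card_le_five (by omega) (by omega)
  · exact hl.excess_le_of_card_le_five (by omega) (by omega)
  · have := hl.excess_le_ten hS
    omega
  · have := hl.excess_le_twelve hS
    omega

end Excess

/-! ### Generic times -/

section Generic

open MvPolynomial

variable {R : Type*} [CommRing R]

/-- Vanishes if the quadruples `x` and `y` have the same cross ratio. -/
def crossRatioDefect (x y : Fin 4 → R) : R :=
  (y 1 - y 2) * (x 0 - x 2) * (y 0 - y 3) * (x 1 - x 3) -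
    (y 1 - y 3) * (x 0 - x 3) * (y 0 - y 2) * (x 1 - x 2)

variable {ι : Type*}

/-- The product of the differences `X a - X b` over the pairs `(a, b)` in `L`. -/
noncomputable def pairProd (L : List (ι × ι)) : MvPolynomial ι ℤ :=
  (L.map fun q ↦ X q.1 - X q.2).prod

@[simp]
lemma pairProd_nil : pairProd ([] : List (ι × ι)) = 1 := rfl

@[simp]
lemma pairProd_cons {x y : ι} {L : List (ι × ι)} :
    pairProd ((x, y) :: L) = (X x - X y) * pairProd L := by
  simp [pairProd]

lemma pairProd_eq_zero_iff {L : List (ι × ι)} : pairProd L = 0 ↔ ∃ q ∈ L, q.1 = q.2 := by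
  simp [pairProd, sub_eq_zero]

lemma pairProd_ne_neg {L : List (ι × ι)} (hL : ∀ q ∈ L, q.1 ≠ q.2) :
    pairProd L ≠ -pairProd L := by
  rw [Ne, self_eq_neg, pairProd_eq_zero_iff]
  push Not
  exact hL

/-- Substituting `X x` for `X y` kills both products. -/
lemma exists_eq_of_pairProd_eq {L L' : List (ι × ι)} {x y : ι} (h : pairProd L = pairProd L')
    (hxy : (x, y) ∈ L) : ∃ q ∈ L', q.1 = q.2 ∨ q.1 = x ∧ q.2 = y ∨ q.1 = y ∧ q.2 = x := by
  classical
  have hmerge := congrArg (rename (Function.update id x y)) h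
  rw [pairProd, pairProd, map_list_prod, map_list_prod, List.map_map, List.map_map,
    List.prod_eq_zero (List.mem_map.2 ⟨_, hxy, by simp [Function.update_apply]⟩), eq_comm,
    List.prod_eq_zero_iff, List.mem_map] at hmerge
  obtain ⟨q, hq, hq0⟩ := hmerge
  refine ⟨q, hq, ?_⟩
  simp only [Function.comp_apply, map_sub, rename_X, sub_eq_zero, X_inj, Function.update_apply,
    id_eq] at hq0
  grind

lemma eq_comp_of_crossRatioDefect_eq_zero {i j : Fin 4 → ι} (hi : Function.Injective i)
    (hj : Function.Injective j) (hij : ∀ k, i k ≠ j k)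
    (h : crossRatioDefect (fun k ↦ (X (i k) : MvPolynomial ι ℤ)) (fun k ↦ X (j k)) = 0) :
    j = i ∘ ![1, 0, 3, 2] ∨ j = i ∘ ![2, 3, 0, 1] ∨ j = i ∘ ![3, 2, 1, 0] := by
  have hprod : pairProd [(j 1, j 2), (i 0, i 2), (j 0, j 3), (i 1, i 3)] =
      pairProd [(j 1, j 3), (i 0, i 3), (j 0, j 2), (i 1, i 2)] := by
    simpa [crossRatioDefect, sub_eq_zero, mul_assoc] using h
  have h02 := exists_eq_of_pairProd_eq hprod (x := i 0) (y := i 2) (by simp)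
  have h13 := exists_eq_of_pairProd_eq hprod (x := i 1) (y := i 3) (by simp)
  have h03 := exists_eq_of_pairProd_eq hprod.symm (x := i 0) (y := i 3) (by simp)
  have h12 := exists_eq_of_pairProd_eq hprod.symm (x := i 1) (y := i 2) (by simp)
  simp only [List.mem_cons, List.not_mem_nil, or_false, exists_eq_or_imp, exists_eq_left,
    hi.eq_iff, hj.eq_iff] at h02 h13 h03 h12
  simp only [_root_.funext_iff, Fin.forall_fin_succ, IsEmpty.forall_iff, Function.comp_apply,
    Fin.succ_zero_eq_one, Fin.succ_one_eq_two, Matrix.cons_val_zero,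
    Matrix.cons_val_succ, and_true] at hij ⊢
  grind

/-- Vanishes if there are three light rays `u`, `u'`, `u''` and four more `v₀, …, v₃` such that `u`
meets `v₀, v₁, v₂, v₃` at the times `a`, `u'` meets `v₀, v₁, v₂` at the times `b`, and `u''` meets
`v₀, v₁, v₃` at the times `c`. -/
def linkDefect (a : Fin 4 → R) (b c : Fin 3 → R) : R :=
  (b 0 - a 0) * (a 0 - a 2) * (b 1 - b 2) * (c 1 - a 1) * (a 1 - a 3) * (c 0 - c 2) -
    (c 0 - a 0) * (a 0 - a 3) * (c 1 - c 2) * (b 1 - a 1) * (a 1 - a 2) * (b 0 - b 2)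

lemma linkDefect_swap_ne_zero {a : Fin 4 → ι} {g : Fin 3 → ι} (ha : Function.Injective a)
    (hg : Function.Injective g) (h00 : g 0 ≠ a 0) (h01 : g 0 ≠ a 1) (h10 : g 1 ≠ a 0)
    (h11 : g 1 ≠ a 1) :
    linkDefect ![X (a 0), X (a 1), X (a 2), X (a 2)] ![X (a 1), X (a 0), X (a 3)]
      (fun k ↦ (X (g k) : MvPolynomial ι ℤ)) ≠ 0 := by
  intro h
  have hfactor : pairProd [(a 0, a 1), (a 0, a 2), (a 1, a 2)] ≠ 0 := by
    simp [sub_eq_zero, ha.eq_iff]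
  have hprod : pairProd [(a 0, a 3), (g 1, a 1), (g 0, g 2)] =
      pairProd [(g 0, a 0), (g 1, g 2), (a 3, a 1)] := by
    refine mul_left_cancel₀ hfactor ?_
    simp only [linkDefect, Matrix.cons_val, pairProd_cons, pairProd_nil] at h ⊢
    linear_combination -h
  have h1 := exists_eq_of_pairProd_eq hprod (x := a 0) (y := a 3) (by simp)
  have h2 := exists_eq_of_pairProd_eq hprod (x := g 1) (y := a 1) (by simp)
  have h3 := exists_eq_of_pairProd_eq hprod (x := g 0) (y := g 2) (by simp)
  have h4 := exists_eq_of_pairProd_eq hprod.symm (x := g 0) (y := a 0) (by simp)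
  simp only [List.mem_cons, List.not_mem_nil, or_false, exists_eq_or_imp, exists_eq_left,
    ha.eq_iff, hg.eq_iff] at h1 h2 h3 h4
  have hcases : g 0 = a 3 ∧ g 2 = a 1 ∨ g 1 = a 3 ∧ g 2 = a 0 := by grind
  refine pairProd_ne_neg (L := [(a 0, a 3), (g 1, a 1), (g 0, g 2)]) ?_ (hprod.trans ?_)
  · simpa [ha.eq_iff, hg.eq_iff] using h11
  · simp only [pairProd_cons, pairProd_nil]
    obtain ⟨h03, h21⟩ | ⟨h13, h20⟩ := hcases
    · rw [h03, h21]
      ring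
    · rw [h13, h20]
      ring

/-- A `4 × 4` array, only the entries of which off the first three diagonal places matter, whose
relevant entries are distinct along each row and along each column. -/
structure IsPartialLatin (T : Fin 4 → Fin 4 → ι) : Prop where
  row : ∀ ⦃i j k⦄, i ≠ j ∨ i = 3 → i ≠ k ∨ i = 3 → T i j = T i k → j = k
  col : ∀ ⦃i j k⦄, i ≠ k ∨ i = 3 → j ≠ k ∨ j = 3 → T i k = T j k → i = j

/-- The relation between the rows `3`, `i`, `k` of an array of meeting times which comes from
the column `3` and the column `j` where neither of the rows `i` and `k` has a gap. -/
def HasLink (T : Fin 4 → Fin 4 → ι) (i j k : Fin 4) : Prop :=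
  linkDefect ![X (T 3 j), X (T 3 3), X (T 3 k), X (T 3 i)] ![X (T i j), X (T i 3), X (T i k)]
    ![X (T k j), X (T k 3), X (T k i)] = (0 : MvPolynomial ι ℤ)

variable {T : Fin 4 → Fin 4 → ι} {i j k : Fin 4}

lemma HasLink.pairProd_eq (h : HasLink T i j k) :
    pairProd [(T 3 k, T 3 3), (T i j, T i k), (T i 3, T 3 3), (T k i, T k 3), (T k j, T 3 j),
        (T 3 i, T 3 j)] =
      pairProd [(T 3 i, T 3 3), (T k j, T k i), (T k 3, T 3 3), (T i k, T i 3), (T i j, T 3 j),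
        (T 3 k, T 3 j)] := by
  simp only [HasLink, linkDefect, Matrix.cons_val, pairProd_cons, pairProd_nil] at h ⊢
  linear_combination h

lemma HasLink.eq_or (hT : IsPartialLatin T) (h : HasLink T i j k) (hij : i ≠ j) (hik : i ≠ k)
    (hjk : j ≠ k) (hi : i ≠ 3) (hj : j ≠ 3) (hk : k ≠ 3) :
    T k 3 = T 3 k ∨ T k i = T 3 k ∧ T k j = T 3 3 ∨ T k j = T 3 k ∧ T k i = T 3 3 ∨
      T i 3 = T 3 k := by
  have hpair := exists_eq_of_pairProd_eq h.pairProd_eq (x := T 3 k) (y := T 3 3) (by simp)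
  simp only [List.mem_cons, List.not_mem_nil, or_false, exists_eq_or_imp, exists_eq_left] at hpair
  have hrow := hT.row
  have hcol := hT.col
  clear hT h
  grind

lemma HasLink.pairProd_eq_of_eq (hT : IsPartialLatin T) (h : HasLink T i j k) (hij : i ≠ j)
    (hik : i ≠ k) (hjk : j ≠ k) (hi : i ≠ 3) (hj : j ≠ 3) (hk : k ≠ 3) (hi3 : T i 3 ≠ T 3 i)
    (hTij : T i j = T 3 3) (hTik : T i k = T 3 i) :
    pairProd [(T 3 k, T 3 3), (T k i, T k 3), (T k j, T 3 j)] =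
      pairProd [(T k j, T k i), (T k 3, T 3 3), (T 3 k, T 3 j)] := by
  have hrow := hT.row
  have hcol := hT.col
  have hprod := h.pairProd_eq
  have h1 := exists_eq_of_pairProd_eq hprod (x := T i 3) (y := T 3 3) (by simp)
  have h2 := exists_eq_of_pairProd_eq hprod (x := T 3 i) (y := T 3 j) (by simp)
  simp only [List.mem_cons, List.not_mem_nil, or_false, exists_eq_or_imp, exists_eq_left] at h1 h2
  have hTi3 : T i 3 = T 3 j := by
    clear hT h hprod
    grind
  have hfactor : pairProd [(T 3 3, T 3 i), (T 3 j, T 3 3), (T 3 i, T 3 j)] ≠ 0 := by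
    rw [Ne, pairProd_eq_zero_iff]
    clear hT h hprod h1 h2
    grind
  refine mul_left_cancel₀ hfactor ?_
  rw [hTij, hTik, hTi3] at hprod
  simp only [pairProd_cons, pairProd_nil] at hprod ⊢
  linear_combination hprod

lemma HasLink.false_of_eq (hT : IsPartialLatin T) (h : HasLink T i j k) (hij : i ≠ j)
    (hik : i ≠ k) (hjk : j ≠ k) (hi : i ≠ 3) (hj : j ≠ 3) (hk : k ≠ 3) (hi3 : T i 3 ≠ T 3 i)
    (hTij : T i j = T 3 3) (hTik : T i k = T 3 i) : False := by
  have hrow := hT.row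
  have hcol := hT.col
  have hprod := h.pairProd_eq_of_eq hT hij hik hjk hi hj hk hi3 hTij hTik
  have h3 := exists_eq_of_pairProd_eq hprod (x := T 3 k) (y := T 3 3) (by simp)
  have h4 := exists_eq_of_pairProd_eq hprod (x := T k j) (y := T 3 j) (by simp)
  have h5 := exists_eq_of_pairProd_eq hprod (x := T k i) (y := T k 3) (by simp)
  have h6 := exists_eq_of_pairProd_eq hprod.symm (x := T k j) (y := T k i) (by simp)
  have h7 := exists_eq_of_pairProd_eq hprod.symm (x := T 3 k) (y := T 3 j) (by simp)
  simp only [List.mem_cons, List.not_mem_nil, or_false, exists_eq_or_imp, exists_eq_left]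
    at h3 h4 h5 h6 h7
  have hcases : T k j = T 3 k ∧ T k i = T 3 3 ∨ T k 3 = T 3 k ∧ T k i = T 3 j := by
    clear hT h hprod
    grind
  refine pairProd_ne_neg (L := [(T 3 k, T 3 3), (T k i, T k 3), (T k j, T 3 j)]) ?_
    (hprod.trans ?_)
  · clear hT h hprod h3 h4 h5 h6 h7
    grind
  · simp only [pairProd_cons, pairProd_nil]
    obtain ⟨hTkj, hTki⟩ | ⟨hTk3, hTki⟩ := hcases
    · rw [hTkj, hTki]
      ring
    · rw [hTk3, hTki]
      ring

lemma HasLink.eq_of_eq (hT : IsPartialLatin T) (h : HasLink T i j k) (hij : i ≠ j)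
    (hik : i ≠ k) (hjk : j ≠ k) (hi : i ≠ 3) (hj : j ≠ 3) (hk : k ≠ 3) (hi3 : T i 3 = T 3 i)
    (hk3 : T k 3 = T 3 k) : T i k = T 3 j := by
  have hrow := hT.row
  have hcol := hT.col
  have hfactor : pairProd [(T 3 i, T 3 3), (T 3 k, T 3 3)] ≠ 0 := by
    rw [Ne, pairProd_eq_zero_iff]
    clear hT h
    grind
  have hprod : pairProd [(T i j, T i k), (T k i, T 3 k), (T k j, T 3 j), (T 3 i, T 3 j)] =
      pairProd [(T k j, T k i), (T i k, T 3 i), (T i j, T 3 j), (T 3 k, T 3 j)] := by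
    have hprod := h.pairProd_eq
    refine mul_left_cancel₀ hfactor ?_
    rw [hi3, hk3] at hprod
    simp only [pairProd_cons, pairProd_nil] at hprod ⊢
    linear_combination hprod
  have h1 := exists_eq_of_pairProd_eq hprod (x := T 3 i) (y := T 3 j) (by simp)
  simp only [List.mem_cons, List.not_mem_nil, or_false, exists_eq_or_imp, exists_eq_left] at h1
  have hcases : T i k = T 3 j ∨ T k j = T 3 i ∧ T k i = T 3 j := by
    clear hT h hprod hfactor
    grind
  refine hcases.elim id fun ⟨hTkj, hTki⟩ ↦ ?_
  have hfactor' : pairProd [(T 3 i, T 3 j), (T 3 j, T 3 k)] ≠ 0 := by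
    rw [Ne, pairProd_eq_zero_iff]
    clear hT h hprod hfactor
    grind
  have hprod' : pairProd [(T i j, T i k), (T 3 i, T 3 j)] =
      pairProd [(T 3 i, T i k), (T i j, T 3 j)] := by
    refine mul_left_cancel₀ hfactor' ?_
    rw [hTkj, hTki] at hprod
    simp only [pairProd_cons, pairProd_nil] at hprod ⊢
    linear_combination hprod
  have h2 := exists_eq_of_pairProd_eq hprod' (x := T 3 i) (y := T 3 j) (by simp)
  simp only [List.mem_cons, List.not_mem_nil, or_false, exists_eq_or_imp, exists_eq_left] at h2
  clear hT h hprod hprod' hfactor hfactor' h1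
  grind

lemma IsPartialLatin.eq_of_hasLink (hT : IsPartialLatin T)
    (h : ∀ i j k, i ≠ j → i ≠ k → j ≠ k → i ≠ 3 → j ≠ 3 → k ≠ 3 → HasLink T i j k) (hk : k ≠ 3) :
    T k 3 = T 3 k := by
  by_contra hk3
  have hother (i j) (hij : i ≠ j) (hik : i ≠ k) (hjk : j ≠ k) (hi : i ≠ 3) (hj : j ≠ 3) :
      T i 3 = T 3 k := by
    obtain hcase | ⟨hki, hkj⟩ | ⟨hkj, hki⟩ | hcase :=
      (h i j k hij hik hjk hi hj hk).eq_or hT hij hik hjk hi hj hk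
    · exact absurd hcase hk3
    · exact ((h k j i hjk.symm hik.symm hij.symm hk hj hi).false_of_eq hT hjk.symm hik.symm hij.symm
        hk hj hi hk3 hkj hki).elim
    · exact ((h k i j hik.symm hjk.symm hij hk hi hj).false_of_eq hT hik.symm hjk.symm hij hk hi hj
        hk3 hki hkj).elim
    · exact hcase
  obtain ⟨i, j, hij, hik, hjk, hi, hj⟩ :
      ∃ i j : Fin 4, i ≠ j ∧ i ≠ k ∧ j ≠ k ∧ i ≠ 3 ∧ j ≠ 3 := by
    clear hT h hother hk3
    revert k
    decide
  exact hij <| hT.col (.inl hi) (.inl hj) <|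
    (hother i j hij hik hjk hi hj).trans (hother j i hij.symm hjk hik hj hi).symm

lemma IsPartialLatin.eq_three_of_hasLink (hT : IsPartialLatin T)
    (h : ∀ i j k, i ≠ j → i ≠ k → j ≠ k → i ≠ 3 → j ≠ 3 → k ≠ 3 → HasLink T i j k) (hij : i ≠ j)
    (hik : i ≠ k) (hjk : j ≠ k) (hi : i ≠ 3) (hj : j ≠ 3) (hk : k ≠ 3) : T i k = T 3 j :=
  (h i j k hij hik hjk hi hj hk).eq_of_eq hT hij hik hjk hi hj hk (hT.eq_of_hasLink h hi)
    (hT.eq_of_hasLink h hk)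

/-- Vanishes if there are light rays `u`, `u'`, `v₀, …, v₃`, `e`, `d` such that `u` and `u'` meet
each `v k` at the times `i k` and `j k`, the ray `e` meets `v₀` and `v₁` at the times `g 0` and
`g 1`, the ray `d` meets `v₂` and `v₃` at the times `g 2` and `g 3`, and `e` and `d` meet at the
time `t`. -/
def planeDefect (i j g : Fin 4 → R) (t : R) : R :=
  (g 2 - g 3) * ((t - g 1) * (g 0 - i 0) * (j 1 - i 1) - (t - g 0) * (g 1 - i 1) * (j 0 - i 0)) *
      ((j 2 - i 2) * (j 3 - i 3)) -
    (g 0 - g 1) * ((t - g 3) * (g 2 - i 2) * (j 3 - i 3) - (t - g 2) * (g 3 - i 3) * (j 2 - i 2)) *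
      ((j 0 - i 0) * (j 1 - i 1))

lemma harmonic_ne_zero {a x y t : ι} (hxy : x ≠ y) (hax : a ≠ x) (hay : a ≠ y) (htx : t ≠ x)
    (hty : t ≠ y) :
    (X t - X y) * (X x - X a) + (X t - X x) * (X y - X a) ≠ (0 : MvPolynomial ι ℤ) := by
  intro h
  have hprod : pairProd [(t, y), (x, a)] = pairProd [(t, x), (a, y)] := by
    simp only [pairProd_cons, pairProd_nil]
    linear_combination h
  have hta := exists_eq_of_pairProd_eq hprod (x := t) (y := y) (by simp)
  simp only [List.mem_cons, List.not_mem_nil, or_false, exists_eq_or_imp, exists_eq_left] at hta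
  obtain rfl : t = a := by grind
  refine pairProd_ne_neg (L := [(t, y), (x, t)]) ?_ (hprod.trans ?_)
  · simp [hty, htx.symm]
  · simp only [pairProd_cons, pairProd_nil]
    ring

lemma eq_or_eq_of_flip {a b x y : Fin 2 → ι} {t : ι} (hb : b 0 ≠ b 1) (ha : a 0 ≠ a 1)
    (hab : ∀ k l, a k ≠ b l) (hx : x 0 ≠ x 1) (hy : y 0 ≠ y 1) (hyb : ∀ k l, y k ≠ b l)
    (hty : ∀ k, t ≠ y k)
    (h : (X (y 0) - X (y 1)) * (X (b 0) - X (b 1)) *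
        ((X t - X (x 1)) * (X (x 0) - X (a 0)) + (X t - X (x 0)) * (X (x 1) - X (a 1))) =
      (X (x 0) - X (x 1)) * (X (a 0) - X (a 1)) *
        ((X t - X (y 1)) * (X (y 0) - X (b 0)) + (X t - X (y 0)) * (X (y 1) - X (b 1)) :
          MvPolynomial ι ℤ)) :
    x 0 = b 0 ∧ x 1 = b 1 ∨ x 0 = b 1 ∧ x 1 = b 0 := by
  classical
  have hmerge := congrArg (rename (Function.update id (b 1) (b 0))) h
  simp only [map_mul, map_sub, map_add, rename_X, Function.update_apply, hb, hab, hyb, id_eq,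
    if_true, if_false, sub_self, mul_zero, zero_mul, eq_comm (a := (0 : MvPolynomial ι ℤ)),
    mul_eq_zero] at hmerge
  obtain (hx | hzero) | hharmonic := hmerge
  · rw [sub_eq_zero, X_inj] at hx
    grind
  · exact (ha (by simpa [sub_eq_zero] using hzero)).elim
  · refine (harmonic_ne_zero hy (hyb 0 0).symm (hyb 1 0).symm ?_ ?_ hharmonic).elim <;> grind

lemma flip_ne {a b x y : Fin 2 → ι} {t : ι} (hb : b 0 ≠ b 1) (ha : a 0 ≠ a 1)
    (hab : ∀ k l, a k ≠ b l) (hx : x 0 ≠ x 1) (hy : y 0 ≠ y 1) (hxa : ∀ k l, x k ≠ a l)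
    (hyb : ∀ k l, y k ≠ b l) (htx : ∀ k, t ≠ x k) (hty : ∀ k, t ≠ y k) :
    (X (y 0) - X (y 1)) * (X (b 0) - X (b 1)) *
        ((X t - X (x 1)) * (X (x 0) - X (a 0)) + (X t - X (x 0)) * (X (x 1) - X (a 1))) ≠
      (X (x 0) - X (x 1)) * (X (a 0) - X (a 1)) *
        ((X t - X (y 1)) * (X (y 0) - X (b 0)) + (X t - X (y 0)) * (X (y 1) - X (b 1)) :
          MvPolynomial ι ℤ) := by
  classical
  intro h
  have hxb := eq_or_eq_of_flip hb ha hab hx hy hyb hty h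
  have hya := eq_or_eq_of_flip ha hb (fun k l ↦ (hab l k).symm) hy hx hxa htx h.symm
  let c : ι → ℤ := fun s ↦ if s = a 0 then 0 else if s = a 1 then 1 else if s = b 0 then 3 else
    if s = b 1 then 7 else 20
  have ha1 : c (a 1) = 1 := by simp [c, ha.symm]
  have hb0 : c (b 0) = 3 := by simp [c, (hab _ _).symm]
  have hb1 : c (b 1) = 7 := by simp [c, (hab _ _).symm, hb.symm]
  have ht : c t = 20 := by grind
  have heval := congrArg (eval c) h
  simp only [map_mul, map_sub, map_add, eval_X] at heval
  grind

lemma parallel_ne_zero {a x x' y y' t : ι} (hx : x ≠ x') (hy : y ≠ y') (hxa : x ≠ a)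
    (hya : y ≠ a) (hta : t ≠ a) (htx : t ≠ x) (htx' : t ≠ x') (hty : t ≠ y) (hty' : t ≠ y') :
    (X y - X y') * (X t - X x') * (X x - X a) + (X x - X x') * (X t - X y') * (X y - X a) ≠
      (0 : MvPolynomial ι ℤ) := by
  intro h
  have hprod : pairProd [(y, y'), (t, x'), (x, a)] = pairProd [(x, x'), (t, y'), (a, y)] := by
    simp only [pairProd_cons, pairProd_nil]
    linear_combination h
  have h1 := exists_eq_of_pairProd_eq hprod (x := t) (y := x') (by simp)
  have h2 := exists_eq_of_pairProd_eq hprod (x := x) (y := a) (by simp)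
  simp only [List.mem_cons, List.not_mem_nil, or_false, exists_eq_or_imp, exists_eq_left] at h1 h2
  obtain rfl : x' = y' := by grind
  have hcases : x' = a ∨ x = y := by grind
  refine pairProd_ne_neg (L := [(y, x'), (t, x'), (x, a)]) ?_ (hprod.trans ?_)
  · simp [*]
  · simp only [pairProd_cons, pairProd_nil]
    obtain rfl | rfl := hcases <;> ring

lemma eq_or_eq_of_translate {a g : Fin 4 → ι} {t : ι} (ha : Function.Injective a)
    (hg01 : g 0 ≠ g 1) (hg23 : g 2 ≠ g 3) (hga : ∀ k, g k ≠ a k)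
    (hga' : ∀ k, g k ≠ a (![2, 3, 0, 1] k)) (htg : ∀ k, t ≠ g k)
    (h : (X (g 2) - X (g 3)) * ((X t - X (g 1)) * (X (g 0) - X (a 0)) * (X (a 3) - X (a 1)) -
          (X t - X (g 0)) * (X (g 1) - X (a 1)) * (X (a 2) - X (a 0))) +
        (X (g 0) - X (g 1)) * ((X t - X (g 3)) * (X (g 2) - X (a 2)) * (X (a 3) - X (a 1)) -
          (X t - X (g 2)) * (X (g 3) - X (a 3)) * (X (a 2) - X (a 0))) =
      (0 : MvPolynomial ι ℤ)) :
    t = a 0 ∨ t = a 2 := by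
  classical
  by_contra! hta
  have hmerge := congrArg (rename (Function.update id (a 2) (a 0))) h
  have hg0 : g 0 ≠ a 2 := hga' 0
  have hg2 : g 2 ≠ a 0 := hga' 2
  simp only [map_mul, map_sub, map_add, map_zero, rename_X, Function.update_apply, ha.eq_iff,
    hga, hta, hg0, id_eq] at hmerge
  have hfactor : (X (a 3) - X (a 1) : MvPolynomial ι ℤ) ≠ 0 := by
    simp [sub_eq_zero, ha.eq_iff]
  refine parallel_ne_zero (x := g 0) (y := g 2) (a := a 0) (t := t)
    (x' := if g 1 = a 2 then a 0 else g 1) (y' := if g 3 = a 2 then a 0 else g 3)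
    ?_ ?_ (hga 0) hg2 hta.1 (htg 0) ?_ (htg 2) ?_ (mul_left_cancel₀ hfactor ?_)
  · split_ifs
    exacts [hga 0, hg01]
  · split_ifs
    exacts [hg2, hg23]
  · split_ifs
    exacts [hta.1, htg 1]
  · split_ifs
    exacts [hta.1, htg 3]
  · simp only [Fin.isValue, Fin.reduceEq, if_false, if_true] at hmerge
    linear_combination hmerge

lemma translate_ne_zero {a g : Fin 4 → ι} {t : ι} (ha : Function.Injective a)
    (hg01 : g 0 ≠ g 1) (hg23 : g 2 ≠ g 3) (hga : ∀ k, g k ≠ a k)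
    (hga' : ∀ k, g k ≠ a (![2, 3, 0, 1] k)) (htg : ∀ k, t ≠ g k) :
    (X (g 2) - X (g 3)) * ((X t - X (g 1)) * (X (g 0) - X (a 0)) * (X (a 3) - X (a 1)) -
          (X t - X (g 0)) * (X (g 1) - X (a 1)) * (X (a 2) - X (a 0))) +
        (X (g 0) - X (g 1)) * ((X t - X (g 3)) * (X (g 2) - X (a 2)) * (X (a 3) - X (a 1)) -
          (X t - X (g 2)) * (X (g 3) - X (a 3)) * (X (a 2) - X (a 0))) ≠
      (0 : MvPolynomial ι ℤ) := by
  intro h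
  have heven := eq_or_eq_of_translate ha hg01 hg23 hga hga' htg h
  have hodd := eq_or_eq_of_translate (a := a ∘ ![1, 0, 3, 2]) (g := g ∘ ![1, 0, 3, 2]) (t := t)
    (ha.comp (by decide)) hg01.symm hg23.symm (fun k ↦ hga _)
    (fun k ↦ by fin_cases k; exacts [hga' 1, hga' 0, hga' 3, hga' 2]) (fun k ↦ htg _) (by
      simp only [Function.comp_apply, Matrix.cons_val]
      linear_combination h)
  obtain rfl | rfl := heven <;> simp [ha.eq_iff] at hodd

lemma planeDefect_ne_zero {i j g : Fin 4 → ι} {t : ι} (hi : Function.Injective i)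
    (hj : j = i ∘ ![1, 0, 3, 2] ∨ j = i ∘ ![2, 3, 0, 1] ∨ j = i ∘ ![3, 2, 1, 0])
    (hg01 : g 0 ≠ g 1) (hg23 : g 2 ≠ g 3) (hgi : ∀ k, g k ≠ i k) (hgj : ∀ k, g k ≠ j k)
    (htg : ∀ k, t ≠ g k) :
    planeDefect (fun k ↦ X (i k)) (fun k ↦ X (j k)) (fun k ↦ X (g k)) (X t) ≠
      (0 : MvPolynomial ι ℤ) := by
  have hsub {k l} (hkl : k ≠ l) : (X (i k) - X (i l) : MvPolynomial ι ℤ) ≠ 0 := by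
    simp [sub_eq_zero, hi.eq_iff, hkl]
  intro h
  obtain rfl | rfl | rfl := hj
  · refine flip_ne (a := ![i 0, i 1]) (b := ![i 2, i 3]) (x := ![g 0, g 1]) (y := ![g 2, g 3])
      (t := t) (hi.ne (by decide)) (hi.ne (by decide)) ?_ hg01 hg23 ?_ ?_ ?_ ?_
      (mul_left_cancel₀ (mul_ne_zero (hsub (k := 0) (l := 1) (by decide))
        (hsub (k := 2) (l := 3) (by decide))) ?_)
    · simp [Fin.forall_fin_two, hi.eq_iff]
    · simpa [Fin.forall_fin_two] using ⟨⟨hgi 0, hgj 0⟩, hgj 1, hgi 1⟩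
    · simpa [Fin.forall_fin_two] using ⟨⟨hgi 2, hgj 2⟩, hgj 3, hgi 3⟩
    · simpa [Fin.forall_fin_two] using ⟨htg 0, htg 1⟩
    · simpa [Fin.forall_fin_two] using ⟨htg 2, htg 3⟩
    · simp only [planeDefect, Function.comp_apply, Matrix.cons_val] at h ⊢
      linear_combination -h
  · refine translate_ne_zero hi hg01 hg23 hgi hgj htg (mul_left_cancel₀ (mul_ne_zero
      (hsub (k := 0) (l := 2) (by decide)) (hsub (k := 1) (l := 3) (by decide))) ?_)
    simp only [planeDefect, Function.comp_apply, Matrix.cons_val] at h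
    linear_combination h
  · refine translate_ne_zero (a := i ∘ ![0, 1, 3, 2]) (g := g ∘ ![0, 1, 3, 2]) (t := t)
      (hi.comp (by decide)) hg01 hg23.symm (fun k ↦ hgi _)
      (fun k ↦ by fin_cases k; exacts [hgj 0, hgj 1, hgj 3, hgj 2]) (fun k ↦ htg _)
      (mul_left_cancel₀ (mul_ne_zero (hsub (k := 0) (l := 3) (by decide))
        (hsub (k := 1) (l := 2) (by decide))) ?_)
    simp only [planeDefect, Function.comp_apply, Matrix.cons_val] at h ⊢
    linear_combination -h

lemma exists_forall_eval_eq_zero_imp [IsDomain R] [Infinite R] {S : Set (MvPolynomial ι R)}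
    (hS : S.Finite) : ∃ b : ι → R, ∀ p ∈ S, eval b p = 0 → p = 0 := by
  classical
  have hprod : ∏ p ∈ hS.toFinset with p ≠ 0, p ≠ 0 :=
    prod_ne_zero_iff.2 fun p hp ↦ (mem_filter.1 hp).2
  obtain ⟨b, hb⟩ : ∃ b, eval b (∏ p ∈ hS.toFinset with p ≠ 0, p) ≠ 0 := by
    by_contra! hzero
    exact hprod (MvPolynomial.funext fun b ↦ by rw [hzero b, map_zero])
  refine ⟨b, fun p hp hpb ↦ ?_⟩
  rw [map_prod, prod_ne_zero_iff] at hb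
  by_contra hp0
  exact hb p (mem_filter.2 ⟨hS.mem_toFinset.2 hp, hp0⟩) hpb

/-- Distinct times at which the polynomial incidence relations between light rays hold only if
they hold identically. -/
structure IsGeneric (b : ι → ℤ) : Prop where
  injective : Function.Injective b
  crossRatioDefect_eq_zero (i j : Fin 4 → ι) (h : crossRatioDefect (b ∘ i) (b ∘ j) = 0) :
    crossRatioDefect (fun k ↦ (X (i k) : MvPolynomial ι ℤ)) (fun k ↦ X (j k)) = 0
  linkDefect_eq_zero (i : Fin 4 → ι) (j k : Fin 3 → ι)
    (h : linkDefect (b ∘ i) (b ∘ j) (b ∘ k) = 0) :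
    linkDefect (fun l ↦ (X (i l) : MvPolynomial ι ℤ)) (fun l ↦ X (j l)) (fun l ↦ X (k l)) = 0
  planeDefect_eq_zero (i j g : Fin 4 → ι) (t : ι)
    (h : planeDefect (b ∘ i) (b ∘ j) (b ∘ g) (b t) = 0) :
    planeDefect (fun k ↦ (X (i k) : MvPolynomial ι ℤ)) (fun k ↦ X (j k)) (fun k ↦ X (g k))
      (X t) = 0

lemma exists_isGeneric [Finite ι] : ∃ b : ι → ℤ, IsGeneric b := by
  let difference (s : ι × ι) : MvPolynomial ι ℤ := X s.1 - X s.2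
  let crossRatio (s : (Fin 4 → ι) × (Fin 4 → ι)) : MvPolynomial ι ℤ :=
    crossRatioDefect (fun k ↦ X (s.1 k)) (fun k ↦ X (s.2 k))
  let link (s : (Fin 4 → ι) × (Fin 3 → ι) × (Fin 3 → ι)) : MvPolynomial ι ℤ :=
    linkDefect (fun k ↦ X (s.1 k)) (fun k ↦ X (s.2.1 k)) (fun k ↦ X (s.2.2 k))
  let plane (s : (Fin 4 → ι) × (Fin 4 → ι) × (Fin 4 → ι) × ι) : MvPolynomial ι ℤ :=
    planeDefect (fun k ↦ X (s.1 k)) (fun k ↦ X (s.2.1 k)) (fun k ↦ X (s.2.2.1 k)) (X s.2.2.2)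
  obtain ⟨b, hb⟩ := exists_forall_eval_eq_zero_imp
    ((Set.finite_range difference).union <| (Set.finite_range crossRatio).union <|
      (Set.finite_range link).union (Set.finite_range plane))
  refine ⟨b, fun x y hxy ↦ ?_, fun i j h ↦ ?_, fun i j k h ↦ ?_, fun i j g t h ↦ ?_⟩
  · have := hb _ (.inl ⟨(x, y), rfl⟩) (by simp [difference, hxy])
    simpa [difference, sub_eq_zero] using this
  · exact hb _ (.inr <| .inl ⟨(i, j), rfl⟩) (by simpa [crossRatio, crossRatioDefect] using h)
  · exact hb _ (.inr <| .inr <| .inl ⟨(i, j, k), rfl⟩) (by simpa [link, linkDefect] using h)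
  · exact hb _ (.inr <| .inr <| .inr ⟨(i, j, g, t), rfl⟩) (by simpa [plane, planeDefect] using h)

end Generic

/-! ### Light rays -/

/-- A light ray in `κ` space dimensions: a particle moving along a straight line at a speed whose
square is `c`. -/
@[ext]
structure LightRay (κ : Type*) [Fintype κ] (c : ℤ) where
  /-- The position at time zero. -/
  origin : κ → ℤ
  /-- The displacement per unit of time. -/
  velocity : κ → ℤ
  velocity_dotProduct_self : velocity ⬝ᵥ velocity = c

namespace LightRay

variable {κ : Type*} [Fintype κ] {c : ℤ} {p q v w : LightRay κ c} {i j k s t : ℤ}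

/-- The position of a light ray at a given time. -/
def position (p : LightRay κ c) (t : ℤ) : κ → ℤ := p.origin + t • p.velocity

lemma position_eq_add (p : LightRay κ c) (s t : ℤ) :
    p.position t = p.position s + (t - s) • p.velocity := by
  simp only [position]
  module

lemma eq_of_velocity_eq (hvel : p.velocity = q.velocity) (h : p.position t = q.position t) :
    p = q :=
  LightRay.ext (by simpa [position, hvel] using h) hvel

lemma eq_of_position_eq (hpq : p ≠ q) (hs : p.position s = q.position s)
    (ht : p.position t = q.position t) : s = t := by
  by_contra hst
  have hvel : (t - s) • p.velocity = (t - s) • q.velocity := by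
    rw [p.position_eq_add s, q.position_eq_add s, hs] at ht
    exact add_left_cancel ht
  exact hpq (eq_of_velocity_eq (smul_right_injective _ (sub_ne_zero.2 (Ne.symm hst)) hvel) hs)

/-- The squared difference of the velocities of two light rays. -/
def gap (p q : LightRay κ c) : ℤ := (q.velocity - p.velocity) ⬝ᵥ (q.velocity - p.velocity)

lemma gap_eq (p q : LightRay κ c) : p.gap q = 2 * (c - p.velocity ⬝ᵥ q.velocity) := by
  simp only [gap, sub_dotProduct, dotProduct_sub, velocity_dotProduct_self,
    dotProduct_comm q.velocity p.velocity]
  ring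

lemma gap_pos (hpq : p ≠ q) (h : p.position t = q.position t) : 0 < p.gap q :=
  (sum_nonneg fun _ _ ↦ mul_self_nonneg _).lt_of_ne' fun h0 ↦
    hpq (eq_of_velocity_eq (sub_eq_zero.1 (dotProduct_self_eq_zero.1 h0)).symm h)

/-- The squared Minkowski distance between the event at time `s` on `p` and the one at time `t`
on `q`. -/
def interval (p q : LightRay κ c) (s t : ℤ) : ℤ :=
  (q.position t - p.position s) ⬝ᵥ (q.position t - p.position s) - c * (t - s) ^ 2

lemma interval_eq_left (hp : p.position i = v.position i) (hq : q.position j = v.position j) :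
    p.interval q s j = (s - i) * (j - i) * p.gap v := by
  rw [interval, hq, v.position_eq_add i j, p.position_eq_add i s, hp, gap_eq]
  simp only [sub_dotProduct, dotProduct_sub, add_dotProduct, dotProduct_add, smul_dotProduct,
    dotProduct_smul, velocity_dotProduct_self, dotProduct_comm v.velocity, smul_eq_mul]
  ring

lemma interval_comm (p q : LightRay κ c) (s t : ℤ) : p.interval q s t = q.interval p t s := by
  simp only [interval, sub_dotProduct, dotProduct_sub]
  ring

lemma interval_eq_right (hp : p.position i = v.position i) (hq : q.position j = v.position j) :
    p.interval q i t = (t - j) * (i - j) * q.gap v := by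
  rw [interval_comm, interval_eq_left hq hp]

lemma eq_of_position_eq_of_position_eq (hpq : p ≠ q) (hqv : q ≠ v)
    (hi : p.position i = q.position i) (hj : q.position j = v.position j)
    (hk : p.position k = v.position k) : i = j := by
  have hzero : (j - i) * (k - i) * q.gap p = 0 := by
    rw [← interval_eq_left hi.symm hk.symm, interval, hj, v.position_eq_add j k,
      add_sub_cancel_left, smul_dotProduct, dotProduct_smul, velocity_dotProduct_self]
    simp only [smul_eq_mul]
    ring
  obtain (hij | hik) | hgap := by simpa only [mul_eq_zero, sub_eq_zero] using hzero
  · exact hij.symm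
  · exact eq_of_position_eq hqv (hi.symm.trans (hik ▸ hk)) hj
  · exact ((gap_pos hpq.symm hi.symm).ne' hgap).elim

/-- A line meets a sphere in at most two points. -/
lemma eq_or_eq_of_smul_sub_eq {m : ℤ}
    (h : k • (v.velocity - p.velocity) = m • (q.velocity - p.velocity)) :
    k = 0 ∨ v.velocity = p.velocity ∨ v.velocity = q.velocity := by
  have hsq : m * (k - m) * q.gap p = 0 := by
    have hv : k • v.velocity = (k - m) • p.velocity + m • q.velocity := by
      linear_combination h
    have hvv := congrArg (fun x ↦ x ⬝ᵥ x) hv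
    simp only [add_dotProduct, dotProduct_add, smul_dotProduct, dotProduct_smul,
      velocity_dotProduct_self, dotProduct_comm p.velocity, smul_eq_mul] at hvv
    rw [gap_eq]
    linear_combination hvv
  have hvp (h0 : k • (v.velocity - p.velocity) = 0) : k = 0 ∨ v.velocity = p.velocity := by
    simpa only [smul_eq_zero, sub_eq_zero] using h0
  obtain (rfl | hkm) | hgap := by simpa only [mul_eq_zero] using hsq
  · exact (hvp (by rw [h, zero_smul])).imp_right .inl
  · have hvq : k • (v.velocity - q.velocity) = 0 := by
      obtain rfl := sub_eq_zero.1 hkm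
      linear_combination h
    exact (smul_eq_zero.1 hvq).imp_right fun h0 ↦ .inr (sub_eq_zero.1 h0)
  · have hqp := sub_eq_zero.1 (dotProduct_self_eq_zero.1 hgap)
    exact (hvp (by rw [h, hqp, sub_self, smul_zero])).imp_right .inl

/-- Unless the coefficients sum to zero, the relation expresses `v.velocity` as an affine
combination of `p.velocity` and `q.velocity`. -/
lemma sum_eq_zero_of_sum_smul_position_sub_eq_zero {α : Type*} [Fintype α] {a τ : α → ℤ}
    (hpv : p ≠ v) (hqv : q ≠ v) (hi : p.position i = v.position i)
    (hj : q.position j = v.position j) (hij : i ≠ j)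
    (h : ∑ k, a k • (q.position (τ k) - p.position (τ k)) = 0) : ∑ k, a k = 0 := by
  have hline : ((∑ k, a k) * (j - i)) • (v.velocity - p.velocity) =
      ((∑ k, a k) * j - ∑ k, a k * τ k) • (q.velocity - p.velocity) := by
    have hpos (k) : q.position (τ k) - p.position (τ k) =
        (j - i) • (v.velocity - p.velocity) + (τ k - j) • (q.velocity - p.velocity) := by
      rw [q.position_eq_add j, p.position_eq_add i, hi, hj, v.position_eq_add i j]
      module
    simp only [hpos, smul_add, smul_smul, sum_add_distrib, ← sum_smul, ← sum_mul, mul_sub,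
      sum_sub_distrib] at h
    linear_combination h
  obtain h0 | hvp | hvq := eq_or_eq_of_smul_sub_eq hline
  · exact (mul_eq_zero.1 h0).resolve_right (sub_ne_zero.2 hij.symm)
  · exact (hpv (eq_of_velocity_eq hvp.symm hi)).elim
  · exact (hqv (eq_of_velocity_eq hvq.symm hj)).elim

lemma four_cycle {u u' v w : LightRay κ c} {i i' j j' : ℤ} (hi : u.position i = v.position i)
    (hj : u'.position j = v.position j) (hi' : u.position i' = w.position i')
    (hj' : u'.position j' = w.position j') :
    (i' - i) * (j - i) * u.gap v = (j - j') * (i' - j') * u'.gap w := by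
  rw [← interval_eq_left hi hj, interval_eq_right hi' hj']

lemma three_common {u u' v w z : LightRay κ c} {i i' i'' j j' j'' : ℤ}
    (hi : u.position i = v.position i) (hi' : u.position i' = w.position i')
    (hi'' : u.position i'' = z.position i'') (hj : u'.position j = v.position j)
    (hj' : u'.position j' = w.position j') (hj'' : u'.position j'' = z.position j'') :
    u.gap v * ((j - i) * (i - i'') * (j' - j'')) =
      u.gap w * ((j' - i') * (i' - i'') * (j - j'')) := by
  linear_combination (j - j'') * four_cycle hi' hj' hi'' hj'' -
    (j' - j'') * four_cycle hi hj hi'' hj''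

lemma crossRatioDefect_eq_zero {u u' : LightRay κ c} {v : Fin 4 → LightRay κ c} {i j : Fin 4 → ℤ}
    (hi : ∀ k, u.position (i k) = (v k).position (i k))
    (hj : ∀ k, u'.position (j k) = (v k).position (j k)) (huv : ∀ k, u ≠ v k)
    (hij : ∀ k, i k ≠ j k) : crossRatioDefect i j = 0 := by
  have hgap (k) : u.gap (v k) * (j k - i k) ≠ 0 :=
    mul_ne_zero (gap_pos (huv k) (hi k)).ne' (sub_ne_zero.2 (hij k).symm)
  have h2 := three_common (hi 0) (hi 1) (hi 2) (hj 0) (hj 1) (hj 2)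
  have h3 := three_common (hi 0) (hi 1) (hi 3) (hj 0) (hj 1) (hj 3)
  refine mul_left_cancel₀ (mul_ne_zero (hgap 0) (hgap 1)) ?_
  rw [crossRatioDefect]
  linear_combination u.gap (v 1) * (j 1 - i 1) * (i 1 - i 3) * (j 0 - j 3) * h2 -
    u.gap (v 1) * (j 1 - i 1) * (i 1 - i 2) * (j 0 - j 2) * h3

lemma linkDefect_eq_zero {u u' u'' : LightRay κ c} {v : Fin 4 → LightRay κ c} {a : Fin 4 → ℤ}
    {b d : Fin 3 → ℤ} (ha : ∀ k, u.position (a k) = (v k).position (a k))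
    (hb : ∀ k, u'.position (b k) = (v (![0, 1, 2] k)).position (b k))
    (hd : ∀ k, u''.position (d k) = (v (![0, 1, 3] k)).position (d k)) (hu0 : u ≠ v 0)
    (hu1 : u ≠ v 1) : linkDefect a b d = 0 := by
  have h2 := three_common (ha 0) (ha 1) (ha 2) (hb 0) (hb 1) (hb 2)
  have h3 := three_common (ha 0) (ha 1) (ha 3) (hd 0) (hd 1) (hd 2)
  refine mul_left_cancel₀ (mul_ne_zero (gap_pos hu0 (ha 0)).ne' (gap_pos hu1 (ha 1)).ne') ?_
  rw [linkDefect]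
  linear_combination u.gap (v 1) * (d 1 - a 1) * (a 1 - a 3) * (d 0 - d 2) * h2 -
    u.gap (v 1) * (b 1 - a 1) * (a 1 - a 2) * (b 0 - b 2) * h3

/-- Affine interpolation of the motion of `e` relative to `u` between its meetings with `v` and
`w`. -/
lemma smul_position_sub_position {e u v w : LightRay κ c} {g g' : ℤ}
    (hu : u.position i = v.position i) (hu' : u.position j = w.position j)
    (he : e.position g = v.position g) (he' : e.position g' = w.position g') (t : ℤ) :
    (g - g') • (e.position t - u.position t) =
      ((t - g') * (g - i)) • (v.velocity - u.velocity) -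
        ((t - g) * (g' - j)) • (w.velocity - u.velocity) := by
  have hv : e.position g - u.position g = (g - i) • (v.velocity - u.velocity) := by
    rw [he, v.position_eq_add i g, u.position_eq_add i g, hu]
    module
  have hw : e.position g' - u.position g' = (g' - j) • (w.velocity - u.velocity) := by
    rw [he', w.position_eq_add j g', u.position_eq_add j g', hu']
    module
  rw [mul_smul, mul_smul, ← hv, ← hw]
  simp only [position]
  module

lemma planeDefect_eq_zero {u u' e d : LightRay κ c} {v : Fin 4 → LightRay κ c}
    {i j g : Fin 4 → ℤ} (hi : ∀ k, u.position (i k) = (v k).position (i k))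
    (hj : ∀ k, u'.position (j k) = (v k).position (j k))
    (hg0 : e.position (g 0) = (v 0).position (g 0)) (hg1 : e.position (g 1) = (v 1).position (g 1))
    (hg2 : d.position (g 2) = (v 2).position (g 2)) (hg3 : d.position (g 3) = (v 3).position (g 3))
    (ht : e.position t = d.position t) (huv : u ≠ v 0) (huv' : u' ≠ v 0)
    (hij : i 0 ≠ j 0) : planeDefect i j g t = 0 := by
  have hvel (k) : u'.position (j k) - u.position (j k) =
      (j k - i k) • ((v k).velocity - u.velocity) := by
    rw [hj, (v k).position_eq_add (i k), u.position_eq_add (i k), hi]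
    module
  have he := smul_position_sub_position (hi 0) (hi 1) hg0 hg1 t
  have hd := smul_position_sub_position (hi 2) (hi 3) hg2 hg3 t
  rw [← ht] at hd
  have hsum := sum_eq_zero_of_sum_smul_position_sub_eq_zero (α := Fin 4) (τ := j)
    (a := ![(g 2 - g 3) * (t - g 1) * (g 0 - i 0) * (j 1 - i 1) * (j 2 - i 2) * (j 3 - i 3),
      -((g 2 - g 3) * (t - g 0) * (g 1 - i 1) * (j 0 - i 0) * (j 2 - i 2) * (j 3 - i 3)),
      -((g 0 - g 1) * (t - g 3) * (g 2 - i 2) * (j 3 - i 3) * (j 0 - i 0) * (j 1 - i 1)),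
      (g 0 - g 1) * (t - g 2) * (g 3 - i 3) * (j 2 - i 2) * (j 0 - i 0) * (j 1 - i 1)])
    huv huv' (hi 0) (hj 0) hij ?_
  · simp only [Fin.sum_univ_four, Matrix.cons_val] at hsum
    rw [planeDefect]
    linear_combination hsum
  · simp only [Fin.sum_univ_four, Matrix.cons_val, hvel]
    linear_combination (norm := module) ((j 0 - i 0) * (j 1 - i 1) * (j 2 - i 2) * (j 3 - i 3)) •
      ((g 0 - g 1) • hd - (g 2 - g 3) • he)

end LightRay

section ComplAdj

variable {ι α P V : Type*} {l : ι → P → V} {p q s : P} {i j : ι}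

lemma ne_of_compl_adj (h : (intersectionGraph l)ᶜ.Adj p q) (hi : l i p = l i s)
    (hj : l j q = l j s) : i ≠ j := by
  rintro rfl
  exact ((SimpleGraph.compl_adj _ _ _).1 h).2 ⟨h.ne, i, hi.trans hj.symm⟩

lemma injective_of_pairwise_compl_adj {v : α → P} {f : α → ι}
    (hv : Pairwise fun k m ↦ (intersectionGraph l)ᶜ.Adj (v k) (v m))
    (hf : ∀ k, l (f k) p = l (f k) (v k)) : Function.Injective f := fun k m hkm ↦
  by_contra fun hne ↦ ne_of_compl_adj (hv hne) (hf k).symm (hf m).symm hkm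

end ComplAdj

namespace LightRay

variable {κ : Type*} [Fintype κ] {c : ℤ} {u u₀ u₁ : LightRay κ c} {v : Fin 4 → LightRay κ c}
  {a : Fin 4 → ℤ}

lemma false_of_transposed_times (ha : Function.Injective a)
    (hu : ∀ k, u.position (a k) = (v k).position (a k)) (hne : ∀ k, u ≠ v k)
    (h₀₁ : u₀.position (a 2) = (v 1).position (a 2))
    (h₀₂ : u₀.position (a 1) = (v 2).position (a 1))
    (h₀₃ : u₀.position (a 0) = (v 3).position (a 0))
    (h₁₀ : u₁.position (a 2) = (v 0).position (a 2))
    (h₁₂ : u₁.position (a 0) = (v 2).position (a 0))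
    (h₁₃ : u₁.position (a 1) = (v 3).position (a 1)) : False := by
  have hsub {k l : Fin 4} (hkl : k ≠ l) : a k - a l ≠ 0 := sub_ne_zero.2 (ha.ne hkl)
  let P (k : Fin 4) : ℤ := u.gap (v k) * (a k - a 3)
  have hrow₀ : P 1 * (a 1 - a 0) + P 2 * (a 2 - a 0) = 0 := by
    refine mul_left_cancel₀ (hsub (k := 2) (l := 1) (by decide)) ?_
    linear_combination three_common (hu 1) (hu 2) (hu 3) h₀₁ h₀₂ h₀₃
  have hrow₁ : P 0 * (a 0 - a 1) + P 2 * (a 2 - a 1) = 0 := by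
    refine mul_left_cancel₀ (hsub (k := 2) (l := 0) (by decide)) ?_
    linear_combination three_common (hu 0) (hu 2) (hu 3) h₁₀ h₁₂ h₁₃
  have hsum : P 0 + P 1 + P 2 = 0 := by
    refine mul_left_cancel₀ (hsub (k := 1) (l := 0) (by decide)) ?_
    linear_combination hrow₀ - hrow₁
  have hsq : u.gap (v 0) * (a 0 - a 3) ^ 2 + u.gap (v 1) * (a 1 - a 3) ^ 2 +
      u.gap (v 2) * (a 2 - a 3) ^ 2 = 0 := by
    linear_combination hrow₀ + (a 0 - a 3) * hsum
  have hpos (k : Fin 4) (hk : k ≠ 3) : 0 < u.gap (v k) * (a k - a 3) ^ 2 :=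
    mul_pos (gap_pos (hne k) (hu k)) (sq_pos_of_ne_zero (hsub hk))
  linarith [hpos 0 (by decide), hpos 1 (by decide), hpos 2 (by decide)]

end LightRay

section Snapshot

variable {ι κ : Type*} [Fintype κ] {c : ℤ} {b : ι → ℤ} {p q u u' u'' : LightRay κ c}

/-- The positions of light rays at the times `b`. As a function of the part `i` and the edge `p` it
encodes the `ι`-partite hypergraph whose vertices are events at the times `b` and whose edges are
the light rays. -/
def snapshot (b : ι → ℤ) (i : ι) (p : LightRay κ c) : κ → ℤ := p.position (b i)

lemma isLinearTriangleFree_snapshot (hb : Function.Injective b) :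
    IsLinearTriangleFree (snapshot (κ := κ) (c := c) b) where
  linear _ _ _ _ hpq hi hj := hb (LightRay.eq_of_position_eq hpq hi hj)
  triangle _ _ _ _ _ _ hpq hqs _ hi hj hk :=
    hb (LightRay.eq_of_position_eq_of_position_eq hpq hqs hi hj hk)

lemma false_of_swapped_times (hb : IsGeneric b) {v : Fin 3 → LightRay κ c} {a : Fin 4 → ι}
    {g : Fin 3 → ι} (ha : Function.Injective a) (hg : Function.Injective g)
    (hu : ∀ k, u ≠ v k ∧ snapshot b (a k.castSucc) u = snapshot b (a k.castSucc) (v k))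
    (hu' : ∀ k, snapshot b (a (![1, 0, 3] k)) u' = snapshot b (a (![1, 0, 3] k)) (v k))
    (hu'' : ∀ k, snapshot b (g k) u'' = snapshot b (g k) (v k))
    (huu'' : (intersectionGraph (snapshot b))ᶜ.Adj u u'')
    (hu'u'' : (intersectionGraph (snapshot b))ᶜ.Adj u' u'') : False := by
  refine linkDefect_swap_ne_zero ha hg (ne_of_compl_adj huu'' (hu 0).2 (hu'' 0)).symm
    (ne_of_compl_adj hu'u'' (hu' 0) (hu'' 0)).symm (ne_of_compl_adj hu'u'' (hu' 1) (hu'' 1)).symm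
    (ne_of_compl_adj huu'' (hu 1).2 (hu'' 1)).symm
    (hb.linkDefect_eq_zero ![a 0, a 1, a 2, a 2] ![a 1, a 0, a 3] g
      (LightRay.linkDefect_eq_zero (u := u) (u' := u') (u'' := u'') (v := ![v 0, v 1, v 2, v 2])
        ?_ ?_ ?_ (hu 0).1 (hu 1).1))
  all_goals
    intro k
    fin_cases k
  exacts [(hu 0).2, (hu 1).2, (hu 2).2, (hu 2).2, hu' 0, hu' 1, hu' 2, hu'' 0, hu'' 1, hu'' 2]

lemma eq_comp_of_meets (hb : IsGeneric b) {v : Fin 4 → LightRay κ c} {i j : Fin 4 → ι}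
    (huu' : (intersectionGraph (snapshot b))ᶜ.Adj u u')
    (hv : Pairwise fun k l ↦ (intersectionGraph (snapshot b))ᶜ.Adj (v k) (v l))
    (hi : ∀ k, u ≠ v k ∧ snapshot b (i k) u = snapshot b (i k) (v k))
    (hj : ∀ k, snapshot b (j k) u' = snapshot b (j k) (v k)) :
    j = i ∘ ![1, 0, 3, 2] ∨ j = i ∘ ![2, 3, 0, 1] ∨ j = i ∘ ![3, 2, 1, 0] := by
  have hij (k) : i k ≠ j k := ne_of_compl_adj huu' (hi k).2 (hj k)
  exact eq_comp_of_crossRatioDefect_eq_zero (injective_of_pairwise_compl_adj hv fun k ↦ (hi k).2)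
    (injective_of_pairwise_compl_adj hv hj) hij <| hb.crossRatioDefect_eq_zero i j <|
      LightRay.crossRatioDefect_eq_zero (fun k ↦ (hi k).2) hj (fun k ↦ (hi k).1)
        fun k ↦ hb.injective.ne (hij k)

lemma not_containsK34Minus_snapshot (hb : IsGeneric b) :
    ¬ ContainsK34Minus (intersectionGraph (snapshot (κ := κ) (c := c) b)) := by
  rintro ⟨u, v, hu, hv, huv⟩
  choose hne i hi using fun k ↦ huv 0 k (.inl (by decide))
  choose j hj using fun k ↦ (huv 1 k (.inl (by decide))).2
  have hswap (σ : Fin 4 → Fin 4) (hσ : Function.Injective σ) (hσ3 : ∀ k : Fin 3, σ k.castSucc ≠ 3)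
      (h : ∀ k : Fin 3, j (σ k.castSucc) = i (σ (![1, 0, 3] k))) : False := by
    choose g hg using fun k : Fin 3 ↦ (huv 2 (σ k.castSucc) (.inr (hσ3 k))).2
    have hginj := injective_of_pairwise_compl_adj
      (hv.comp_of_injective (hσ.comp (Fin.castSucc_injective 3))) hg
    exact false_of_swapped_times hb ((injective_of_pairwise_compl_adj hv hi).comp hσ) hginj
      (fun _ ↦ ⟨hne _, hi _⟩) (fun k ↦ h k ▸ hj _) hg (hu (by decide)) (hu (by decide))
  obtain rfl | rfl | rfl := eq_comp_of_meets hb (hu (by decide)) hv (fun k ↦ ⟨hne k, hi k⟩) hj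
  · exact hswap ![0, 1, 2, 3] (by decide) (by decide) fun k ↦ by fin_cases k <;> rfl
  · exact hswap ![0, 2, 1, 3] (by decide) (by decide) fun k ↦ by fin_cases k <;> rfl
  · exact hswap ![1, 2, 0, 3] (by decide) (by decide) fun k ↦ by fin_cases k <;> rfl

lemma not_containsLinkedK24_snapshot (hb : IsGeneric b) :
    ¬ ContainsLinkedK24 (intersectionGraph (snapshot (κ := κ) (c := c) b)) := by
  rintro ⟨u, v, e, d, hu, hv, huv, hued, ⟨he0, he1, he2, he3⟩, ⟨hd0, hd1, hd2, hd3⟩, -, t, ht⟩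
  choose hne i hi using huv 0
  choose hne' j hj using huv 1
  obtain ⟨g, hg⟩ : ∃ g : Fin 4 → ι, ∀ k, snapshot b (g k) (![e, e, d, d] k) =
      snapshot b (g k) (v k) := by
    refine ⟨![he0.2.choose, he1.2.choose, hd2.2.choose, hd3.2.choose], fun k ↦ ?_⟩
    fin_cases k
    exacts [he0.2.choose_spec, he1.2.choose_spec, hd2.2.choose_spec, hd3.2.choose_spec]
  have hcross := eq_comp_of_meets hb (hu (by decide)) hv (fun k ↦ ⟨hne k, hi k⟩) hj
  have hued' (r) (k) : (intersectionGraph (snapshot b))ᶜ.Adj (u r) (![e, e, d, d] k) := by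
    fin_cases k
    exacts [(hued r).1, (hued r).1, (hued r).2, (hued r).2]
  refine planeDefect_ne_zero (t := t) (injective_of_pairwise_compl_adj hv hi) hcross
    (ne_of_compl_adj (hv (by decide)) (hg 0).symm (hg 1).symm)
    (ne_of_compl_adj (hv (by decide)) (hg 2).symm (hg 3).symm)
    (fun k ↦ (ne_of_compl_adj (hued' 0 k) (hi k) (hg k)).symm)
    (fun k ↦ (ne_of_compl_adj (hued' 1 k) (hj k) (hg k)).symm) (fun k ↦ ?_)
    (hb.planeDefect_eq_zero i j g t (LightRay.planeDefect_eq_zero hi hj (hg 0) (hg 1) (hg 2) (hg 3)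
      ht (hne 0) (hne' 0) (hb.injective.ne (ne_of_compl_adj (hu (by decide)) (hi 0) (hj 0)))))
  fin_cases k
  · exact ne_of_compl_adj hd0 ht.symm (hg 0).symm
  · exact ne_of_compl_adj hd1 ht.symm (hg 1).symm
  · exact ne_of_compl_adj he2 ht (hg 2).symm
  · exact ne_of_compl_adj he3 ht (hg 3).symm

lemma hasLink_of_meets (hb : IsGeneric b) {u v : Fin 4 → LightRay κ c} {T : Fin 4 → Fin 4 → ι}
    (hne : ∀ k, u 3 ≠ v k)
    (hT : ∀ r k, r ≠ k ∨ r = 3 → snapshot b (T r k) (u r) = snapshot b (T r k) (v k))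
    {i j k : Fin 4} (hij : i ≠ j) (hik : i ≠ k) (hjk : j ≠ k) (hi : i ≠ 3) (hk : k ≠ 3) :
    HasLink T i j k := by
  have h := hb.linkDefect_eq_zero ![T 3 j, T 3 3, T 3 k, T 3 i] ![T i j, T i 3, T i k]
    ![T k j, T k 3, T k i] <| LightRay.linkDefect_eq_zero (u := u 3) (u' := u i) (u'' := u k)
      (v := ![v j, v 3, v k, v i]) ?_ ?_ ?_ (hne j) (hne 3)
  · simpa [HasLink, linkDefect] using h
  all_goals
    intro m
    fin_cases m
  exacts [hT 3 j (.inr rfl), hT 3 3 (.inr rfl), hT 3 k (.inr rfl), hT 3 i (.inr rfl),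
    hT i j (.inl hij), hT i 3 (.inl hi), hT i k (.inl hik), hT k j (.inl hjk.symm),
    hT k 3 (.inl hk), hT k i (.inl hik.symm)]

lemma not_containsK44Minus_snapshot (hb : IsGeneric b) :
    ¬ ContainsK44Minus (intersectionGraph (snapshot (κ := κ) (c := c) b)) := by
  rintro ⟨u, v, hu, hv, huv⟩
  have hmeet (r k) : ∃ i, r ≠ k ∨ r = 3 → snapshot b i (u r) = snapshot b i (v k) := by
    by_cases h : r ≠ k ∨ r = 3
    · exact (huv r k h).2.imp fun _ hi _ ↦ hi
    · exact ⟨(huv 3 3 (.inr rfl)).2.choose, fun h' ↦ (h h').elim⟩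
  choose T hT using hmeet
  have hne (k) : u 3 ≠ v k := (huv 3 k (.inr rfl)).1
  have hlatin : IsPartialLatin T :=
    { row := fun r k m hk hm h ↦ by_contra fun hkm ↦
        ne_of_compl_adj (hv hkm) (hT r k hk).symm (hT r m hm).symm h
      col := fun r s k hr hs h ↦ by_contra fun hrs ↦
        ne_of_compl_adj (hu hrs) (hT r k hr) (hT s k hs) h }
  have hlink (i j k : Fin 4) (hij : i ≠ j) (hik : i ≠ k) (hjk : j ≠ k) (hi : i ≠ 3) (_ : j ≠ 3)
      (hk : k ≠ 3) : HasLink T i j k := hasLink_of_meets hb hne hT hij hik hjk hi hk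
  have hlast (k : Fin 4) (hk : k ≠ 3) :
      snapshot b (T 3 k) (u k) = snapshot b (T 3 k) (v 3) :=
    hlatin.eq_of_hasLink hlink hk ▸ hT k 3 (.inl hk)
  have hother (i j k : Fin 4) (h : i ≠ j ∧ i ≠ k ∧ j ≠ k ∧ i ≠ 3 ∧ j ≠ 3 ∧ k ≠ 3) :
      snapshot b (T 3 j) (u i) = snapshot b (T 3 j) (v k) := by
    obtain ⟨hij, hik, hjk, hi, hj, hk⟩ := h
    exact hlatin.eq_three_of_hasLink hlink hij hik hjk hi hj hk ▸ hT i k (.inl hik)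
  exact LightRay.false_of_transposed_times (a := b ∘ T 3)
    (hb.injective.comp fun k m ↦ hlatin.row (.inr rfl) (.inr rfl)) (fun k ↦ hT 3 k (.inr rfl)) hne
    (hother 0 2 1 (by decide)) (hother 0 1 2 (by decide)) (hlast 0 (by decide))
    (hother 1 2 0 (by decide)) (hother 1 0 2 (by decide)) (hlast 1 (by decide))

lemma isSparse_snapshot (hb : IsGeneric b) : IsSparse (snapshot (κ := κ) (c := c) b) where
  toIsLinearTriangleFree := isLinearTriangleFree_snapshot hb.injective
  not_containsK34Minus := not_containsK34Minus_snapshot hb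
  not_containsK44Minus := not_containsK44Minus_snapshot hb
  not_containsLinkedK24 := not_containsLinkedK24_snapshot hb

end Snapshot

/-! ### The extremal number -/

section Extremal

variable {W : Type*} [DecidableEq W] {r n v e : ℕ}

lemma card_le_extremalF {H : Finset (Finset (Fin n))} (hr : ∀ A ∈ H, #A = r) (hH : GFree H v e) :
    #H ≤ extremalF r n v e := by
  refine le_csSup ⟨Fintype.card (Finset (Fin n)), ?_⟩ ⟨H, hr, hH, rfl⟩
  rintro m ⟨H', -, -, rfl⟩
  exact card_le_univ H'

lemma GFree.image {α : Type*} [DecidableEq α] {H : Finset (Finset W)} {f : W → α}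
    (hH : GFree H v e) (hf : Set.InjOn f (H.biUnion id)) : GFree (H.image (·.image f)) v e := by
  intro S hS hSe
  obtain ⟨S, hSH, rfl⟩ := subset_image_iff.1 hS
  replace hSH : S ⊆ H := mod_cast hSH
  have hfS : Set.InjOn f (S.biUnion id) :=
    hf.mono (mod_cast biUnion_subset_biUnion_of_subset_left _ hSH)
  rw [card_image_of_injOn (injOn_image_of_biUnion_injOn hfS)] at hSe
  have himage : (S.image (·.image f)).biUnion id = (S.biUnion id).image f := by
    rw [image_biUnion, biUnion_image]
    rfl
  rw [himage, card_image_of_injOn hfS]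
  exact hH S hSH hSe

lemma GFree.card_le_extremalF {H : Finset (Finset W)} (hr : ∀ A ∈ H, #A = r) (hH : GFree H v e)
    (hn : #(H.biUnion id) ≤ n) (hn0 : n ≠ 0) : #H ≤ extremalF r n v e := by
  have : NeZero n := ⟨hn0⟩
  obtain ⟨f, -, hf⟩ := (H.biUnion id).finite_toSet.exists_injOn_of_encard_le
    (t := (Set.univ : Set (Fin n))) <| by
      simpa only [Set.encard_coe_eq_coe_finsetCard, Set.encard_univ,
        ENat.card_eq_coe_fintype_card, Fintype.card_fin, Nat.cast_le] using hn
  rw [← card_image_of_injOn (injOn_image_of_biUnion_injOn hf)]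
  refine _root_.card_le_extremalF (forall_mem_image.2 fun A hA ↦ ?_) (hH.image hf)
  rw [card_image_of_injOn (hf.mono (mod_cast subset_biUnion_of_mem id hA)), hr A hA]

end Extremal

section Encoding

variable {ι P V : Type*} [Fintype ι] {l : ι → P → V} {n e : ℕ}

/-- The edge `p` of the `ι`-partite hypergraph encoded by `l`. -/
def edge (l : ι → P → V) (p : P) : Finset (ι × V) :=
  univ.map ⟨fun i ↦ (i, l i p), fun _ _ h ↦ congrArg Prod.fst h⟩

lemma mk_mem_edge {p : P} {i : ι} {y : V} : (i, y) ∈ edge l p ↔ l i p = y := by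
  rw [edge, mem_map]
  constructor
  · rintro ⟨_, -, h⟩
    obtain ⟨rfl, rfl⟩ := Prod.mk.inj h
    rfl
  · rintro rfl
    exact ⟨i, mem_univ i, rfl⟩

lemma card_edge (p : P) : #(edge l p) = Fintype.card ι := card_map _

lemma IsLinearTriangleFree.edge_injective [Nontrivial ι] (hl : IsLinearTriangleFree l) :
    Function.Injective (edge l) := by
  intro p q hpq
  by_contra hne
  have hmeet (i : ι) : l i p = l i q := mk_mem_edge.1 (hpq ▸ mk_mem_edge.2 rfl)
  obtain ⟨i, j, hij⟩ := exists_pair_ne ι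
  exact hij (hl.linear hne (hmeet i) (hmeet j))

lemma card_biUnion_edge_add_excess [DecidableEq ι] [DecidableEq V] (S : Finset P) :
    #(S.biUnion (edge l)) + excess l S = Fintype.card ι * #S := by
  have hsigma : S.biUnion (edge l) = (univ.sigma fun i ↦ S.image (l i)).map
      (Equiv.sigmaEquivProd ι V).toEmbedding := by
    ext ⟨i, y⟩
    simp [mk_mem_edge]
  rw [hsigma, card_map, card_sigma, excess, ← sum_add_distrib,
    sum_congr rfl fun i _ ↦ Nat.add_sub_cancel' card_image_le, sum_const, card_univ, smul_eq_mul]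

lemma gFree_image_edge [DecidableEq ι] [DecidableEq V] {T : Finset P}
    (hinj : Function.Injective (edge l)) (hι : 2 ≤ Fintype.card ι) (he : 2 ≤ e)
    (hl : ∀ S : Finset P, #S = e → excess l S ≤ 2 * e - 4) :
    GFree (T.image (edge l)) (e * (Fintype.card ι - 2) + 3) e := by
  intro S hS hSe
  obtain ⟨S, -, rfl⟩ := subset_image_iff.1 hS
  rw [card_image_of_injective S hinj] at hSe
  have hcount := card_biUnion_edge_add_excess (l := l) S
  have hexcess := hl S hSe
  obtain ⟨k, hk⟩ := Nat.exists_eq_add_of_le hι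
  rw [hk, hSe] at hcount
  rw [image_biUnion, hk, Nat.add_sub_cancel_left]
  simp only [id]
  lia

lemma IsSparse.card_le_extremalF (hl : IsSparse l) (hι : 2 ≤ Fintype.card ι)
    (he : e = 3 ∨ e = 4 ∨ e = 5 ∨ e = 7 ∨ e = 8) {T : Finset P} {U : Finset V}
    (hU : ∀ p ∈ T, ∀ i, l i p ∈ U) (hn : Fintype.card ι * #U ≤ n) :
    #T ≤ extremalF (Fintype.card ι) n (e * (Fintype.card ι - 2) + 3) e := by
  classical
  obtain rfl | ⟨p, hp⟩ := T.eq_empty_or_nonempty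
  · simp
  have : Nontrivial ι := Fintype.one_lt_card_iff_nontrivial.1 hι
  have hinj : Function.Injective (edge l) := hl.edge_injective
  have hsub : (T.image (edge l)).biUnion id ⊆ univ ×ˢ U := by
    simp only [subset_iff, mem_biUnion, mem_image, id]
    rintro ⟨i, y⟩ ⟨-, ⟨q, hq, rfl⟩, hy⟩
    simpa [mk_mem_edge.1 hy] using hU q hq i
  have hn0 : n ≠ 0 := by
    have hUpos : 0 < #U := card_pos.2 ⟨_, hU p hp (Classical.arbitrary ι)⟩
    have := Nat.mul_pos (zero_lt_two.trans_le hι) hUpos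
    lia
  rw [← card_image_of_injective T hinj]
  refine (gFree_image_edge hinj hι (by lia) fun S hS ↦ ?_).card_le_extremalF ?_ ?_ hn0
  · exact hS ▸ hl.excess_le (hS ▸ he)
  · simp only [forall_mem_image, card_edge, implies_true]
  · refine (card_le_card hsub).trans ?_
    rwa [card_product, card_univ]

end Encoding

namespace LightRay

variable {κ : Type*} [Fintype κ] {c : ℤ} {M B : ℕ}

/-- Behrend's pigeonhole: some sphere contains many of the velocities in the box. -/
lemma exists_finset_pow_le (κ : Type*) [Fintype κ] (M : ℕ) :
    ∃ (c : ℤ) (T : Finset (LightRay κ c)),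
      (∀ p ∈ T, ∀ k, p.origin k ∈ Ico (0 : ℤ) M ∧ p.velocity k ∈ Ico (0 : ℤ) M) ∧
        M ^ (2 * Fintype.card κ) ≤ #T * (Fintype.card κ * M ^ 2 + 1) := by
  classical
  let box : Finset (κ → ℤ) := Fintype.piFinset fun _ ↦ Ico 0 (M : ℤ)
  have hcard : #box = M ^ Fintype.card κ := by simp [box]
  have hnorm (v) (hv : v ∈ box) : v ⬝ᵥ v ∈ Icc (0 : ℤ) ↑(Fintype.card κ * M ^ 2) := by
    refine mem_Icc.2 ⟨sum_nonneg fun _ _ ↦ mul_self_nonneg _, ?_⟩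
    refine (sum_le_card_nsmul univ _ ((M : ℤ) ^ 2) fun k _ ↦ ?_).trans_eq (by simp)
    obtain ⟨h0, hM⟩ := mem_Ico.1 (Fintype.mem_piFinset.1 hv k)
    nlinarith
  have hvalues : #(Icc (0 : ℤ) ↑(Fintype.card κ * M ^ 2)) = Fintype.card κ * M ^ 2 + 1 := by
    rw [Int.card_Icc, sub_zero, Int.toNat_natCast_add_one]
  obtain ⟨c, -, hc⟩ := exists_max_image (Icc (0 : ℤ) ↑(Fintype.card κ * M ^ 2))
    (fun c ↦ #{v ∈ box | v ⬝ᵥ v = c}) (nonempty_Icc.2 (by positivity))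
  let sphere : Finset (κ → ℤ) := {v ∈ box | v ⬝ᵥ v = c}
  have hsphere : M ^ Fintype.card κ ≤ #sphere * (Fintype.card κ * M ^ 2 + 1) := by
    rw [← hcard, ← hvalues]
    exact card_le_mul_card_image_of_maps_to hnorm #sphere hc
  let ray (s : (κ → ℤ) × sphere) : LightRay κ c := ⟨s.1, s.2, (mem_filter.1 s.2.2).2⟩
  have hray : Function.Injective ray := fun s t h ↦
    Prod.ext (congrArg origin h) (Subtype.ext (congrArg velocity h))
  refine ⟨c, (box ×ˢ univ).map ⟨ray, hray⟩, ?_, ?_⟩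
  · simp only [mem_map, mem_product]
    rintro _ ⟨s, ⟨hs, -⟩, rfl⟩ k
    exact ⟨Fintype.mem_piFinset.1 hs k,
      Fintype.mem_piFinset.1 (mem_filter.1 s.2.2).1 k⟩
  · rw [card_map, card_product, hcard, card_univ, Fintype.card_coe, two_mul, pow_add, mul_assoc]
    gcongr

lemma position_mem_piFinset {p : LightRay κ c}
    (hp : ∀ k, p.origin k ∈ Ico (0 : ℤ) M ∧ p.velocity k ∈ Ico (0 : ℤ) M) {t : ℤ}
    (ht : |t| ≤ B) [DecidableEq κ] :
    p.position t ∈ Fintype.piFinset fun _ ↦ Ico (-(B * M : ℤ)) ((B + 1) * M) := by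
  refine Fintype.mem_piFinset.2 fun k ↦ ?_
  obtain ⟨horigin, hvelocity⟩ := hp k
  rw [mem_Ico] at horigin hvelocity ⊢
  obtain ⟨hlower, hupper⟩ := abs_le.1 ht
  simp only [position, Pi.add_apply, Pi.smul_apply, smul_eq_mul]
  constructor <;> nlinarith

end LightRay

lemma exists_forall_pow_le_extremalF {r e : ℕ} (hr : 2 ≤ r)
    (he : e = 3 ∨ e = 4 ∨ e = 5 ∨ e = 7 ∨ e = 8) (D : ℕ) :
    ∃ C, 0 < C ∧ ∀ M n : ℕ, M ^ D * C ≤ n →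
      M ^ (2 * D) ≤ extremalF r n (e * (r - 2) + 3) e * (D * M ^ 2 + 1) := by
  obtain ⟨b, hb⟩ := exists_isGeneric (ι := Fin r)
  obtain ⟨B, hB⟩ : ∃ B : ℕ, ∀ i, |b i| ≤ B := by
    refine ⟨∑ i, (b i).natAbs, fun i ↦ ?_⟩
    rw [Int.abs_eq_natAbs]
    exact_mod_cast single_le_sum (f := fun i ↦ (b i).natAbs) (fun _ _ ↦ Nat.zero_le _) (mem_univ i)
  refine ⟨r * (2 * B + 1) ^ D, by positivity, fun M n hn ↦ ?_⟩
  obtain ⟨c, T, hT, hcard⟩ := LightRay.exists_finset_pow_le (Fin D) M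
  rw [Fintype.card_fin] at hcard
  refine hcard.trans (Nat.mul_le_mul_right _ ?_)
  have hbox : #(Fintype.piFinset fun _ : Fin D ↦ Ico (-(B * M : ℤ)) ((B + 1) * M)) =
      ((2 * B + 1) * M) ^ D := by
    have hside : (B + 1 : ℤ) * M - -(B * M) = ((2 * B + 1) * M : ℕ) := by
      push_cast
      ring
    rw [Fintype.card_piFinset_const, Int.card_Ico, hside, Int.toNat_natCast]
  have hsparse := isSparse_snapshot (κ := Fin D) (c := c) hb
  simpa only [Fintype.card_fin] using hsparse.card_le_extremalF (n := n) (by simpa using hr) he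
    (fun p hp i ↦ LightRay.position_mem_piFinset (hT p hp) (hB i))
    (by rwa [Fintype.card_fin, hbox, mul_pow, ← mul_assoc, mul_comm])

lemma rpow_two_sub_lt {C D M n t : ℕ} {ε : ℝ} (hε : 0 ≤ ε) (hD : 3 ≤ D * ε)
    (hM : C ^ 2 * (D + 1) < M) (hMn : M ^ D ≤ n) (hn : n ≤ C * M ^ D)
    (ht : M ^ (2 * D) ≤ t * (D * M ^ 2 + 1)) : (n : ℝ) ^ (2 - ε) < t := by
  have hM0 : 0 < M := (Nat.zero_le _).trans_lt hM
  have hn0 : (0 : ℝ) < n := mod_cast (Nat.pow_pos hM0).trans_le hMn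
  have ht0 : 0 < t := Nat.pos_of_mul_pos_right ((Nat.pow_pos hM0).trans_le ht)
  have hnε : (M : ℝ) ^ 3 ≤ (n : ℝ) ^ ε :=
    calc (M : ℝ) ^ 3 = (M : ℝ) ^ (3 : ℝ) := by norm_cast
      _ ≤ (M : ℝ) ^ (D * ε) := Real.rpow_le_rpow_of_exponent_le (mod_cast hM0) hD
      _ = ((M ^ D : ℕ) : ℝ) ^ ε := by rw [Real.rpow_mul (Nat.cast_nonneg _)]; norm_cast
      _ ≤ (n : ℝ) ^ ε := by gcongr
  have hcount : n ^ 2 < t * M ^ 3 :=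
    calc n ^ 2 ≤ (C * M ^ D) ^ 2 := by gcongr
      _ = C ^ 2 * M ^ (2 * D) := by ring
      _ ≤ C ^ 2 * (t * (D * M ^ 2 + 1)) := by gcongr
      _ ≤ C ^ 2 * (t * (D * M ^ 2 + M ^ 2)) := by gcongr; exact Nat.one_le_pow _ _ hM0
      _ = t * (C ^ 2 * (D + 1)) * M ^ 2 := by ring
      _ < t * M * M ^ 2 := by gcongr
      _ = t * M ^ 3 := by ring
  rw [Real.rpow_sub hn0, div_lt_iff₀ (by positivity)]
  calc (n : ℝ) ^ (2 : ℝ) = ((n ^ 2 : ℕ) : ℝ) := by norm_cast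
    _ < ((t * M ^ 3 : ℕ) : ℝ) := by exact_mod_cast hcount
    _ = t * (M : ℝ) ^ 3 := by push_cast; rfl
    _ ≤ t * (n : ℝ) ^ ε := by gcongr

theorem brown_erdos_sos_lower_4578_general (r : ℕ) (hr : 2 ≤ r) (e : ℕ)
    (he : e = 3 ∨ e = 4 ∨ e = 5 ∨ e = 7 ∨ e = 8) (ε : ℝ) (hε : 0 < ε) :
    ∃ N : ℕ, ∀ n : ℕ, N ≤ n →
      (n : ℝ) ^ ((2 : ℝ) - ε) < (extremalF r n (e * (r - 2) + 3) e : ℝ) := by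
  obtain ⟨D, hD⟩ := exists_nat_ge (3 / ε)
  rw [div_le_iff₀ hε] at hD
  have hD0 : D ≠ 0 := by
    rintro rfl
    norm_num at hD
  obtain ⟨C, hC, hcount⟩ := exists_forall_pow_le_extremalF hr he D
  refine ⟨((C * 2 ^ D) ^ 2 * (D + 1) + 1) ^ D * C, fun n hn ↦ ?_⟩
  let M := Nat.nthRoot D (n / C)
  have hM : (C * 2 ^ D) ^ 2 * (D + 1) < M :=
    (Nat.le_nthRoot_iff hD0).2 ((Nat.le_div_iff_mul_le hC).2 hn)
  have hlower : M ^ D * C ≤ n :=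
    (Nat.le_div_iff_mul_le hC).1 ((Nat.le_nthRoot_iff hD0).1 le_rfl)
  have hupper : n ≤ C * 2 ^ D * M ^ D :=
    calc n ≤ (M + 1) ^ D * C :=
          ((Nat.div_lt_iff_lt_mul hC).1 ((Nat.nthRoot_lt_iff hD0).1 M.lt_succ_self)).le
      _ ≤ (2 * M) ^ D * C := by gcongr; lia
      _ = C * 2 ^ D * M ^ D := by ring
  exact rpow_two_sub_lt hε.le hD hM ((Nat.le_mul_of_pos_right _ hC).trans hlower) hupper
    (hcount M n hlower)

theorem brown_erdos_sos_lower_4578 (r : ℕ) (hr : 3 ≤ r) (e : ℕ)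
    (he : e = 4 ∨ e = 5 ∨ e = 7 ∨ e = 8) (ε : ℝ) (hε : 0 < ε) :
    ∃ N : ℕ, ∀ n : ℕ, N ≤ n →
      (n : ℝ) ^ ((2 : ℝ) - ε) < (extremalF r n (e * (r - 2) + 3) e : ℝ) :=
  brown_erdos_sos_lower_4578_general r (by lia) e (.inr he) ε hε
end
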